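/- Let 0 < p < q < ∞ with q ≥ 2, and let α > 1. If f is holomorphic on the unit disk 𝔻 with ∫_𝔻 |f(z)|^p dA_α(z) < ∞, then with r = √(p/q) one has (∫_𝔻 |f(rz)|^q dA_α(z))^{1/q} ≤ (∫_𝔻 |f(z)|^p dA_α(z))^{1/p}. -/

import Mathlib

open MeasureTheory Metric

/-- The weighted Bergman measure `dA_α` on the unit disk:
density `((α-1)/π)(1-|z|²)^(α-2)` with respect to Lebesgue area measure. -/
noncomputable def bergmanMeasure (α : ℝ) : Measure ℂ :=
  (volume.restrict (ball (0 : ℂ) 1)).withDensity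
    (fun z => ENNReal.ofReal ((α - 1) / Real.pi * (1 - ‖z‖ ^ 2) ^ (α - 2)))

local notation "cj" => starRingEnd ℂ

noncomputable def dz (ψ : ℂ → ℂ) (z : ℂ) : ℂ :=
  (fderiv ℝ ψ z 1 - Complex.I * fderiv ℝ ψ z Complex.I) / 2

lemma dz_polar_id (ψ : ℂ → ℂ) (z e : ℂ) :
    e * dz ψ z = (fderiv ℝ ψ z e - Complex.I * fderiv ℝ ψ z (Complex.I * e)) / 2 := by
  have h1 : e = e.re • (1:ℂ) + e.im • Complex.I := by
    simp [Complex.re_add_im]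
  have h2 : Complex.I * e = (-e.im) • (1:ℂ) + e.re • Complex.I := by
    apply Complex.ext <;> simp
  have e1 : fderiv ℝ ψ z e = e.re * fderiv ℝ ψ z 1 + e.im * fderiv ℝ ψ z Complex.I := by
    conv_lhs => rw [h1]
    rw [map_add, map_smul, map_smul, Complex.real_smul, Complex.real_smul]
  have e2 : fderiv ℝ ψ z (Complex.I * e) = (-e.im) * fderiv ℝ ψ z 1 + e.re * fderiv ℝ ψ z Complex.I := by
    rw [h2]
    rw [map_add, map_smul, map_smul, Complex.real_smul, Complex.real_smul]
    push_cast; ring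
  rw [e1, e2]
  unfold dz
  conv_lhs => rw [← Complex.re_add_im e]
  ring_nf
  rw [Complex.I_sq]; ring

lemma dz_continuous {ψ : ℂ → ℂ} (h : ContDiff ℝ 1 ψ) : Continuous (dz ψ) := by
  have := h.continuous_fderiv (by norm_num)
  unfold dz
  fun_prop

lemma lemB {ψ : ℂ → ℂ} (h : ContDiff ℝ 1 ψ) (hc : HasCompactSupport ψ) :
    ∫ z, dz ψ z / (starRingEnd ℂ z) = -Real.pi * ψ 0 := by
  have hD : Continuous (fderiv ℝ ψ) := h.continuous_fderiv (by norm_num)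
  have hcD : HasCompactSupport (fderiv ℝ ψ) := hc.fderiv ℝ
  obtain ⟨R, hR0, hR⟩ : ∃ R : ℝ, 0 < R ∧ ∀ z, R < ‖z‖ → fderiv ℝ ψ z = 0 ∧ ψ z = 0 := by
    obtain ⟨R, hR⟩ := hc.isCompact.isBounded.subset_closedBall (0:ℂ)
    obtain ⟨R', hR'⟩ := hcD.isCompact.isBounded.subset_closedBall (0:ℂ)
    refine ⟨max 1 (max R R'), by positivity, fun z hz => ⟨?_, ?_⟩⟩
    · by_contra hne
      have := hR' (subset_tsupport _ hne)
      simp at this hz; linarith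
    · by_contra hne
      have := hR (subset_tsupport _ hne)
      simp at this hz; linarith
  let E : ℝ → ℂ := fun θ => Complex.exp (θ * Complex.I)
  have hE : Continuous E := by fun_prop
  have hEn : ∀ θ, ‖E θ‖ = 1 := fun θ => Complex.norm_exp_ofReal_mul_I θ
  let h1 : ℝ × ℝ → ℂ := fun p => fderiv ℝ ψ (p.1 * E p.2) (E p.2)
  let h2 : ℝ × ℝ → ℂ := fun p => fderiv ℝ ψ (p.1 * E p.2) (Complex.I * E p.2)
  have c1 : Continuous h1 := by
    apply Continuous.clm_apply
    · exact hD.comp (by fun_prop)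
    · fun_prop
  have c2 : Continuous h2 := by
    apply Continuous.clm_apply
    · exact hD.comp (by fun_prop)
    · fun_prop
  let μ : Measure ℝ := volume.restrict (Set.Ioi 0)
  let ν : Measure ℝ := volume.restrict (Set.Ioo (-Real.pi) Real.pi)
  have hint : ∀ g : ℝ × ℝ → ℂ, Continuous g → (∀ p : ℝ × ℝ, R < p.1 → g p = 0) →
      Integrable g (μ.prod ν) := by
    intro g hg hg0
    rw [Measure.prod_restrict]
    have : IntegrableOn g (Set.Icc 0 R ×ˢ Set.Icc (-Real.pi) Real.pi) (volume.prod volume) :=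
      hg.continuousOn.integrableOn_compact (isCompact_Icc.prod isCompact_Icc)
    refine this.of_forall_sdiff_eq_zero (measurableSet_Ioi.prod measurableSet_Ioo) ?_
    rintro ⟨a, b⟩ ⟨hab, hn⟩
    apply hg0
    simp only [Set.mem_prod, Set.mem_Ioi, Set.mem_Ioo, Set.mem_Icc, not_and_or, not_le] at hab hn ⊢
    rcases hn with h | h
    · rcases h with h | h <;> linarith
    · rcases h with h | h <;> linarith
  have z1 : ∀ p : ℝ × ℝ, R < p.1 → h1 p = 0 := by
    intro p hp
    have : fderiv ℝ ψ (p.1 * E p.2) = 0 := (hR _ (by rw [norm_mul, hEn]; simpa using lt_of_lt_of_le hp (le_abs_self _))).1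
    simp [h1, this]
  have z2 : ∀ p : ℝ × ℝ, R < p.1 → h2 p = 0 := by
    intro p hp
    have : fderiv ℝ ψ (p.1 * E p.2) = 0 := (hR _ (by rw [norm_mul, hEn]; simpa using lt_of_lt_of_le hp (le_abs_self _))).1
    simp [h2, this]
  have i1 := hint h1 c1 z1
  have i2 := hint h2 c2 z2
  rw [← Complex.integral_comp_polarCoord_symm]
  have key : ∫ p in polarCoord.target, p.1 • (dz ψ (Complex.polarCoord.symm p) / (starRingEnd ℂ (Complex.polarCoord.symm p)))
      = ∫ p, (h1 p - Complex.I * h2 p)/2 ∂(μ.prod ν) := by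
    rw [Measure.prod_restrict, polarCoord_target, ← Measure.volume_eq_prod]
    apply setIntegral_congr_fun (measurableSet_Ioi.prod measurableSet_Ioo)
    rintro ⟨r, θ⟩ ⟨hr, hθ⟩
    simp only [Set.mem_Ioi] at hr
    have hs : Complex.polarCoord.symm (r, θ) = r * E θ := by
      simp [Complex.polarCoord_symm_apply, E, Complex.exp_mul_I]
    have hEE : E θ * (starRingEnd ℂ) (E θ) = 1 := by
      rw [Complex.mul_conj, Complex.normSq_eq_norm_sq, hEn]; simp
    have hE0 : starRingEnd ℂ (E θ) ≠ 0 := right_ne_zero_of_mul_eq_one hEE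
    show r • _ = (fderiv ℝ ψ (r * E θ) (E θ) - Complex.I * fderiv ℝ ψ (r * E θ) (Complex.I * E θ)) / 2
    rw [hs, ← dz_polar_id]
    simp only [map_mul, Complex.conj_ofReal, Complex.real_smul]
    have hr' : (r:ℂ) ≠ 0 := by exact_mod_cast hr.ne'
    field_simp
    linear_combination (-dz ψ (r * E θ)) * hEE
  rw [key, integral_div, integral_sub i1 (i2.const_mul _), integral_const_mul]
  have j1 : ∫ p, h1 p ∂(μ.prod ν) = 2 * Real.pi * (- ψ 0) := by
    rw [integral_prod_symm _ i1]
    have : ∀ θ : ℝ, ∫ r, h1 (r, θ) ∂μ = 0 - ψ 0 := by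
      intro θ
      have hder : ∀ r ∈ Set.Ici (0:ℝ), HasDerivAt (fun r : ℝ => ψ (r * E θ)) (h1 (r, θ)) r := by
        intro r _
        have a1 := (h.differentiable (by norm_num) (r * E θ)).hasFDerivAt
        have a2 : HasDerivAt (fun r : ℝ => (r:ℂ) * E θ) (1 * E θ) r :=
          (Complex.ofRealCLM.hasDerivAt).mul_const _
        rw [one_mul] at a2
        exact a1.comp_hasDerivAt r a2
      have h0 : (fun r : ℝ => ψ (r * E θ)) 0 = ψ 0 := by simp
      have hz : ∀ r : ℝ, R < r → ψ (r * E θ) = 0 := fun r hr =>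
        (hR _ (by rw [norm_mul, hEn]; simpa using lt_of_lt_of_le hr (le_abs_self _))).2
      rw [← h0]
      refine integral_Ioi_of_hasDerivAt_of_tendsto' hder ?_ ?_
      · have : IntegrableOn (fun r => h1 (r, θ)) (Set.Icc 0 R) :=
          (c1.comp (by fun_prop : Continuous fun r : ℝ => (r, θ))).continuousOn.integrableOn_compact isCompact_Icc
        refine this.of_forall_sdiff_eq_zero measurableSet_Ioi ?_
        rintro x ⟨hx, hx'⟩
        simp only [Set.mem_Ioi, Set.mem_Icc, not_and_or, not_le] at hx hx'
        apply z1
        rcases hx' with h | h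
        · linarith
        · exact h
      · apply tendsto_const_nhds.congr'
        filter_upwards [Filter.eventually_gt_atTop R] with r hr
        exact (hz r hr).symm
    simp_rw [this]
    simp [ν]
    rw [← two_mul, max_eq_left (by positivity)]; push_cast; simp
  have j2 : ∫ p, h2 p ∂(μ.prod ν) = 0 := by
    rw [integral_prod _ i2]
    rw [← integral_zero (G := ℂ) (μ := μ)]
    apply setIntegral_congr_fun measurableSet_Ioi
    intro r hr
    simp only [Set.mem_Ioi] at hr
    have hder : ∀ θ ∈ Set.uIcc (-Real.pi) Real.pi, HasDerivAt (fun θ : ℝ => (1/r) * ψ (r * E θ)) (h2 (r, θ)) θ := by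
      intro θ _
      have a1 := (h.differentiable (by norm_num) (r * E θ)).hasFDerivAt
      have a3 : HasDerivAt E (E θ * (1 * Complex.I)) θ :=
        ((Complex.ofRealCLM.hasDerivAt).mul_const Complex.I).cexp
      have a2 : HasDerivAt (fun θ : ℝ => (r:ℂ) * E θ) (r * (E θ * (1 * Complex.I))) θ := a3.const_mul _
      have a4 := (a1.comp_hasDerivAt θ a2).const_mul (1/(r:ℂ))
      have hh : h2 (r, θ) = 1 / (r:ℂ) * fderiv ℝ ψ (r * E θ) (r * (E θ * (1 * Complex.I))) := ?_
      · rw [hh]; exact a4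
      show fderiv ℝ ψ (r * E θ) (Complex.I * E θ) = _
      have : (r:ℂ) * (E θ * (1 * Complex.I)) = r • (Complex.I * E θ) := by rw [Complex.real_smul]; ring
      rw [this, map_smul]
      have hr' : (r:ℂ) ≠ 0 := by exact_mod_cast hr.ne'
      simp only [Complex.real_smul]; field_simp
    have := intervalIntegral.integral_eq_sub_of_hasDerivAt hder
      ((c2.comp (by fun_prop : Continuous fun θ : ℝ => (r, θ))).intervalIntegrable _ _)
    show ∫ y, h2 (r, y) ∂ν = 0
    rw [intervalIntegral.integral_of_le (by linarith [Real.pi_pos])] at this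
    simp only [ν]
    rw [← integral_Ioc_eq_integral_Ioo, this]
    have e : E Real.pi = E (-Real.pi) := by
      simp only [E, Complex.ofReal_neg, neg_mul, Complex.exp_neg, Complex.exp_pi_mul_I]; norm_num
    rw [e]; ring
  rw [j1, j2]; ring

lemma dz_mul {f g : ℂ → ℂ} {z : ℂ} (hf : DifferentiableAt ℝ f z) (hg : DifferentiableAt ℝ g z) :
    dz (fun y => f y * g y) z = dz f z * g z + f z * dz g z := by
  unfold dz
  have := fderiv_mul hf hg
  have e : (fun y => f y * g y) = f * g := rfl
  rw [e, this]
  simp only [add_apply, smul_apply, smul_eq_mul]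
  ring

lemma dz_of_hasFDerivAt {f : ℂ → ℂ} {f' : ℂ →L[ℝ] ℂ} {z : ℂ} (hf : HasFDerivAt f f' z) :
    dz f z = (f' 1 - Complex.I * f' Complex.I) / 2 := by
  unfold dz; rw [hf.fderiv]

lemma dz_holo {f : ℂ → ℂ} {f' z : ℂ} (hf : HasDerivAt f f' z) : dz f z = f' := by
  have h := (hf.hasFDerivAt.restrictScalars ℝ)
  rw [dz_of_hasFDerivAt h]
  simp
  linear_combination (-f'/2) * Complex.I_mul_I

lemma conj_hasFDerivAt (z : ℂ) : HasFDerivAt (fun y : ℂ => cj y) (Complex.conjCLE : ℂ →L[ℝ] ℂ) z :=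
  (Complex.conjCLE : ℂ →L[ℝ] ℂ).hasFDerivAt

lemma conj_diff (z : ℂ) : DifferentiableAt ℝ (fun y : ℂ => cj y) z := (conj_hasFDerivAt z).differentiableAt

lemma dz_conj (z : ℂ) : dz (fun y => cj y) z = 0 := by
  rw [dz_of_hasFDerivAt (conj_hasFDerivAt z)]
  simp

lemma dz_comp_holo {f g : ℂ → ℂ} {f' z : ℂ} (hf : HasDerivAt f f' (g z)) (hg : DifferentiableAt ℝ g z) :
    dz (fun y => f (g y)) z = f' * dz g z := by
  have h := (hf.hasFDerivAt.restrictScalars ℝ).comp z hg.hasFDerivAt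
  have h' : HasFDerivAt (fun y => f (g y)) _ z := h
  rw [dz_of_hasFDerivAt h', dz]
  simp
  ring

/-- the weight `1 - |z|^2` as a complex number -/
noncomputable def cw (z : ℂ) : ℂ := 1 - z * cj z

lemma cw_eq (z : ℂ) : cw z = ((1 - ‖z‖ ^ 2 : ℝ) : ℂ) := by
  unfold cw; rw [Complex.mul_conj, Complex.normSq_eq_norm_sq]; push_cast; rfl

lemma one_sub_sq_pos {z : ℂ} (hz : z ∈ ball (0:ℂ) 1) : 0 < 1 - ‖z‖ ^ 2 := by
  simp at hz
  nlinarith [norm_nonneg z]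

lemma cw_ne {z : ℂ} (hz : z ∈ ball (0:ℂ) 1) : cw z ≠ 0 := by
  rw [cw_eq]; exact_mod_cast (one_sub_sq_pos hz).ne'

lemma cw_contDiff : ContDiff ℝ 1 cw := by
  unfold cw
  have : ContDiff ℝ 1 (fun y : ℂ => cj y) := (Complex.conjCLE : ℂ →L[ℝ] ℂ).contDiff
  fun_prop

lemma dz_id (z : ℂ) : dz (fun y => y) z = 1 := dz_holo (hasDerivAt_id z)

lemma dz_cw (z : ℂ) : dz cw z = - cj z := by
  have h1 : HasFDerivAt cw _ z :=
    ((hasFDerivAt_id (𝕜 := ℝ) z).mul (conj_hasFDerivAt z)).const_sub 1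
  rw [dz_of_hasFDerivAt h1]
  simp
  ring_nf; rw [Complex.I_sq]; ring

lemma cwinv_contDiffAt {z : ℂ} (hz : z ∈ ball (0:ℂ) 1) : ContDiffAt ℝ 1 (fun y => (cw y)⁻¹) z :=
  cw_contDiff.contDiffAt.inv (cw_ne hz)

lemma dz_cwinv {z : ℂ} (hz : z ∈ ball (0:ℂ) 1) : dz (fun y => (cw y)⁻¹) z = cj z / cw z ^ 2 := by
  have := dz_comp_holo (f := fun y => y⁻¹) (g := cw) (z := z) (hasDerivAt_inv (cw_ne hz))
    (cw_contDiff.differentiable (by norm_num) z)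
  rw [this, dz_cw]
  have := cw_ne hz
  field_simp

/-- test functions -/
structure TF (U : Set ℂ) (φ : ℂ → ℂ) : Prop where
  cd : ContDiff ℝ 1 φ
  cs : HasCompactSupport φ
  sub : tsupport φ ⊆ U

lemma TF.mul_contDiff {U : Set ℂ} {φ : ℂ → ℂ} (h : TF U φ) {g : ℂ → ℂ}
    (hg : ∀ z ∈ U, ContDiffAt ℝ 1 g z) : TF U (fun z => φ z * g z) := by
  refine ⟨?_, ?_, ?_⟩
  · rw [contDiff_iff_contDiffAt]
    intro z
    by_cases hz : z ∈ tsupport φ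
    · exact h.cd.contDiffAt.mul (hg z (h.sub hz))
    · have : (fun z => φ z * g z) =ᶠ[nhds z] fun _ => 0 := by
        filter_upwards [notMem_tsupport_iff_eventuallyEq.1 hz] with y hy
        simp [hy]
      exact (contDiffAt_const).congr_of_eventuallyEq this
  · exact h.cs.mul_right
  · exact (closure_mono (Function.support_mul_subset_left φ g)).trans h.sub

lemma TF.dz_zero {U : Set ℂ} {φ : ℂ → ℂ} (h : TF U φ) {z : ℂ} (hz : z ∉ tsupport φ) : dz φ z = 0 := by
  have : φ =ᶠ[nhds z] fun _ => 0 := notMem_tsupport_iff_eventuallyEq.1 hz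
  unfold dz
  rw [this.fderiv_eq]; simp

lemma TF.mono {U V : Set ℂ} {φ : ℂ → ℂ} (h : TF U φ) (hUV : U ⊆ V) : TF V φ := ⟨h.cd, h.cs, h.sub.trans hUV⟩

lemma TF.dz_mul {U : Set ℂ} {φ : ℂ → ℂ} (h : TF U φ) {g g' : ℂ → ℂ}
    (hg : ∀ z ∈ U, ContDiffAt ℝ 1 g z) (hg' : ∀ z ∈ U, dz g z = g' z) (z : ℂ) :
    dz (fun z => φ z * g z) z = dz φ z * g z + φ z * g' z := by
  by_cases hz : z ∈ tsupport φ
  · have hU := h.sub hz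
    rw [_root_.dz_mul (h.cd.differentiable (by norm_num) z) ((hg z hU).differentiableAt (by norm_num)), hg' z hU]
  · have h2 := h.mul_contDiff hg
    have : z ∉ tsupport (fun z => φ z * g z) := fun h' => hz
      (closure_mono (Function.support_mul_subset_left φ g) h')
    rw [h2.dz_zero this, h.dz_zero hz, image_eq_zero_of_notMem_tsupport hz]; simp

/-- continuous functions compactly supported in U times functions continuous on U. -/
lemma TF.cont_mul {U : Set ℂ} {φ : ℂ → ℂ} (hc : Continuous φ) (hs : tsupport φ ⊆ U) {g : ℂ → ℂ}
    (hg : ∀ z ∈ U, ContinuousAt g z) : Continuous (fun z => φ z * g z) := by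
  rw [continuous_iff_continuousAt]
  intro z
  by_cases hz : z ∈ tsupport φ
  · exact hc.continuousAt.mul (hg z (hs hz))
  · have : (fun z => φ z * g z) =ᶠ[nhds z] fun _ => 0 := by
      filter_upwards [notMem_tsupport_iff_eventuallyEq.1 hz] with y hy
      simp [hy]
    exact continuousAt_const.congr_of_eventuallyEq this

lemma TF.dz_tsupport {U : Set ℂ} {φ : ℂ → ℂ} (h : TF U φ) : tsupport (dz φ) ⊆ tsupport φ := by
  apply closure_minimal _ (isClosed_tsupport φ)
  intro z hz
  by_contra hn
  exact hz (h.dz_zero hn)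

lemma TF.dz_cs {U : Set ℂ} {φ : ℂ → ℂ} (h : TF U φ) : HasCompactSupport (dz φ) :=
  h.cs.of_isClosed_subset (isClosed_tsupport _) h.dz_tsupport

lemma integral_dz {ψ : ℂ → ℂ} (h : ContDiff ℝ 1 ψ) (hc : HasCompactSupport ψ) : ∫ z, dz ψ z = 0 := by
  have ht : TF Set.univ ψ := ⟨h, hc, Set.subset_univ _⟩
  have hcj : ∀ z ∈ (Set.univ : Set ℂ), ContDiffAt ℝ 1 (fun y : ℂ => cj y) z :=
    fun z _ => (Complex.conjCLE : ℂ →L[ℝ] ℂ).contDiff.contDiffAt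
  have h2 := ht.mul_contDiff hcj
  have := lemB h2.cd h2.cs
  simp only [map_zero, mul_zero] at this
  rw [← this]
  apply integral_congr_ae
  have hne : ∀ᵐ z : ℂ, z ≠ 0 := by simp [ae_iff]
  filter_upwards [hne] with z hz
  rw [ht.dz_mul (g' := fun _ => 0) hcj (fun z _ => dz_conj z)]
  have : cj z ≠ 0 := by simpa using hz
  field_simp; simp

lemma lemB' {ψ : ℂ → ℂ} (h : ContDiff ℝ 1 ψ) (hc : HasCompactSupport ψ) (x : ℂ) :
    ∫ y, dz ψ y / (cj y - cj x) = -Real.pi * ψ x := by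
  have hs : ∀ z, dz (fun z => ψ (z + x)) z = dz ψ (z + x) := by
    intro z; unfold dz; rw [fderiv_comp_add_right]
  have := lemB (ψ := fun z => ψ (z + x)) (by fun_prop) (hc.comp_homeomorph (Homeomorph.addRight x))
  simp only [zero_add] at this
  rw [← this, ← integral_add_right_eq_self _ x]
  simp [hs]

lemma inv_norm_integrableOn (R : ℝ) : IntegrableOn (fun z : ℂ => ‖z‖⁻¹) (ball 0 R) := by
  rcases le_or_gt R 0 with h | h
  · simp [ball_eq_empty.2 h]
  refine integrableOn_ball_of_norm_le_rpow (E := ℂ) (C := 1) (α := 1) (by simp) (by simp) ?_ ?_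
  · filter_upwards with x
    simp [Real.rpow_neg_one]
  · exact (measurable_norm.inv).aestronglyMeasurable

noncomputable def Nk : ℂ → ℝ := Set.indicator (ball 0 2) (fun z : ℂ => ‖z‖⁻¹)

lemma Nk_int : Integrable Nk := (integrable_indicator_iff measurableSet_ball).2 (inv_norm_integrableOn 2)

lemma Nk_nonneg (z : ℂ) : 0 ≤ Nk z := by
  unfold Nk; apply Set.indicator_nonneg; intro z _; positivity

lemma Nk_eq {x y : ℂ} (hx : x ∈ ball (0:ℂ) 1) (hy : y ∈ ball (0:ℂ) 1) : Nk (y - x) = ‖y - x‖⁻¹ := by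
  unfold Nk; rw [Set.indicator_of_mem]
  simp at hx hy ⊢
  linarith [norm_sub_le y x]

lemma I1 {g : ℂ → ℂ} {C : ℝ} (hg : Measurable g) (hb : ∀ y, ‖g y‖ ≤ C)
    (h0 : ∀ y, y ∉ ball (0:ℂ) 1 → g y = 0) {x : ℂ} (hx : x ∈ ball (0:ℂ) 1) :
    Integrable (fun y => g y / (cj y - cj x)) := by
  have hC : 0 ≤ C := (norm_nonneg _).trans (hb 0)
  refine ((Nk_int.comp_sub_right x).const_mul C).mono' ?_ ?_
  · refine Measurable.aestronglyMeasurable ?_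
    have : Measurable (fun y : ℂ => cj y) := Complex.continuous_conj.measurable
    fun_prop
  · filter_upwards with y
    by_cases hy : y ∈ ball (0:ℂ) 1
    · rw [norm_div, ← map_sub, RCLike.norm_conj, Nk_eq hx hy, div_eq_mul_inv]
      gcongr; exact hb y
    · rw [h0 y hy]; simp; exact mul_nonneg hC (Nk_nonneg _)

lemma I2 {G : ℂ × ℂ → ℂ} {C : ℝ} (hg : Measurable G) (hb : ∀ p, ‖G p‖ ≤ C)
    (h0 : ∀ p : ℂ × ℂ, ¬ (p.1 ∈ ball (0:ℂ) 1 ∧ p.2 ∈ ball (0:ℂ) 1) → G p = 0) :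
    Integrable (fun p => G p / (cj p.2 - cj p.1)) (volume.prod volume) := by
  have hC : 0 ≤ C := (norm_nonneg _).trans (hb 0)
  have i1 : Integrable (Set.indicator (ball (0:ℂ) 1) (fun _ => C)) :=
    (integrable_indicator_iff measurableSet_ball).2 (by simp [integrableOn_const_iff])
  have := Integrable.convolution_integrand (ContinuousLinearMap.mul ℝ ℝ) i1 Nk_int
  have := this.swap
  refine this.mono' ?_ ?_
  · refine Measurable.aestronglyMeasurable ?_
    have : Measurable (fun y : ℂ => cj y) := Complex.continuous_conj.measurable
    fun_prop
  · filter_upwards with p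
    simp only [Function.comp, Prod.fst_swap, Prod.snd_swap, ContinuousLinearMap.mul_apply']
    by_cases hy : p.1 ∈ ball (0:ℂ) 1 ∧ p.2 ∈ ball (0:ℂ) 1
    · rw [norm_div, ← map_sub, RCLike.norm_conj, Nk_eq hy.1 hy.2, div_eq_mul_inv, Set.indicator_of_mem hy.1]
      gcongr; exact hb p
    · rw [h0 p hy]; simp
      exact mul_nonneg (Set.indicator_nonneg (fun _ _ => hC) _) (Nk_nonneg _)

lemma TF.zero_off {φ : ℂ → ℂ} (h : TF (ball 0 1) φ) {y : ℂ} (hy : y ∉ ball (0:ℂ) 1) : φ y = 0 ∧ dz φ y = 0 := by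
  have : y ∉ tsupport φ := fun h' => hy (h.sub h')
  exact ⟨image_eq_zero_of_notMem_tsupport this, h.dz_zero this⟩

lemma cwinv_cont : ∀ z ∈ ball (0:ℂ) 1, ContinuousAt (fun y => (cw y)⁻¹) z :=
  fun _ hz => (cwinv_contDiffAt hz).continuousAt

lemma ta_cont {φ : ℂ → ℂ} (h : TF (ball 0 1) φ) : Continuous (fun y => dz φ y * (cw y)⁻¹) :=
  TF.cont_mul (dz_continuous h.cd) (h.dz_tsupport.trans h.sub) cwinv_cont

lemma tb_cont {φ : ℂ → ℂ} (h : TF (ball 0 1) φ) : Continuous (fun y => φ y * ((cw y)⁻¹)^2) :=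
  TF.cont_mul h.cd.continuous h.sub (fun z hz => (cwinv_cont z hz).pow 2)

lemma ta_cs {φ : ℂ → ℂ} (h : TF (ball 0 1) φ) : HasCompactSupport (fun y => dz φ y * (cw y)⁻¹) :=
  h.dz_cs.mul_right

lemma tb_cs {φ : ℂ → ℂ} (h : TF (ball 0 1) φ) : HasCompactSupport (fun y => φ y * ((cw y)⁻¹)^2) :=
  h.cs.mul_right

lemma cs_bdd {g : ℂ → ℂ} (hc : Continuous g) (hs : HasCompactSupport g) : ∃ C, ∀ y, ‖g y‖ ≤ C :=
  hs.exists_bound_of_continuous hc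

lemma dz_sub_const (x : ℂ) (z : ℂ) : dz (fun y => y - x) z = 1 := dz_holo ((hasDerivAt_id z).sub_const x)

lemma inner1 {φ : ℂ → ℂ} (h : TF (ball 0 1) φ) {x : ℂ} (hx : x ∈ ball (0:ℂ) 1) :
    ∫ y, (dz φ y * (cw y)⁻¹) * (y - x) / (cj y - cj x)
      = - ∫ y, (φ y * ((cw y)⁻¹)^2) * (1 - x * cj y) / (cj y - cj x) := by
  have hgc : ∀ z ∈ ball (0:ℂ) 1, ContDiffAt ℝ 1 (fun y => (cw y)⁻¹ * (y - x)) z := by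
    intro z hz
    exact (cwinv_contDiffAt hz).mul (by fun_prop)
  have hd : ∀ z ∈ ball (0:ℂ) 1, dz (fun y => (cw y)⁻¹ * (y - x)) z = cj z / cw z ^ 2 * (z - x) + (cw z)⁻¹ := by
    intro z hz
    rw [dz_mul ((cwinv_contDiffAt hz).differentiableAt (by norm_num)) (by fun_prop), dz_cwinv hz, dz_sub_const, mul_one]
  have hT := h.mul_contDiff hgc
  have key := lemB' hT.cd hT.cs x
  simp only [sub_self, mul_zero] at key
  obtain ⟨C1, hC1⟩ := cs_bdd (g := fun y => (dz φ y * (cw y)⁻¹) * (y - x)) ((ta_cont h).mul (by fun_prop)) (ta_cs h).mul_right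
  have cc : Continuous (fun y : ℂ => cj y) := Complex.continuous_conj
  have hb2 : Continuous (fun y => (φ y * ((cw y)⁻¹)^2) * (1 - x * cj y)) := (tb_cont h).mul (by fun_prop)
  obtain ⟨C2, hC2⟩ := cs_bdd hb2 (tb_cs h).mul_right
  have hb1 : Continuous (fun y => (dz φ y * (cw y)⁻¹) * (y - x)) := (ta_cont h).mul (by fun_prop)
  have i1 := I1 hb1.measurable hC1 (fun y hy => by simp [(h.zero_off hy).2]) hx
  have i2 := I1 hb2.measurable hC2 (fun y hy => by simp [(h.zero_off hy).1]) hx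
  rw [eq_neg_iff_add_eq_zero]
  have := integral_add i1 i2
  rw [← this, ← key]
  congr 1
  ext y
  rw [h.dz_mul hgc hd, ← add_div]
  congr 1
  by_cases hy : y ∈ ball (0:ℂ) 1
  · have := cw_ne hy
    field_simp
    unfold cw; ring
  · simp [(h.zero_off hy).1, (h.zero_off hy).2]

lemma inner2 {φ : ℂ → ℂ} (h : TF (ball 0 1) φ) {y : ℂ} (hy : y ∈ ball (0:ℂ) 1) :
    ∫ x, (dz φ x * (cw x)⁻¹) * (1 - x * cj y) / (cj y - cj x)
      = Real.pi * φ y + ∫ x, (φ x * ((cw x)⁻¹)^2) := by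
  have hgc : ∀ z ∈ ball (0:ℂ) 1, ContDiffAt ℝ 1 (fun x => (cw x)⁻¹ * (1 - x * cj y)) z := by
    intro z hz
    exact (cwinv_contDiffAt hz).mul (by fun_prop)
  have hd : ∀ z ∈ ball (0:ℂ) 1, dz (fun x => (cw x)⁻¹ * (1 - x * cj y)) z =
      cj z / cw z ^ 2 * (1 - z * cj y) + (cw z)⁻¹ * (- cj y) := by
    intro z hz
    have : dz (fun x => 1 - x * cj y) z = - cj y :=
      dz_holo (by simpa using ((hasDerivAt_id z).mul_const (cj y)).const_sub 1)
    rw [dz_mul ((cwinv_contDiffAt hz).differentiableAt (by norm_num)) (by fun_prop), dz_cwinv hz, this]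
  have hT := h.mul_contDiff hgc
  have key := lemB' hT.cd hT.cs y
  have hyy : φ y * ((cw y)⁻¹ * (1 - y * cj y)) = φ y := by
    have h1 : (1 - y * cj y) = cw y := rfl
    rw [h1, inv_mul_cancel₀ (cw_ne hy), mul_one]
  rw [hyy] at key
  have hb1 : Continuous (fun x => (dz φ x * (cw x)⁻¹) * (1 - x * cj y)) := (ta_cont h).mul (by fun_prop)
  obtain ⟨C1, hC1⟩ := cs_bdd hb1 (ta_cs h).mul_right
  have i1 := I1 hb1.measurable hC1 (fun y hy => by simp [(h.zero_off hy).2]) hy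
  have i2 : Integrable (fun x => φ x * ((cw x)⁻¹)^2) := (tb_cont h).integrable_of_hasCompactSupport (tb_cs h)
  have hne : ∀ᵐ z : ℂ, z ≠ y := by simp [ae_iff]
  have e : ∫ x, dz (fun x => φ x * ((cw x)⁻¹ * (1 - x * cj y))) x / (cj x - cj y)
     = ∫ x, ((dz φ x * (cw x)⁻¹) * (1 - x * cj y) / (cj x - cj y) + φ x * ((cw x)⁻¹)^2) := by
    apply integral_congr_ae
    filter_upwards [hne] with x hx
    have hxy : cj x - cj y ≠ 0 := by
      rw [sub_ne_zero]; exact fun h' => hx ((starRingEnd ℂ).injective h')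
    rw [h.dz_mul hgc hd]
    by_cases hx : x ∈ ball (0:ℂ) 1
    · have := cw_ne hx
      field_simp
      unfold cw; ring
    · simp [(h.zero_off hx).1, (h.zero_off hx).2]
  rw [e, integral_add i1 i2] at key
  have e2 : ∫ x, (dz φ x * (cw x)⁻¹) * (1 - x * cj y) / (cj y - cj x) = - ∫ x, (dz φ x * (cw x)⁻¹) * (1 - x * cj y) / (cj x - cj y) := by
    rw [← integral_neg]
    congr 1; ext x
    rw [← neg_sub (cj x) (cj y), div_neg]
  rw [e2]
  linear_combination -key

lemma bilin {φ : ℂ → ℂ} (h : TF (ball 0 1) φ) :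
    ∫ x, (dz φ x * (cw x)⁻¹) * ∫ y, (dz φ y * (cw y)⁻¹) * (y - x) / (cj y - cj x)
      = -(Real.pi * (∫ y, (φ y * ((cw y)⁻¹)^2) * φ y) + (∫ x, (φ x * ((cw x)⁻¹)^2)) ^ 2) := by
  have cc : Continuous (fun y : ℂ => cj y) := Complex.continuous_conj
  have ca := ta_cont h
  have cb := tb_cont h
  have cG : Continuous (fun p : ℂ × ℂ => (dz φ p.1 * (cw p.1)⁻¹) * (φ p.2 * ((cw p.2)⁻¹)^2) * (1 - p.1 * cj p.2)) := by
    have := ca.comp (continuous_fst (X := ℂ) (Y := ℂ))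
    have h2 := cb.comp (continuous_snd (X := ℂ) (Y := ℂ))
    exact (this.mul h2).mul (by fun_prop)
  have h0 : ∀ p : ℂ × ℂ, ¬ (p.1 ∈ ball (0:ℂ) 1 ∧ p.2 ∈ ball (0:ℂ) 1) →
     (dz φ p.1 * (cw p.1)⁻¹) * (φ p.2 * ((cw p.2)⁻¹)^2) * (1 - p.1 * cj p.2) = 0 := by
    intro p hp
    rw [not_and_or] at hp
    rcases hp with hp | hp
    · simp [(h.zero_off hp).2]
    · simp [(h.zero_off hp).1]
  obtain ⟨C, hC⟩ : ∃ C, ∀ p : ℂ × ℂ, ‖(dz φ p.1 * (cw p.1)⁻¹) * (φ p.2 * ((cw p.2)⁻¹)^2) * (1 - p.1 * cj p.2)‖ ≤ C := by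
    obtain ⟨C, hC⟩ := ((isCompact_closedBall (0:ℂ) 1).prod (isCompact_closedBall (0:ℂ) 1)).exists_bound_of_continuousOn cG.continuousOn
    refine ⟨max C 0, fun p => ?_⟩
    by_cases hp : p.1 ∈ ball (0:ℂ) 1 ∧ p.2 ∈ ball (0:ℂ) 1
    · exact (hC p ⟨ball_subset_closedBall hp.1, ball_subset_closedBall hp.2⟩).trans (le_max_left _ _)
    · rw [h0 p hp]; simp
  have iG := I2 cG.measurable hC h0
  have s1 : ∫ x, (dz φ x * (cw x)⁻¹) * ∫ y, (dz φ y * (cw y)⁻¹) * (y - x) / (cj y - cj x)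
     = - ∫ x, ∫ y, (dz φ x * (cw x)⁻¹) * (φ y * ((cw y)⁻¹)^2) * (1 - x * cj y) / (cj y - cj x) := by
    rw [← integral_neg]
    congr 1; ext x
    by_cases hx : x ∈ ball (0:ℂ) 1
    · rw [inner1 h hx, mul_neg, ← integral_const_mul]
      congr 2; ext y; ring
    · simp [(h.zero_off hx).2]
  rw [s1, integral_integral_swap (f := fun x y => (dz φ x * (cw x)⁻¹) * (φ y * ((cw y)⁻¹)^2) * (1 - x * cj y) / (cj y - cj x)) iG]
  congr 1
  have s2 : ∀ y, ∫ x, (dz φ x * (cw x)⁻¹) * (φ y * ((cw y)⁻¹)^2) * (1 - x * cj y) / (cj y - cj x) =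
      (φ y * ((cw y)⁻¹)^2) * (Real.pi * φ y + ∫ x, (φ x * ((cw x)⁻¹)^2)) := by
    intro y
    by_cases hy : y ∈ ball (0:ℂ) 1
    · rw [← inner2 h hy, ← integral_const_mul]
      congr 1; ext x; ring
    · simp [(h.zero_off hy).1]
  simp_rw [s2, mul_add]
  have j1 : Integrable (fun y => (φ y * ((cw y)⁻¹)^2) * (Real.pi * φ y)) :=
    (cb.mul (by have := h.cd.continuous; fun_prop)).integrable_of_hasCompactSupport (tb_cs h).mul_right
  have j2 : Integrable (fun y => φ y * ((cw y)⁻¹)^2) := cb.integrable_of_hasCompactSupport (tb_cs h)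
  rw [integral_add j1 (j2.mul_const _), integral_mul_const (∫ x, (φ x * ((cw x)⁻¹)^2)), sq (∫ x, (φ x * ((cw x)⁻¹)^2))]
  congr 1
  rw [← integral_const_mul]
  apply integral_congr_ae
  filter_upwards with y
  ring

theorem isoper {φ : ℂ → ℝ} (h : TF (ball 0 1) (fun z => (φ z : ℂ))) :
    Real.pi * (∫ z, φ z ^ 2 / (1 - ‖z‖ ^ 2) ^ 2) + (∫ z, φ z / (1 - ‖z‖ ^ 2) ^ 2) ^ 2
      ≤ (∫ z, ‖dz (fun z => (φ z : ℂ)) z‖ / |1 - ‖z‖ ^ 2|) ^ 2 := by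
  have hb := bilin h
  set a : ℂ → ℂ := fun x => dz (fun z => (φ z : ℂ)) x * (cw x)⁻¹ with ha
  have ia : Integrable a := (ta_cont h).integrable_of_hasCompactSupport (ta_cs h)
  have na : ∀ z, ‖a z‖ = ‖dz (fun z => (φ z : ℂ)) z‖ / |1 - ‖z‖ ^ 2| := by
    intro z; simp only [ha, norm_mul, norm_inv, cw_eq, Complex.norm_real, Real.norm_eq_abs, div_eq_mul_inv]
  have e1 : (∫ y, ((φ y : ℂ) * ((cw y)⁻¹)^2) * φ y) = ((∫ z, φ z ^ 2 / (1 - ‖z‖ ^ 2) ^ 2 : ℝ) : ℂ) := by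
    rw [← integral_complex_ofReal]; congr 1; ext z; rw [cw_eq]; push_cast; rw [div_eq_mul_inv, inv_pow]; ring
  have e2 : (∫ y, ((φ y : ℂ) * ((cw y)⁻¹)^2)) = ((∫ z, φ z / (1 - ‖z‖ ^ 2) ^ 2 : ℝ) : ℂ) := by
    rw [← integral_complex_ofReal]; congr 1; ext z; rw [cw_eq]; push_cast; rw [div_eq_mul_inv, inv_pow]
  rw [e1, e2] at hb
  have p1 : 0 ≤ ∫ z, φ z ^ 2 / (1 - ‖z‖ ^ 2) ^ 2 := integral_nonneg (fun z => by positivity)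
  have hn := congrArg norm hb
  rw [norm_neg] at hn
  have e3 : ∀ A B : ℝ, (Real.pi * (A:ℂ) + (B:ℂ)^2) = ((Real.pi * A + B ^ 2 : ℝ) : ℂ) := by intros; push_cast; rfl
  rw [e3, Complex.norm_real, Real.norm_eq_abs, abs_of_nonneg (by positivity)] at hn
  rw [← hn]
  simp_rw [← na]
  refine (norm_integral_le_integral_norm _).trans ?_
  rw [sq, ← integral_mul_const]
  refine integral_mono_of_nonneg (Filter.Eventually.of_forall fun x => by positivity) (ia.norm.mul_const _) (Filter.Eventually.of_forall fun x => ?_)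
  simp only [norm_mul]
  rw [show ‖dz (fun z => (φ z : ℂ)) x‖ * ‖(cw x)⁻¹‖ = ‖a x‖ by simp [ha]]
  gcongr
  refine (norm_integral_le_integral_norm _).trans ?_
  refine integral_mono_of_nonneg (Filter.Eventually.of_forall fun x => by positivity) ia.norm (Filter.Eventually.of_forall fun y => ?_)
  simp only [norm_div, norm_mul]
  rw [show ‖dz (fun z => (φ z : ℂ)) y‖ * ‖(cw y)⁻¹‖ = ‖a y‖ by simp [ha], ← map_sub, RCLike.norm_conj, mul_div_assoc]
  exact mul_le_of_le_one_right (norm_nonneg _) (div_self_le_one _)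

lemma dz_real_comp {η : ℝ → ℝ} {v : ℂ → ℝ} {z : ℂ} {d : ℝ} (hη : HasDerivAt η d (v z))
    (hv : DifferentiableAt ℝ v z) :
    dz (fun y => ((η (v y) : ℝ) : ℂ)) z = d * dz (fun y => (v y : ℂ)) z := by
  have h1 := hη.comp_hasFDerivAt z hv.hasFDerivAt
  have h2 : HasFDerivAt (fun y => ((η (v y) : ℝ) : ℂ)) _ z := (Complex.ofRealCLM.hasFDerivAt).comp z h1
  have h3 : HasFDerivAt (fun y => (v y : ℂ)) _ z := (Complex.ofRealCLM.hasFDerivAt).comp z hv.hasFDerivAt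
  rw [dz_of_hasFDerivAt h2, dz_of_hasFDerivAt h3]
  simp
  ring

lemma conj_holo_hasFDerivAt {G : ℂ → ℂ} {G' z : ℂ} (hG : HasDerivAt G G' z) :
    HasFDerivAt (fun y => cj (G y)) ((Complex.conjCLE : ℂ →L[ℝ] ℂ).comp
      ((ContinuousLinearMap.toSpanSingleton ℂ G').restrictScalars ℝ)) z :=
  (conj_hasFDerivAt (G z)).comp z (hG.hasFDerivAt.restrictScalars ℝ)

lemma dz_conj_holo {G : ℂ → ℂ} {G' z : ℂ} (hG : HasDerivAt G G' z) :
    dz (fun y => cj (G y)) z = 0 := by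
  rw [dz_of_hasFDerivAt (conj_holo_hasFDerivAt hG)]
  simp
  linear_combination (cj G') * Complex.I_mul_I

/-- the function `|F|^p (1-|z|^2)^α`, extended by zero -/
noncomputable def vf (F : ℂ → ℂ) (p α : ℝ) (z : ℂ) : ℝ := ‖F z‖ ^ p * (max 0 (1 - ‖z‖ ^ 2)) ^ α

noncomputable def Af (F : ℂ → ℂ) (p α : ℝ) (z : ℂ) : ℂ := (p / 2) * (deriv F z / F z) - α * (cj z * (cw z)⁻¹)

section
variable {F : ℂ → ℂ} {p α R : ℝ}

lemma vf_zero_off (hα : 0 < α) {z : ℂ} (hz : z ∉ ball (0:ℂ) 1) : vf F p α z = 0 := by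
  unfold vf
  have : 1 ≤ ‖z‖ := by simpa using hz
  rw [max_eq_left (by nlinarith), Real.zero_rpow hα.ne', mul_zero]

lemma vf_nonneg (z : ℂ) : 0 ≤ vf F p α z := by unfold vf; positivity

lemma vf_cont (hR : 1 < R) (hF : DifferentiableOn ℂ F (ball 0 R)) (hp : 0 < p) (hα : 0 < α) :
    Continuous (vf F p α) := by
  rw [continuous_iff_continuousAt]
  intro z
  by_cases hz : z ∈ ball (0:ℂ) R
  · have hFc : ContinuousAt F z := (hF.differentiableAt (isOpen_ball.mem_nhds hz)).continuousAt
    unfold vf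
    refine ContinuousAt.mul (hFc.norm.rpow_const (Or.inr hp.le)) (ContinuousAt.rpow_const ?_ (Or.inr hα.le))
    fun_prop
  · have : vf F p α =ᶠ[nhds z] fun _ => 0 := by
      have : ∀ᶠ y in nhds z, y ∈ (closedBall (0:ℂ) 1)ᶜ := by
        apply isClosed_closedBall.isOpen_compl.mem_nhds
        simp at hz ⊢; linarith
      filter_upwards [this] with y hy
      exact vf_zero_off hα fun h => hy (ball_subset_closedBall h)
    exact continuousAt_const.congr_of_eventuallyEq this

lemma vf_lev {a : ℝ} (ha : 0 < a) (hp : 0 < p) (hα : 0 < α) {z : ℂ} (hz : a ≤ vf F p α z) :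
    z ∈ ball (0:ℂ) 1 ∧ F z ≠ 0 := by
  constructor
  · by_contra h
    rw [vf_zero_off hα h] at hz; linarith
  · intro h
    unfold vf at hz
    rw [h, norm_zero, Real.zero_rpow hp.ne', zero_mul] at hz; linarith

lemma U_open (hR : 1 < R) (hF : DifferentiableOn ℂ F (ball 0 R)) : IsOpen {z | z ∈ ball (0:ℂ) 1 ∧ F z ≠ 0} :=
  (hF.continuousOn.mono (ball_subset_ball hR.le)).isOpen_inter_preimage isOpen_ball isOpen_compl_singleton

lemma F_an (hR : 1 < R) (hF : DifferentiableOn ℂ F (ball 0 R)) {z : ℂ} (hz : z ∈ ball (0:ℂ) 1) : AnalyticAt ℂ F z :=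
  hF.analyticAt (isOpen_ball.mem_nhds (ball_subset_ball hR.le hz))

lemma vf_eq_near (z : ℂ) (hz : z ∈ ball (0:ℂ) 1) :
    vf F p α =ᶠ[nhds z] fun y => (Complex.normSq (F y)) ^ (p/2) * (1 - ‖y‖^2) ^ α := by
  filter_upwards [isOpen_ball.mem_nhds hz] with y hy
  unfold vf
  rw [max_eq_right (one_sub_sq_pos hy).le, Complex.normSq_eq_norm_sq, ← Real.rpow_natCast (‖F y‖), ← Real.rpow_mul (norm_nonneg _)]
  congr 2; push_cast; ring

lemma vf_contDiffAt (hR : 1 < R) (hF : DifferentiableOn ℂ F (ball 0 R)) {z : ℂ} (hz : z ∈ ball (0:ℂ) 1)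
    (hz0 : F z ≠ 0) : ContDiffAt ℝ 1 (vf F p α) z := by
  refine ContDiffAt.congr_of_eventuallyEq ?_ (vf_eq_near z hz)
  have hFc : ContDiffAt ℝ 1 F z := ((F_an hR hF hz).contDiffAt (n := 1)).restrict_scalars ℝ
  have h1 : ContDiffAt ℝ 1 (fun y => Complex.normSq (F y)) z := by
    have e : (fun y => Complex.normSq (F y)) = fun y => ‖F y‖ ^ 2 := by ext y; rw [Complex.normSq_eq_norm_sq]
    rw [e]
    exact hFc.norm_sq ℝ
  have h2 : ContDiffAt ℝ 1 (fun y : ℂ => 1 - ‖y‖^2) z := contDiffAt_const.sub (contDiffAt_id.norm_sq ℝ)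
  exact (h1.rpow_const_of_ne (by simpa using hz0)).mul (h2.rpow_const_of_ne (one_sub_sq_pos hz).ne')

lemma dz_vf (hR : 1 < R) (hF : DifferentiableOn ℂ F (ball 0 R)) {z : ℂ} (hz : z ∈ ball (0:ℂ) 1)
    (hz0 : F z ≠ 0) : dz (fun y => (vf F p α y : ℂ)) z = vf F p α z * Af F p α z := by
  have hFan := F_an hR hF hz
  have hFd : HasDerivAt F (deriv F z) z := hFan.differentiableAt.hasDerivAt
  have hFc : ContDiffAt ℝ 1 F z := (hFan.contDiffAt (n := 1)).restrict_scalars ℝ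
  have h1 : DifferentiableAt ℝ (fun y => Complex.normSq (F y)) z := by
    have e : (fun y => Complex.normSq (F y)) = fun y => ‖F y‖ ^ 2 := by ext y; rw [Complex.normSq_eq_norm_sq]
    rw [e]
    exact (hFc.norm_sq ℝ).differentiableAt (by norm_num)
  have h2 : DifferentiableAt ℝ (fun y : ℂ => 1 - ‖y‖^2) z :=
    ((contDiffAt_const (c := (1:ℝ)) (n := 1)).sub (contDiffAt_id.norm_sq ℝ)).differentiableAt (by norm_num)
  have hn0 : Complex.normSq (F z) ≠ 0 := by simpa using hz0
  have hw0 := one_sub_sq_pos hz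
  have d1 : dz (fun y => ((Complex.normSq (F y) : ℝ) : ℂ)) z = deriv F z * cj (F z) := by
    have e : (fun y => ((Complex.normSq (F y) : ℝ) : ℂ)) = fun y => F y * cj (F y) := by
      ext y; rw [Complex.mul_conj]
    rw [e, dz_mul (hFd.differentiableAt.restrictScalars ℝ) (conj_holo_hasFDerivAt hFd).differentiableAt,
      dz_conj_holo hFd, dz_holo hFd]; ring
  have d2 : dz (fun y : ℂ => ((1 - ‖y‖^2 : ℝ) : ℂ)) z = - cj z := by
    rw [← dz_cw]; congr 1; ext y; rw [cw_eq]
  have d1' := dz_real_comp (η := fun t => t ^ (p/2)) (v := fun y => Complex.normSq (F y)) (z := z)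
    (Real.hasDerivAt_rpow_const (Or.inl hn0)) h1
  have d2' := dz_real_comp (η := fun t => t ^ α) (v := fun y => 1 - ‖y‖^2) (z := z)
    (Real.hasDerivAt_rpow_const (Or.inl hw0.ne')) h2
  have eloc : (fun y => (vf F p α y : ℂ)) =ᶠ[nhds z] fun y => (((Complex.normSq (F y)) ^ (p/2) : ℝ) : ℂ) * (((1 - ‖y‖^2) ^ α : ℝ) : ℂ) := by
    filter_upwards [vf_eq_near (F := F) (p := p) (α := α) z hz] with y hy
    rw [hy]; push_cast; rfl
  have e0 := (vf_eq_near (F := F) (p := p) (α := α) z hz).eq_of_nhds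
  have e1 : dz (fun y => (vf F p α y : ℂ)) z = dz (fun y => (((Complex.normSq (F y)) ^ (p/2) : ℝ) : ℂ) * (((1 - ‖y‖^2) ^ α : ℝ) : ℂ)) z := by
    unfold dz; rw [eloc.fderiv_eq]
  have q1 : DifferentiableAt ℝ (fun y => (((Complex.normSq (F y)) ^ (p/2) : ℝ) : ℂ)) z :=
    Complex.ofRealCLM.differentiableAt.comp z (h1.rpow_const (Or.inl hn0))
  have q2 : DifferentiableAt ℝ (fun y : ℂ => (((1 - ‖y‖^2) ^ α : ℝ) : ℂ)) z :=
    Complex.ofRealCLM.differentiableAt.comp z (h2.rpow_const (Or.inl hw0.ne'))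
  rw [e1, dz_mul q1 q2, d1', d2', d1, d2, e0]
  unfold Af
  rw [Real.rpow_sub_one hn0, Real.rpow_sub_one hw0.ne', cw_eq]
  have hcz : cj (F z) ≠ 0 := by simpa using hz0
  have hw0' : ((1 - ‖z‖^2 : ℝ) : ℂ) ≠ 0 := by exact_mod_cast hw0.ne'
  have hnn : ((Complex.normSq (F z) : ℝ) : ℂ) = F z * cj (F z) := by rw [Complex.mul_conj]
  push_cast at hnn hw0' ⊢
  rw [hnn]
  field_simp
  ring

lemma Af_conj_contDiffAt (hR : 1 < R) (hF : DifferentiableOn ℂ F (ball 0 R)) {z : ℂ} (hz : z ∈ ball (0:ℂ) 1)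
    (hz0 : F z ≠ 0) : ContDiffAt ℝ 1 (fun y => cj (Af F p α y)) z := by
  have hFan := F_an hR hF hz
  have h1 : ContDiffAt ℝ 1 (fun y => deriv F y / F y) z :=
    ((hFan.deriv.div hFan hz0).contDiffAt (n := 1)).restrict_scalars ℝ
  have h2 : ContDiffAt ℝ 1 (fun y : ℂ => cj y) z := (Complex.conjCLE : ℂ →L[ℝ] ℂ).contDiff.contDiffAt
  have h3 : ContDiffAt ℝ 1 (Af F p α) z :=
    (contDiffAt_const.mul h1).sub (contDiffAt_const.mul (h2.mul (cwinv_contDiffAt hz)))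
  exact ((Complex.conjCLE : ℂ →L[ℝ] ℂ).contDiff.contDiffAt).comp z h3

lemma dz_Af_conj (hR : 1 < R) (hF : DifferentiableOn ℂ F (ball 0 R)) {z : ℂ} (hz : z ∈ ball (0:ℂ) 1)
    (hz0 : F z ≠ 0) : dz (fun y => cj (Af F p α y)) z = - α * ((cw z)⁻¹) ^ 2 := by
  have hFan := F_an hR hF hz
  have hG : AnalyticAt ℂ (fun y => (p/2 : ℂ) * (deriv F y / F y)) z :=
    analyticAt_const.mul (hFan.deriv.div hFan hz0)
  have hGd := hG.differentiableAt.hasDerivAt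
  have k1 := conj_holo_hasFDerivAt hGd
  have hcw : ∀ y, cj (cw y) = cw y := by intro y; rw [cw_eq, Complex.conj_ofReal]
  have k3 : DifferentiableAt ℝ (fun y => (cw y)⁻¹) z := (cwinv_contDiffAt hz).differentiableAt (by norm_num)
  have k2 : DifferentiableAt ℝ (fun y => y * (cw y)⁻¹) z := differentiableAt_fun_id.mul k3
  have e : (fun y => cj (Af F p α y)) = fun y => cj ((p/2 : ℂ) * (deriv F y / F y)) + (-α : ℂ) * (y * (cw y)⁻¹) := by
    ext y
    unfold Af
    simp only [map_sub, map_mul, map_inv₀, hcw, Complex.conj_conj, Complex.conj_ofReal]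
    ring
  have s : ∀ (f g : ℂ → ℂ), DifferentiableAt ℝ f z → DifferentiableAt ℝ g z → dz (fun y => f y + g y) z = dz f z + dz g z := by
    intro f g hf hg
    have e : (fun y => f y + g y) = f + g := rfl
    unfold dz; rw [e, fderiv_add hf hg]; simp only [add_apply]; ring
  rw [e, s _ (fun y => (-α : ℂ) * (y * (cw y)⁻¹)) k1.differentiableAt ((differentiableAt_const _).mul k2), dz_conj_holo hGd,
    dz_mul (differentiableAt_const _) k2, dz_mul differentiableAt_fun_id k3, dz_id, dz_cwinv hz,
    dz_holo (hasDerivAt_const _ _)]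
  have := cw_ne hz
  field_simp
  unfold cw; ring
end

theorem part2 {F : ℂ → ℂ} {p α R : ℝ} (hR : 1 < R) (hF : DifferentiableOn ℂ F (ball 0 R)) (hp : 0 < p) (hα : 0 < α)
    {η η' : ℝ → ℝ} (hη : ∀ t, HasDerivAt η (η' t) t) (hc : Continuous η') (hpos : ∀ t, 0 ≤ η' t)
    {a : ℝ} (ha : 0 < a) (h0 : ∀ t ≤ a, η t = 0) (h0' : ∀ t ≤ a, η' t = 0) :
    Real.pi * (∫ z, (η (vf F p α z)) ^ 2 / (1 - ‖z‖ ^ 2) ^ 2) + (∫ z, η (vf F p α z) / (1 - ‖z‖ ^ 2) ^ 2) ^ 2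
      ≤ α * (∫ z, η (vf F p α z) / (1 - ‖z‖ ^ 2) ^ 2) *
        ∫ z, η' (vf F p α z) * vf F p α z / (1 - ‖z‖ ^ 2) ^ 2 := by
  set v := vf F p α with hv
  set A := Af F p α with hA
  set U : Set ℂ := {z | z ∈ ball (0:ℂ) 1 ∧ F z ≠ 0} with hU
  have vc : Continuous v := vf_cont hR hF hp hα
  have hK : IsClosed {z | a ≤ v z} := isClosed_le continuous_const vc
  have hKU : {z | a ≤ v z} ⊆ U := fun z hz => vf_lev ha hp hα hz
  have hKc : IsCompact {z | a ≤ v z} := by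
    refine (isCompact_closedBall (0:ℂ) 1).of_isClosed_subset hK ?_
    exact fun z hz => ball_subset_closedBall (hKU hz).1
  have tsub : ∀ g : ℂ → ℂ, (∀ z, v z ≤ a → g z = 0) → tsupport g ⊆ {z | a ≤ v z} := by
    intro g hg
    apply closure_minimal _ hK
    intro z hz
    by_contra hn
    exact hz (hg z (not_le.1 hn).le)
  have ηC : ContDiff ℝ 1 η := by
    rw [contDiff_one_iff_deriv]
    refine ⟨fun t => (hη t).differentiableAt, ?_⟩
    have : deriv η = η' := by ext t; exact (hη t).deriv
    rw [this]; exact hc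
  have hTS : tsupport (fun z => ((η (v z) : ℝ) : ℂ)) ⊆ {z | a ≤ v z} := tsub _ (fun z hz => by simp [h0 _ hz])
  have hT : TF U (fun z => ((η (v z) : ℝ) : ℂ)) := by
    refine ⟨?_, hKc.of_isClosed_subset (isClosed_tsupport _) hTS, hTS.trans hKU⟩
    rw [contDiff_iff_contDiffAt]
    intro z
    by_cases hz : z ∈ tsupport (fun z => ((η (v z) : ℝ) : ℂ))
    · have := hKU (hTS hz)
      have h1 := vf_contDiffAt (p := p) (α := α) hR hF this.1 this.2
      exact Complex.ofRealCLM.contDiff.contDiffAt.comp z (ηC.contDiffAt.comp z h1)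
    · exact (contDiffAt_const (c := (0:ℂ))).congr_of_eventuallyEq (notMem_tsupport_iff_eventuallyEq.1 hz)
  have hTb := hT.mono (V := ball 0 1) (fun z hz => hz.1)
  have hdz : ∀ z, dz (fun z => ((η (v z) : ℝ) : ℂ)) z = ((η' (v z) * v z : ℝ) : ℂ) * A z := by
    intro z
    by_cases hz : z ∈ U
    · rw [dz_real_comp (hη (v z)) ((vf_contDiffAt hR hF hz.1 hz.2).differentiableAt (by norm_num)), dz_vf hR hF hz.1 hz.2]
      push_cast; ring
    · have h1 : v z ≤ a := by
        by_contra h; exact hz (hKU (not_le.1 h).le)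
      rw [h0' _ h1, hT.dz_zero (fun h => hz (hT.sub h))]; simp
  set g : ℂ → ℝ := fun z => η' (v z) * v z with hg
  have gnn : ∀ z, 0 ≤ g z := fun z => mul_nonneg (hpos _) (vf_nonneg z)
  have gc : Continuous g := by fun_prop
  have gTS : tsupport (fun z => (g z : ℂ)) ⊆ {z | a ≤ v z} := tsub _ (fun z hz => by simp [hg, h0' _ hz])
  have gcs : HasCompactSupport (fun z => (g z : ℂ)) := hKc.of_isClosed_subset (isClosed_tsupport _) gTS
  have gcC : Continuous (fun z => (g z : ℂ)) := by fun_prop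
  have Acj : ∀ z ∈ U, ContDiffAt ℝ 1 (fun y => cj (A y)) z := fun z hz => Af_conj_contDiffAt hR hF hz.1 hz.2
  have Acjc : ∀ z ∈ U, ContinuousAt (fun y => cj (A y)) z := fun z hz => (Acj z hz).continuousAt
  have Anc : ∀ z ∈ U, ContinuousAt (fun y => ((‖A y‖ : ℝ) : ℂ)) z := by
    intro z hz
    have e : (fun y => ((‖A y‖ : ℝ) : ℂ)) = fun y => ((‖cj (A y)‖ : ℝ) : ℂ) := by ext y; rw [RCLike.norm_conj]
    rw [e]
    exact Complex.continuous_ofReal.continuousAt.comp (Acjc z hz).norm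
  have wc : ∀ z ∈ U, ContinuousAt (fun y => (cw y)⁻¹) z := fun z hz => cwinv_cont z hz.1
  have intg : ∀ q : ℂ → ℂ, (∀ z ∈ U, ContinuousAt q z) → Integrable (fun z => (g z : ℂ) * q z) := fun q hq =>
    (TF.cont_mul gcC (gTS.trans hKU) hq).integrable_of_hasCompactSupport gcs.mul_right
  -- integration by parts
  have ibp : ∫ z, g z * ‖A z‖ ^ 2 = α * ∫ z, η (v z) / (1 - ‖z‖ ^ 2) ^ 2 := by
    have hT2 := hT.mul_contDiff Acj
    have k := integral_dz hT2.cd hT2.cs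
    have e : ∀ z, dz (fun z => ((η (v z) : ℝ) : ℂ) * cj (A z)) z
        = (g z : ℂ) * ((‖A z‖ : ℝ) : ℂ) ^ 2 + (-α) * (((η (v z) : ℝ) : ℂ) * ((cw z)⁻¹) ^ 2) := by
      intro z
      rw [hT.dz_mul Acj (g' := fun z => - α * ((cw z)⁻¹) ^ 2) (fun z hz => dz_Af_conj hR hF hz.1 hz.2), hdz]
      have : A z * cj (A z) = ((‖A z‖ : ℝ) : ℂ) ^ 2 := by
        rw [Complex.mul_conj, Complex.normSq_eq_norm_sq]; push_cast; rfl
      rw [← this]; ring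
    simp_rw [e] at k
    rw [integral_add (intg (fun y => ((‖A y‖ : ℝ) : ℂ)^2) (fun z hz => (Anc z hz).pow 2))
      (((tb_cont hTb).integrable_of_hasCompactSupport (tb_cs hTb)).const_mul _), integral_const_mul] at k
    have e1 : ∫ z, (g z : ℂ) * ((‖A z‖ : ℝ) : ℂ) ^ 2 = ((∫ z, g z * ‖A z‖ ^ 2 : ℝ) : ℂ) := by
      rw [← integral_complex_ofReal]; congr 1; ext z; push_cast; rfl
    have e2 : ∫ z, ((η (v z) : ℝ) : ℂ) * ((cw z)⁻¹) ^ 2 = ((∫ z, η (v z) / (1 - ‖z‖ ^ 2) ^ 2 : ℝ) : ℂ) := by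
      rw [← integral_complex_ofReal]; congr 1; ext z; rw [cw_eq]; push_cast; rw [div_eq_mul_inv, inv_pow]
    rw [e1, e2] at k
    have k' : ((∫ z, g z * ‖A z‖ ^ 2) + (-α) * (∫ z, η (v z) / (1 - ‖z‖ ^ 2) ^ 2) : ℝ) = 0 := by
      exact_mod_cast k
    linarith
  have iso := isoper hTb
  have x1 : ∫ z, ‖dz (fun z => ((η (v z) : ℝ) : ℂ)) z‖ / |1 - ‖z‖ ^ 2| = ∫ z, g z * ‖A z‖ * (1 - ‖z‖ ^ 2)⁻¹ := by
    congr 1; ext z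
    rw [hdz, norm_mul, Complex.norm_real, Real.norm_of_nonneg (gnn z)]
    by_cases hz : z ∈ U
    · rw [abs_of_pos (one_sub_sq_pos hz.1), div_eq_mul_inv]
    · have h1 : v z ≤ a := by
        by_contra h; exact hz (hKU (not_le.1 h).le)
      simp [hg, h0' _ h1]
  have r1 : Integrable (fun z => g z * ‖A z‖ ^ 2) := by
    have := (intg (fun y => ((‖A y‖ : ℝ) : ℂ)^2) (fun z hz => (Anc z hz).pow 2)).re
    refine this.congr (Filter.Eventually.of_forall fun z => ?_)
    simp only [RCLike.re_to_complex]; norm_cast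
  have r2 : Integrable (fun z => g z * ‖A z‖ * (1 - ‖z‖ ^ 2)⁻¹) := by
    have := (intg (fun y => ((‖A y‖ : ℝ) : ℂ) * (cw y)⁻¹) (fun z hz => (Anc z hz).mul (wc z hz))).re
    refine this.congr (Filter.Eventually.of_forall fun z => ?_)
    simp only [RCLike.re_to_complex, cw_eq]; norm_cast; ring
  have r3 : Integrable (fun z => g z * ((1 - ‖z‖ ^ 2)⁻¹)^2) := by
    have := (intg (fun y => ((cw y)⁻¹)^2) (fun z hz => (wc z hz).pow 2)).re
    refine this.congr (Filter.Eventually.of_forall fun z => ?_)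
    simp only [RCLike.re_to_complex, cw_eq]; norm_cast
  have cs : (∫ z, g z * ‖A z‖ * (1 - ‖z‖ ^ 2)⁻¹) ^ 2 ≤ (∫ z, g z * ‖A z‖ ^ 2) * ∫ z, g z * ((1 - ‖z‖ ^ 2)⁻¹)^2 := by
    have hq : ∀ s : ℝ, 0 ≤ (∫ z, g z * ‖A z‖ ^ 2) * (s * s) + (-2 * ∫ z, g z * ‖A z‖ * (1 - ‖z‖ ^ 2)⁻¹) * s
        + ∫ z, g z * ((1 - ‖z‖ ^ 2)⁻¹)^2 := by
      intro s
      have : 0 ≤ ∫ z, g z * (s * ‖A z‖ - (1 - ‖z‖ ^ 2)⁻¹) ^ 2 := integral_nonneg fun z => mul_nonneg (gnn z) (sq_nonneg _)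
      have e : (fun z => g z * (s * ‖A z‖ - (1 - ‖z‖ ^ 2)⁻¹) ^ 2) = fun z =>
          (g z * ‖A z‖ ^ 2) * (s * s) + ((g z * ‖A z‖ * (1 - ‖z‖ ^ 2)⁻¹) * (-2 * s) + g z * ((1 - ‖z‖ ^ 2)⁻¹)^2) := by
        ext z; ring
      have r23 : Integrable (fun z => (g z * ‖A z‖ * (1 - ‖z‖ ^ 2)⁻¹) * (-2 * s) + g z * ((1 - ‖z‖ ^ 2)⁻¹)^2) :=
        (r2.mul_const _).add r3
      rw [e, integral_add (r1.mul_const _) r23, integral_add (r2.mul_const _) r3,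
        integral_mul_const, integral_mul_const] at this
      linarith
    have := discrim_le_zero hq
    unfold discrim at this
    nlinarith
  rw [x1] at iso
  have e3 : ∫ z, g z / (1 - ‖z‖ ^ 2) ^ 2 = ∫ z, g z * ((1 - ‖z‖ ^ 2)⁻¹)^2 := by
    congr 1; ext z; rw [div_eq_mul_inv, inv_pow]
  rw [e3, ← ibp]
  exact iso.trans cs

noncomputable def hm : Measure ℂ :=
  (volume.restrict (ball (0 : ℂ) 1)).withDensity
    (fun z => ENNReal.ofReal (1 / (Real.pi * (1 - ‖z‖ ^ 2) ^ 2)))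

lemma hm_dens_meas : Measurable (fun z : ℂ => ENNReal.ofReal (1 / (Real.pi * (1 - ‖z‖ ^ 2) ^ 2))) := by
  fun_prop

lemma hm_integral {h : ℂ → ℝ} (h0 : ∀ z, z ∉ ball (0:ℂ) 1 → h z = 0) :
    ∫ z, h z ∂hm = (1 / Real.pi) * ∫ z, h z / (1 - ‖z‖ ^ 2) ^ 2 := by
  unfold hm
  rw [integral_withDensity_eq_integral_toReal_smul hm_dens_meas (by simp), ← integral_const_mul]
  rw [setIntegral_eq_integral_of_forall_compl_eq_zero]
  · congr 1; ext z
    rw [ENNReal.toReal_ofReal (by positivity)]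
    simp only [smul_eq_mul]
    rw [div_mul_eq_div_div]; ring
  · intro z hz; rw [h0 z hz]; simp

lemma hm_compact {K : Set ℂ} (hK : IsCompact K) (hs : K ⊆ ball 0 1) : hm K < ⊤ := by
  unfold hm
  rw [withDensity_apply _ hK.measurableSet]
  have hc : ContinuousOn (fun z : ℂ => 1 / (Real.pi * (1 - ‖z‖ ^ 2) ^ 2)) K := by
    apply ContinuousOn.div (by fun_prop) (by fun_prop)
    intro z hz
    have := one_sub_sq_pos (hs hz)
    positivity
  obtain ⟨C, hC⟩ := hK.exists_bound_of_continuousOn hc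
  rw [Measure.restrict_restrict hK.measurableSet]
  calc ∫⁻ z in K ∩ ball 0 1, ENNReal.ofReal (1 / (Real.pi * (1 - ‖z‖ ^ 2) ^ 2))
      ≤ ∫⁻ z in K ∩ ball 0 1, ENNReal.ofReal C := by
        apply setLIntegral_mono measurable_const
        intro z hz
        exact ENNReal.ofReal_le_ofReal ((le_abs_self _).trans (hC z hz.1))
    _ < ⊤ := by
        rw [setLIntegral_const]
        exact ENNReal.mul_lt_top ENNReal.ofReal_lt_top (lt_of_le_of_lt (measure_mono Set.inter_subset_left) hK.measure_lt_top)

section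
variable {F : ℂ → ℂ} {p α R : ℝ}

lemma vf_lev_compact (hR : 1 < R) (hF : DifferentiableOn ℂ F (ball 0 R)) (hp : 0 < p) (hα : 0 < α) {a : ℝ} (ha : 0 < a) :
    IsCompact {z | a ≤ vf F p α z} := by
  refine (isCompact_closedBall (0:ℂ) 1).of_isClosed_subset (isClosed_le continuous_const (vf_cont hR hF hp hα)) ?_
  exact fun z hz => ball_subset_closedBall (vf_lev ha hp hα hz).1

lemma vf_lev_fin (hR : 1 < R) (hF : DifferentiableOn ℂ F (ball 0 R)) (hp : 0 < p) (hα : 0 < α) {a : ℝ} (ha : 0 < a) :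
    hm {z | a < vf F p α z} < ⊤ :=
  lt_of_le_of_lt (measure_mono (fun z (hz : a < _) => hz.le)) (hm_compact (vf_lev_compact hR hF hp hα ha) (fun z hz => (vf_lev ha hp hα hz).1))

theorem step (hR : 1 < R) (hF : DifferentiableOn ℂ F (ball 0 R)) (hp : 0 < p) (hα : 0 < α) {a b : ℝ} (ha : 0 < a) (hab : a < b) :
    (b - a) * hm.real {z | b < vf F p α z} * (1 + hm.real {z | a < vf F p α z}) ≤
      α * b * hm.real {z | a < vf F p α z} * (hm.real {z | a < vf F p α z} - hm.real {z | b < vf F p α z}) := by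
  set v := vf F p α with hv
  set A : Set ℂ := {z | a < v z} with hA
  set B : Set ℂ := {z | b < v z} with hB
  have vc : Continuous v := vf_cont hR hF hp hα
  have mA : MeasurableSet A := measurableSet_lt measurable_const vc.measurable
  have mB : MeasurableSet B := measurableSet_lt measurable_const vc.measurable
  have BA : B ⊆ A := fun z (hz : b < v z) => hab.trans hz
  have fA : hm A < ⊤ := vf_lev_fin hR hF hp hα ha
  have fB : hm B < ⊤ := vf_lev_fin hR hF hp hα (ha.trans hab)
  have hBA : hm.real B ≤ hm.real A := measureReal_mono BA fA.ne
  have key : ∀ δ > 0, (b - a - 2 * δ) * hm.real B * (1 + hm.real A) ≤ α * b * hm.real A * (hm.real A - hm.real B) := by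
    intro δ hδ
    have rhs0 : 0 ≤ α * b * hm.real A * (hm.real A - hm.real B) := by
      have : 0 < b := ha.trans hab
      have : 0 ≤ hm.real A - hm.real B := sub_nonneg.2 hBA
      positivity
    rcases le_or_gt (b - a - 2 * δ) 0 with hneg | hbig
    · refine le_trans ?_ rhs0
      exact mul_nonpos_of_nonpos_of_nonneg (mul_nonpos_of_nonpos_of_nonneg hneg measureReal_nonneg) (by positivity)
    let τ : ℝ → ℝ := fun t => max 0 (min 1 (min ((t - a) / δ) ((b - t) / δ)))
    have τc : Continuous τ := by fun_prop
    have τ0 : ∀ t, 0 ≤ τ t := fun t => le_max_left _ _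
    have τ1 : ∀ t, τ t ≤ 1 := fun t => max_le zero_le_one (min_le_left _ _)
    have τa : ∀ t ≤ a, τ t = 0 := by
      intro t ht
      apply max_eq_left
      exact (min_le_right _ _).trans ((min_le_left _ _).trans (div_nonpos_of_nonpos_of_nonneg (by linarith) hδ.le))
    have τb : ∀ t, b ≤ t → τ t = 0 := by
      intro t ht
      apply max_eq_left
      exact (min_le_right _ _).trans ((min_le_right _ _).trans (div_nonpos_of_nonpos_of_nonneg (by linarith) hδ.le))
    have τm : ∀ t, a + δ ≤ t → t ≤ b - δ → τ t = 1 := by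
      intro t h1 h2
      have e1 : 1 ≤ (t - a) / δ := by rw [le_div_iff₀ hδ]; linarith
      have e2 : 1 ≤ (b - t) / δ := by rw [le_div_iff₀ hδ]; linarith
      have : min 1 (min ((t - a) / δ) ((b - t) / δ)) = 1 := min_eq_left (le_min e1 e2)
      simp only [τ, this]; norm_num
    let η : ℝ → ℝ := fun t => ∫ s in a..t, τ s
    have ηd : ∀ t, HasDerivAt η (τ t) t := fun t =>
      intervalIntegral.integral_hasDerivAt_right (τc.intervalIntegrable _ _) (τc.stronglyMeasurableAtFilter _ _) τc.continuousAt
    have ηmono : Monotone η := monotone_of_hasDerivAt_nonneg ηd τ0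
    have ηa : ∀ t ≤ a, η t = 0 := by
      intro t ht
      have : ∫ s in a..t, τ s = ∫ s in a..t, (0:ℝ) := by
        apply intervalIntegral.integral_congr
        intro s hs
        rw [Set.uIcc_of_ge ht] at hs
        exact τa s hs.2
      simp only [η, this]; simp
    have ηb : ∀ t, b ≤ t → η t = η b := by
      intro t ht
      have h1 : η t = η b + ∫ s in b..t, τ s :=
        (intervalIntegral.integral_add_adjacent_intervals (τc.intervalIntegrable _ _) (τc.intervalIntegrable _ _)).symm
      have : ∫ s in b..t, τ s = ∫ s in b..t, (0:ℝ) := by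
        apply intervalIntegral.integral_congr
        intro s hs
        rw [Set.uIcc_of_le ht] at hs
        exact τb s hs.1
      rw [h1, this]; simp
    have ηG : b - a - 2 * δ ≤ η b := by
      have h1 : η b = η (a+δ) + (∫ s in (a+δ)..(b-δ), τ s) + ∫ s in (b-δ)..b, τ s := by
        rw [intervalIntegral.integral_add_adjacent_intervals (τc.intervalIntegrable _ _) (τc.intervalIntegrable _ _),
          intervalIntegral.integral_add_adjacent_intervals (τc.intervalIntegrable _ _) (τc.intervalIntegrable _ _)]
      have h2 : ∫ s in (a+δ)..(b-δ), τ s = ∫ s in (a+δ)..(b-δ), (1:ℝ) := by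
        apply intervalIntegral.integral_congr
        intro s hs
        rw [Set.uIcc_of_le (by linarith)] at hs
        exact τm s hs.1 hs.2
      have h3 : 0 ≤ ∫ s in (b-δ)..b, τ s := intervalIntegral.integral_nonneg (by linarith) (fun s _ => τ0 s)
      have h4 : 0 ≤ η (a + δ) := (ηa a le_rfl).symm.le.trans (ηmono (by linarith))
      rw [h1, h2]; simp; linarith
    have ηnn : ∀ t, 0 ≤ η t := by
      intro t
      rcases le_total t a with h | h
      · rw [ηa t h]
      · exact (ηa a le_rfl).symm.le.trans (ηmono h)
    have ηle : ∀ t, η t ≤ η b := by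
      intro t
      rcases le_total t b with h | h
      · exact ηmono h
      · rw [ηb t h]
    have ηc : Continuous η := continuous_iff_continuousAt.2 fun t => (ηd t).continuousAt
    have P := part2 hR hF hp hα ηd τc τ0 ha ηa τa
    have voff : ∀ z, z ∉ ball (0:ℂ) 1 → v z = 0 := fun z hz => vf_zero_off hα hz
    have e1 := hm_integral (h := fun z => η (v z) ^ 2) (fun z hz => by simp [voff z hz, ηa 0 ha.le])
    have e2 := hm_integral (h := fun z => η (v z)) (fun z hz => by simp [voff z hz, ηa 0 ha.le])
    have e3 := hm_integral (h := fun z => τ (v z) * v z) (fun z hz => by simp [voff z hz])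
    have intf : ∀ h : ℂ → ℝ, Continuous h → (∀ z, z ∉ A → h z = 0) → (∃ C, ∀ z, |h z| ≤ C) → Integrable h hm := by
      intro h hc h0 ⟨C, hC⟩
      have : IntegrableOn h A hm := Measure.integrableOn_of_bounded fA.ne hc.aestronglyMeasurable (M := C) (Filter.Eventually.of_forall hC)
      rw [← integrable_indicator_iff mA] at this
      have e : h = A.indicator h := by
        ext z
        by_cases hz : z ∈ A
        · rw [Set.indicator_of_mem hz]
        · rw [Set.indicator_of_notMem hz, h0 z hz]
      rw [e]; exact this
    have b0 : 0 < b := ha.trans hab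
    have i2 : Integrable (fun z => η (v z)) hm := intf _ (ηc.comp vc) (fun z hz => ηa _ (not_lt.1 hz))
      ⟨η b, fun z => by rw [abs_of_nonneg (ηnn _)]; exact ηle _⟩
    have i1 : Integrable (fun z => η (v z) ^ 2) hm := intf _ ((ηc.comp vc).pow 2) (fun z hz => by simp [ηa _ (not_lt.1 hz)])
      ⟨η b ^ 2, fun z => by rw [abs_of_nonneg (sq_nonneg _)]; have := ηnn (v z); gcongr; exact ηle _⟩
    have tb : ∀ z, τ (v z) * v z ≤ (A.indicator (fun _ => b) z - B.indicator (fun _ => b) z) := by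
      intro z
      by_cases hzA : z ∈ A
      · rw [Set.indicator_of_mem hzA]
        by_cases hzB : z ∈ B
        · rw [Set.indicator_of_mem hzB, τb _ (le_of_lt hzB)]; simp
        · rw [Set.indicator_of_notMem hzB]
          have h1 : v z ≤ b := not_lt.1 hzB
          have := τ1 (v z)
          have h2 : 0 ≤ v z := vf_nonneg z
          nlinarith
      · rw [Set.indicator_of_notMem hzA, Set.indicator_of_notMem (fun h => hzA (BA h)), τa _ (not_lt.1 hzA)]; simp
    have iAB : Integrable (fun z => A.indicator (fun _ => b) z - B.indicator (fun _ => b) z) hm :=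
      ((integrable_indicator_iff mA).2 (integrableOn_const fA.ne)).sub ((integrable_indicator_iff mB).2 (integrableOn_const fB.ne))
    have j3 : ∫ z, τ (v z) * v z ∂hm ≤ b * (hm.real A - hm.real B) := by
      calc ∫ z, τ (v z) * v z ∂hm ≤ ∫ z, (A.indicator (fun _ => b) z - B.indicator (fun _ => b) z) ∂hm := by
            refine integral_mono_of_nonneg (Filter.Eventually.of_forall fun z => mul_nonneg (τ0 _) (vf_nonneg z)) iAB (Filter.Eventually.of_forall tb)
        _ = _ := by
            rw [integral_sub ((integrable_indicator_iff mA).2 (integrableOn_const fA.ne)) ((integrable_indicator_iff mB).2 (integrableOn_const fB.ne)),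
              integral_indicator mA, integral_indicator mB, setIntegral_const, setIntegral_const]
            simp only [smul_eq_mul]; ring
    set S := ∫ z, η (v z) ∂hm with hS
    have S0 : 0 ≤ S := integral_nonneg fun z => ηnn _
    have j1 : S ^ 2 ≤ (∫ z, η (v z) ^ 2 ∂hm) * hm.real A := by
      have hq : ∀ s : ℝ, 0 ≤ hm.real A * (s * s) + (-2 * S) * s + ∫ z, η (v z) ^ 2 ∂hm := by
        intro s
        have : 0 ≤ ∫ z, (η (v z) - A.indicator (fun _ => s) z) ^ 2 ∂hm := integral_nonneg fun z => sq_nonneg _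
        have e : (fun z => (η (v z) - A.indicator (fun _ => s) z) ^ 2) = fun z => (A.indicator (fun _ => s * s) z + (η (v z) * (-2 * s))) + η (v z) ^ 2 := by
          ext z
          by_cases hzA : z ∈ A
          · rw [Set.indicator_of_mem hzA, Set.indicator_of_mem hzA]; ring
          · rw [Set.indicator_of_notMem hzA, Set.indicator_of_notMem hzA, ηa _ (not_lt.1 hzA)]; ring
        have iA : Integrable (A.indicator (fun _ => s * s)) hm := (integrable_indicator_iff mA).2 (integrableOn_const fA.ne)
        have i12 : Integrable (fun z => A.indicator (fun _ => s * s) z + (η (v z) * (-2 * s))) hm := iA.add (i2.mul_const _)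
        rw [e, integral_add i12 i1, integral_add iA (i2.mul_const _), integral_mul_const, integral_indicator mA, setIntegral_const] at this
        simp only [smul_eq_mul] at this
        linarith
      have := discrim_le_zero hq
      unfold discrim at this
      nlinarith
    have j2 : (b - a - 2 * δ) * hm.real B ≤ S := by
      calc (b - a - 2 * δ) * hm.real B = ∫ z, B.indicator (fun _ => b - a - 2 * δ) z ∂hm := by
            rw [integral_indicator mB, setIntegral_const, smul_eq_mul, mul_comm]
        _ ≤ S := by
            apply integral_mono ((integrable_indicator_iff mB).2 (integrableOn_const fB.ne)) i2
            intro z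
            by_cases hzB : z ∈ B
            · rw [Set.indicator_of_mem hzB]; simp only; rw [ηb _ (le_of_lt hzB)]; exact ηG
            · rw [Set.indicator_of_notMem hzB]; exact ηnn _
    have pp := Real.pi_pos
    set Q := ∫ z, η (v z) ^ 2 ∂hm with hQ
    set Tt := ∫ z, τ (v z) * v z ∂hm with hTt
    have main : Q + S ^ 2 ≤ α * S * Tt := by
      have e1' : ∫ z, η (v z) ^ 2 / (1 - ‖z‖ ^ 2) ^ 2 = Real.pi * Q := by rw [e1]; field_simp
      have e2' : ∫ z, η (v z) / (1 - ‖z‖ ^ 2) ^ 2 = Real.pi * S := by rw [e2]; field_simp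
      have e3' : ∫ z, τ (v z) * v z / (1 - ‖z‖ ^ 2) ^ 2 = Real.pi * Tt := by rw [e3]; field_simp
      rw [e1', e2', e3'] at P
      have : Real.pi ^ 2 * (Q + S ^ 2) ≤ Real.pi ^ 2 * (α * S * Tt) := by linarith
      exact le_of_mul_le_mul_left this (by positivity)
    set mA' := hm.real A
    set mB' := hm.real B
    have mA0 : 0 ≤ mA' := measureReal_nonneg
    have mB0 : 0 ≤ mB' := measureReal_nonneg
    rcases S0.eq_or_lt with hS0 | hSpos
    · have : (b - a - 2 * δ) * mB' = 0 := le_antisymm (by rw [hS0]; exact j2) (by positivity)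
      rw [this, zero_mul]; exact rhs0
    · have h1 : S * (1 + mA') ≤ α * Tt * mA' := by
        have : S * (S * (1 + mA')) ≤ S * (α * Tt * mA') := by nlinarith
        exact le_of_mul_le_mul_left this hSpos
      calc (b - a - 2 * δ) * mB' * (1 + mA') ≤ S * (1 + mA') := by gcongr
        _ ≤ α * Tt * mA' := h1
        _ ≤ α * (b * (mA' - mB')) * mA' := by gcongr
        _ = _ := by ring
  have lim : Filter.Tendsto (fun δ : ℝ => (b - a - 2 * δ) * hm.real B * (1 + hm.real A)) (nhdsWithin 0 (Set.Ioi 0))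
      (nhds ((b - a - 2 * 0) * hm.real B * (1 + hm.real A))) := by
    apply tendsto_nhdsWithin_of_tendsto_nhds
    exact Continuous.tendsto (by fun_prop) 0
  rw [mul_zero, sub_zero] at lim
  exact le_of_tendsto lim (by filter_upwards [self_mem_nhdsWithin] with δ hδ using key δ hδ)
end

lemma quad_antitone {G : ℝ → ℝ} {u v D : ℝ} (huv : u < v)
    (h : ∀ x y, u ≤ x → x ≤ y → y ≤ v → G y - G x ≤ D * (y - x)^2) : G v ≤ G u := by
  have key : ∀ n : ℕ, 0 < n → G v - G u ≤ D * (v-u)^2 / n := by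
    intro n hn
    have hn' : (0:ℝ) < n := by exact_mod_cast hn
    have ind : ∀ k : ℕ, k ≤ n → G (u + k * ((v-u)/n)) - G u ≤ k * (D * ((v-u)/n)^2) := by
      intro k
      induction k with
      | zero => intro _; simp
      | succ k ih =>
        intro hk
        have h1 := ih (by omega)
        have hd : 0 ≤ (v-u)/n := div_nonneg (by linarith) hn'.le
        have hk' : ((k:ℝ)+1) ≤ n := by exact_mod_cast hk
        have hle : ((k:ℝ)+1) * ((v-u)/n) ≤ n * ((v-u)/n) := by gcongr
        rw [mul_div_cancel₀ _ hn'.ne'] at hle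
        have h2 := h (u + k * ((v-u)/n)) (u + (k+1) * ((v-u)/n)) (by have : 0 ≤ (k:ℝ) * ((v-u)/n) := by positivity
                                                                     linarith) (by nlinarith) (by linarith)
        have e : u + ((k:ℝ)+1) * ((v-u)/n) - (u + k * ((v-u)/n)) = (v-u)/n := by ring
        rw [e] at h2
        push_cast
        linarith
    have := ind n le_rfl
    rw [mul_div_cancel₀ _ hn'.ne'] at this
    have e : u + (v - u) = v := by ring
    rw [e] at this
    refine this.trans (le_of_eq ?_)
    field_simp
  have lim : Filter.Tendsto (fun n : ℕ => D * (v-u)^2 / (n:ℝ)) Filter.atTop (nhds 0) :=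
    tendsto_const_div_atTop_nhds_zero_nat _
  have := ge_of_tendsto lim (b := G v - G u) (by filter_upwards [Filter.eventually_gt_atTop 0] with n hn using key n hn)
  linarith

lemma discr {μ : ℝ → ℝ} {α : ℝ} (hα : 0 < α) (hanti : ∀ a b, 0 < a → a ≤ b → μ b ≤ μ a)
    (hst : ∀ a b, 0 < a → a < b → (b - a) * μ b * (1 + μ a) ≤ α * b * μ a * (μ a - μ b))
    {s t : ℝ} (hs : 0 < s) (hst' : s < t) (ht : 0 < μ t) :
    (1 + μ t) * t ^ (1/α) ≤ (1 + μ s) * s ^ (1/α) := by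
  have t0 : 0 < t := hs.trans hst'
  let G : ℝ → ℝ := fun u => Real.log (1 + μ (Real.exp u)) + u / α
  set C := 1 + 1 / μ t with hC
  have C0 : 0 < C := by positivity
  have main : G (Real.log t) ≤ G (Real.log s) := by
    apply quad_antitone (D := 1/α + C/α^2) (Real.log_lt_log hs hst')
    intro x y hx hxy hy
    rcases hxy.eq_or_lt with rfl | hlt
    · simp
    have ea : 0 < Real.exp x := Real.exp_pos x
    have hab : Real.exp x < Real.exp y := Real.exp_lt_exp.2 hlt
    have S := hst _ _ ea hab
    have hbt : Real.exp y ≤ t := by rw [← Real.exp_log t0]; exact Real.exp_le_exp.2 hy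
    have mb : μ t ≤ μ (Real.exp y) := hanti _ _ (ea.trans hab) hbt
    have mab : μ (Real.exp y) ≤ μ (Real.exp x) := hanti _ _ ea hab.le
    set A := μ (Real.exp x) with hA
    set B := μ (Real.exp y) with hB
    have B0 : 0 < B := ht.trans_le mb
    have A0 : 0 < A := B0.trans_le mab
    set h := y - x with hh
    have h0 : 0 < h := by linarith
    have eb := Real.exp_pos y
    set Y := (1 - Real.exp (-h)) / α with hY
    have eY : Real.exp y - Real.exp x = α * Y * Real.exp y := by
      rw [hY, mul_div_cancel₀ _ hα.ne', sub_mul, ← Real.exp_add, one_mul]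
      congr 2; rw [hh]; ring
    have exl : 1 - h ≤ Real.exp (-h) := by have := Real.add_one_le_exp (-h); linarith
    have exu : 1 - Real.exp (-h) ≥ h - h^2 := by
      have h1 := Real.add_one_le_exp h
      have h2 : Real.exp (-h) * Real.exp h = 1 := by rw [← Real.exp_add]; simp
      have h3 := Real.exp_pos (-h)
      have h4 : Real.exp (-h) * (1 + h) ≤ 1 := by nlinarith
      have h5 : (1 - h + h^2) * (1+h) ≥ 1 := by nlinarith [pow_pos h0 3]
      have : Real.exp (-h) ≤ 1 - h + h^2 := by
        by_contra hc
        push Not at hc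
        nlinarith
      linarith
    have Yu : Y ≤ h / α := by rw [hY]; gcongr; linarith
    have Yl : (h - h^2)/α ≤ Y := by rw [hY]; gcongr
    have Y0 : 0 < Y := by
      rw [hY]; apply div_pos _ hα
      have : Real.exp (-h) < 1 := by rw [Real.exp_lt_one_iff]; linarith
      linarith
    rw [eY] at S
    have S' : Y * B * (1 + A) ≤ A * (A - B) := by
      have : (α * Real.exp y) * (Y * B * (1 + A)) ≤ (α * Real.exp y) * (A * (A - B)) := by linarith
      exact le_of_mul_le_mul_left this (by positivity)
    have CA : 1 + A ≤ C * A := by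
      have : 1 ≤ A * (1/ μ t) := by rw [mul_one_div, le_div_iff₀ ht]; linarith
      rw [hC]; nlinarith
    -- A - B ≥ (Y - C Y^2)(1+A)
    have S2 : (Y - C * Y^2) * (1 + A) ≤ A - B := by
      by_contra hc
      push Not at hc
      have h1 : A * (A - B) < A * ((Y - C * Y^2) * (1 + A)) := by gcongr
      -- B > A - (Y - C Y²)(1+A)
      have h2 : A - (Y - C*Y^2) * (1+A) < B := by linarith
      have h3 : Y * (1+A) * (A - (Y - C*Y^2) * (1+A)) < Y * (1+A) * B := by gcongr
      have h4 : Y * (1+A) * (A - (Y - C*Y^2) * (1+A)) < A * ((Y - C * Y^2) * (1 + A)) := by linarith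
      have h5 : Y * (1+A) * (A - (Y - C*Y^2) * (1+A)) - A * ((Y - C * Y^2) * (1 + A)) = (1+A) * Y^2 * ((C * A - (1 + A)) + C * Y * (1+A)) := by ring
      have h6 : 0 ≤ (1+A) * Y^2 * ((C * A - (1 + A)) + C * Y * (1+A)) := by
        have : 0 ≤ C * A - (1+A) := by linarith
        positivity
      linarith
    have S3 : Real.log (1 + B) - Real.log (1 + A) ≤ -(Y - C * Y^2) := by
      rw [← Real.log_div (by positivity) (by positivity)]
      refine (Real.log_le_sub_one_of_pos (by positivity)).trans ?_
      rw [sub_le_iff_le_add, div_le_iff₀ (by positivity)]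
      linarith
    have Y2 : C * Y^2 ≤ C * (h/α)^2 := by gcongr
    have e1 : G y - G x = (Real.log (1 + B) - Real.log (1 + A)) + h / α := by
      simp only [G, hh]; ring
    rw [e1]
    have e2 : (1/α + C/α^2) * h^2 = h/α - (h - h^2)/α + C * (h/α)^2 := by field_simp; ring
    rw [e2]; linarith
  simp only [G, Real.exp_log t0, Real.exp_log hs] at main
  have ms : 0 < μ s := ht.trans_le (hanti _ _ hs hst'.le)
  have := Real.exp_le_exp.2 main
  rw [Real.exp_add, Real.exp_add, Real.exp_log (by positivity), Real.exp_log (by positivity)] at this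
  rw [Real.rpow_def_of_pos t0, Real.rpow_def_of_pos hs, mul_one_div, mul_one_div]
  exact this

noncomputable def pt (r θ : ℝ) : ℂ := (r : ℂ) * (Real.cos θ + Real.sin θ * Complex.I)

lemma pt_eq (r θ : ℝ) : pt r θ = r * Complex.exp (θ * Complex.I) := by
  unfold pt; rw [Complex.exp_mul_I]; simp

lemma norm_pt {r : ℝ} (hr : 0 ≤ r) (θ : ℝ) : ‖pt r θ‖ = r := by
  rw [pt_eq, norm_mul, Complex.norm_exp_ofReal_mul_I, mul_one, Complex.norm_real, Real.norm_of_nonneg hr]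

lemma pt_cont : Continuous (fun p : ℝ × ℝ => pt p.1 p.2) := by
  unfold pt; fun_prop

lemma polar_l {u : ℂ → ENNReal} (hu : Measurable u) {h : ℝ → ENNReal} (hh : Measurable h) :
    ∫⁻ z in ball (0:ℂ) 1, h ‖z‖ * u z =
      ∫⁻ r in Set.Ioo (0:ℝ) 1, ENNReal.ofReal r * h r * ∫⁻ θ in Set.Ioo (-Real.pi) Real.pi, u (pt r θ) := by
  rw [← lintegral_indicator measurableSet_ball, ← Complex.lintegral_comp_polarCoord_symm, polarCoord_target,
    Measure.volume_eq_prod, ← Measure.prod_restrict, lintegral_prod]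
  · rw [← lintegral_indicator measurableSet_Ioi, ← lintegral_indicator measurableSet_Ioo]
    congr 1; ext r
    by_cases h0 : 0 < r
    · rw [Set.indicator_of_mem (by exact h0)]
      have hn : ∀ θ, ‖(Complex.polarCoord.symm (r, θ) : ℂ)‖ = r := fun θ => by
        rw [Complex.norm_polarCoord_symm]; exact abs_of_pos h0
      by_cases h1 : r < 1
      · rw [Set.indicator_of_mem (Set.mem_Ioo.2 ⟨h0, h1⟩)]
        rw [← lintegral_const_mul]
        · congr 1; ext θ
          rw [Set.indicator_of_mem (by rw [mem_ball_zero_iff, hn]; exact h1), hn]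
          rw [Complex.polarCoord_symm_apply, smul_eq_mul, mul_assoc]; rfl
        · exact hu.comp (pt_cont.comp (Continuous.prodMk_right r)).measurable
      · rw [Set.indicator_of_notMem (fun hc => h1 hc.2)]
        rw [← lintegral_zero (μ := volume.restrict (Set.Ioo (-Real.pi) Real.pi))]
        congr 1; ext θ
        rw [Set.indicator_of_notMem (by rw [mem_ball_zero_iff, hn]; exact h1)]; simp
    · rw [Set.indicator_of_notMem (by exact h0), Set.indicator_of_notMem (fun hc => h0 hc.1)]
  · apply Measurable.aemeasurable
    apply Measurable.mul (by fun_prop)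
    have : Measurable (fun z : ℂ => (ball (0:ℂ) 1).indicator (fun z => h ‖z‖ * u z) z) := by
      apply Measurable.indicator _ measurableSet_ball
      exact (hh.comp measurable_norm).mul hu
    have h2 : Measurable (fun p : ℝ × ℝ => (Complex.polarCoord.symm p : ℂ)) := by
      simp only [Complex.polarCoord_symm_apply]; fun_prop
    exact this.comp h2

lemma radial_deriv {γ : ℝ} (hγ : 0 < γ) {x : ℝ} (hx : x ∈ Set.Ioo (0:ℝ) 1) :
    HasDerivAt (fun x : ℝ => -(1 - x^2) ^ γ / (2 * γ)) (x * (1 - x^2)^(γ-1)) x := by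
  have h1 : HasDerivAt (fun x : ℝ => 1 - x^2) (-(2*x)) x := by
    simpa using ((hasDerivAt_pow 2 x).const_sub 1)
  have h2 : 0 < 1 - x^2 := by nlinarith [hx.1, hx.2]
  have := ((h1.rpow_const (p := γ) (Or.inl h2.ne')).neg).div_const (2*γ)
  have e : x * (1 - x^2)^(γ-1) = -(-(2 * x) * γ * (1 - x ^ 2) ^ (γ - 1)) / (2 * γ) := by
    rw [eq_div_iff (by positivity)]; ring
  rw [e]; exact this

lemma radial_int {γ : ℝ} (hγ : 0 < γ) :
    IntegrableOn (fun x : ℝ => x * (1 - x^2)^(γ-1)) (Set.Ioo 0 1) := by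
  have : IntegrableOn (fun x : ℝ => x * (1 - x^2)^(γ-1)) (Set.Ioc 0 1) := by
    apply intervalIntegral.integrableOn_deriv_of_nonneg (g := fun x : ℝ => -(1 - x^2) ^ γ / (2 * γ))
    · have : Continuous (fun x : ℝ => (1 - x^2) ^ γ) := (by fun_prop : Continuous (fun x : ℝ => 1 - x^2)).rpow_const (fun x => Or.inr hγ.le)
      exact ((this.neg).div_const _).continuousOn
    · intro x hx; exact radial_deriv hγ hx
    · intro x hx
      have h2 : 0 < 1 - x^2 := by nlinarith [hx.1, hx.2]
      have := hx.1
      positivity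
  exact this.mono_set Set.Ioo_subset_Ioc_self

lemma weight_integrable {γ : ℝ} (hγ : 0 < γ) :
    IntegrableOn (fun z : ℂ => (1 - ‖z‖^2)^(γ-1)) (ball 0 1) := by
  refine ⟨(by fun_prop : Measurable (fun z : ℂ => (1 - ‖z‖^2)^(γ-1))).aestronglyMeasurable, ?_⟩
  rw [hasFiniteIntegral_iff_ofReal]
  · have := polar_l (u := fun _ => 1) measurable_const (h := fun r => ENNReal.ofReal ((1 - r^2)^(γ-1))) (by fun_prop)
    simp only [mul_one] at this
    rw [this]
    simp only [lintegral_const, one_mul, Measure.restrict_apply_univ, Real.volume_Ioo]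
    rw [lintegral_mul_const _ (by fun_prop)]
    apply ENNReal.mul_lt_top _ ENNReal.ofReal_lt_top
    have h2 := (radial_int hγ).2
    rw [hasFiniteIntegral_iff_ofReal] at h2
    · refine lt_of_le_of_lt (le_of_eq ?_) h2
      apply setLIntegral_congr_fun measurableSet_Ioo
      intro x hx
      exact (ENNReal.ofReal_mul hx.1.le).symm
    · filter_upwards [ae_restrict_mem measurableSet_Ioo] with x hx
      have h2 : 0 < 1 - x^2 := by nlinarith [hx.1, hx.2]
      have := hx.1
      simp only [Pi.zero_apply]; positivity
  · filter_upwards [ae_restrict_mem measurableSet_ball] with z hz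
    have := one_sub_sq_pos hz
    simp only [Pi.zero_apply]; positivity

noncomputable def mu0 (T α t : ℝ) : ℝ := max 0 ((T/t)^(1/α) - 1)

lemma mu0_int {T α κ : ℝ} (hT : 0 < T) (hα : 1 < α) (hκ : 1 ≤ κ) :
    IntegrableOn (fun t => t^(κ-1) * mu0 T α t) (Set.Ioi 0) ∧
    ∫ t in Set.Ioi 0, t^(κ-1) * mu0 T α t = T^κ / (κ * (α*κ-1)) := by
  have a0 : 0 < α := by linarith
  have ia : 0 < 1/α := by positivity
  have ia1 : 1/α < 1 := by rw [div_lt_one a0]; exact hα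
  have e : ∀ t ∈ Set.Ioi (0:ℝ), t^(κ-1) * mu0 T α t = (Set.Ioc 0 T).indicator (fun t => T^(1/α) * t^(κ-1-1/α) - t^(κ-1)) t := by
    intro t (ht : 0 < t)
    unfold mu0
    by_cases h : t ≤ T
    · rw [Set.indicator_of_mem (Set.mem_Ioc.2 ⟨ht, h⟩), max_eq_right]
      · rw [Real.div_rpow hT.le ht.le, Real.rpow_sub ht (κ-1)]; ring
      · rw [sub_nonneg]; apply Real.one_le_rpow _ ia.le
        rw [le_div_iff₀ ht]; linarith
    · rw [Set.indicator_of_notMem (fun hc => h hc.2), max_eq_left, mul_zero]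
      push Not at h
      rw [sub_nonpos]; apply Real.rpow_le_one (by positivity) _ ia.le
      rw [div_le_one ht]; exact h.le
  have i1 : IntervalIntegrable (fun t : ℝ => T^(1/α) * t^(κ-1-1/α)) volume 0 T :=
    (intervalIntegral.intervalIntegrable_rpow' (by linarith)).const_mul _
  have i2 : IntervalIntegrable (fun t : ℝ => t^(κ-1)) volume 0 T :=
    intervalIntegral.intervalIntegrable_rpow' (by linarith)
  have i3 := i1.sub i2
  have hsub : Set.Ioi (0:ℝ) ∩ Set.Ioc 0 T = Set.Ioc 0 T := Set.inter_eq_right.2 (fun x hx => hx.1)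
  constructor
  · rw [integrableOn_congr_fun e measurableSet_Ioi]
    rw [IntegrableOn, integrable_indicator_iff measurableSet_Ioc, IntegrableOn, Measure.restrict_restrict measurableSet_Ioc, Set.inter_comm, hsub]
    exact (intervalIntegrable_iff_integrableOn_Ioc_of_le hT.le).1 i3
  · rw [setIntegral_congr_fun measurableSet_Ioi e, setIntegral_indicator measurableSet_Ioc, hsub,
      ← intervalIntegral.integral_of_le hT.le, intervalIntegral.integral_sub i1 i2, intervalIntegral.integral_const_mul,
      integral_rpow (Or.inl (by linarith)), integral_rpow (Or.inl (by linarith))]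
    have e1 : κ - 1 - 1/α + 1 = κ - 1/α := by ring
    have e2 : κ - 1 + 1 = κ := by ring
    have h1 : 0 < κ - 1/α := by linarith
    have h2 : 0 < α * κ - 1 := by nlinarith
    rw [e1, e2, Real.zero_rpow h1.ne', Real.zero_rpow (by linarith), sub_zero, sub_zero, mul_div_assoc', ← Real.rpow_add hT]
    have e3 : 1/α + (κ - 1/α) = κ := by ring
    rw [e3]
    have e4 : κ - 1/α = (α*κ-1)/α := by field_simp
    rw [e4]
    have : κ ≠ 0 := by linarith
    field_simp
    ring

lemma compar {μ : ℝ → ℝ} {T α κ M : ℝ} (hT : 0 < T) (hα : 1 < α) (hκ : 1 ≤ κ) (hM : 0 < M)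
    (μ0 : ∀ t, 0 ≤ μ t) (μM : ∀ t, M ≤ t → μ t = 0)
    (mono : ∀ s t, 0 < s → s < t → 0 < μ t → (1 + μ t) * t ^ (1/α) ≤ (1 + μ s) * s ^ (1/α))
    (hi : IntegrableOn μ (Set.Ioi 0)) (hI : ∫ t in Set.Ioi 0, μ t = T / (α-1)) :
    IntegrableOn (fun t => t^(κ-1) * μ t) (Set.Ioi 0) ∧
    κ * ∫ t in Set.Ioi 0, t^(κ-1) * μ t ≤ T^κ / (α*κ-1) := by
  have a0 : 0 < α := by linarith
  have k0 : 0 ≤ κ - 1 := by linarith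
  obtain ⟨ia, Ia⟩ := mu0_int hT hα hκ
  obtain ⟨ib, Ib⟩ := mu0_int hT hα (le_refl (1:ℝ))
  have e1 : (fun t : ℝ => t^((1:ℝ)-1) * mu0 T α t) = fun t => mu0 T α t := by ext t; simp
  rw [e1] at ib Ib
  have ik : IntegrableOn (fun t => t^(κ-1) * μ t) (Set.Ioi 0) := by
    refine Integrable.mono' (g := fun t => M^(κ-1) * μ t) (hi.const_mul _) ?_ ?_
    · exact (by fun_prop : Measurable (fun t : ℝ => t^(κ-1))).aestronglyMeasurable.mul hi.1
    · filter_upwards [ae_restrict_mem measurableSet_Ioi] with t ht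
      have ht : 0 < t := ht
      have := μ0 t
      rw [Real.norm_of_nonneg (by positivity)]
      rcases le_total M t with h | h
      · rw [μM t h]; simp
      · gcongr
  refine ⟨ik, ?_⟩
  let S : Set ℝ := {t | 0 < t ∧ 0 < μ t ∧ T^(1/α) ≤ (1 + μ t) * t^(1/α)}
  have bS : BddAbove S := ⟨M, fun t ht => by
    by_contra hc
    push Not at hc
    have := ht.2.1
    rw [μM t hc.le] at this
    exact lt_irrefl _ this⟩
  set t0 := sSup S with ht0
  have t00 : 0 ≤ t0 := Real.sSup_nonneg fun t ht => ht.1.le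
  have hi1 : ∀ t, t0 < t → μ t ≤ mu0 T α t := by
    intro t ht
    have tp : 0 < t := t00.trans_lt ht
    unfold mu0
    rcases (μ0 t).eq_or_lt with h | h
    · rw [← h]; exact le_max_left _ _
    · apply le_max_of_le_right
      have : ¬ (T^(1/α) ≤ (1 + μ t) * t^(1/α)) := fun hc => absurd (le_csSup bS ⟨tp, h, hc⟩) (not_le.2 ht)
      push Not at this
      rw [Real.div_rpow hT.le tp.le, le_sub_iff_add_le, le_div_iff₀ (by positivity)]
      linarith
  have hi2 : ∀ t, 0 < t → t < t0 → mu0 T α t ≤ μ t := by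
    intro t tp ht
    have hne : S.Nonempty := by
      by_contra hc
      rw [Set.not_nonempty_iff_eq_empty] at hc
      rw [ht0, hc, Real.sSup_empty] at ht
      linarith
    obtain ⟨s, hs, hts⟩ := exists_lt_of_lt_csSup hne ht
    have := mono t s tp hts hs.2.1
    have h2 := hs.2.2.trans this
    unfold mu0
    apply max_le (μ0 t)
    rw [Real.div_rpow hT.le tp.le, sub_le_iff_le_add, div_le_iff₀ (by positivity)]
    linarith
  have key : 0 ≤ ∫ t in Set.Ioi 0, (t^(κ-1) - t0^(κ-1)) * (mu0 T α t - μ t) := by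
    apply setIntegral_nonneg measurableSet_Ioi
    intro t ht
    have tp : 0 < t := ht
    rcases lt_trichotomy t t0 with h | h | h
    · apply mul_nonneg_of_nonpos_of_nonpos
      · rw [sub_nonpos]; gcongr
      · rw [sub_nonpos]; exact hi2 t tp h
    · rw [h]; simp
    · apply mul_nonneg
      · rw [sub_nonneg]; gcongr
      · rw [sub_nonneg]; exact hi1 t h
  have e : (fun t => (t^(κ-1) - t0^(κ-1)) * (mu0 T α t - μ t)) = fun t => (t^(κ-1) * mu0 T α t - t^(κ-1) * μ t) - t0^(κ-1) * (mu0 T α t - μ t) := by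
    ext t; ring
  have j1 : IntegrableOn (fun t => t^(κ-1) * mu0 T α t - t^(κ-1) * μ t) (Set.Ioi 0) := ia.sub ik
  have j2 : IntegrableOn (fun t => mu0 T α t - μ t) (Set.Ioi 0) := ib.sub hi
  rw [e, integral_sub j1 (j2.const_mul _), integral_sub ia ik, integral_const_mul, integral_sub ib hi, Ia, Ib, hI] at key
  simp only [Real.rpow_one, mul_one, one_mul, sub_self, mul_zero, sub_zero] at key
  have kp : 0 < κ := by linarith
  have h2 : 0 < α * κ - 1 := by nlinarith
  calc κ * ∫ t in Set.Ioi 0, t^(κ-1) * μ t ≤ κ * (T^κ / (κ * (α*κ-1))) := by gcongr; linarith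
    _ = _ := by field_simp

section
variable {F : ℂ → ℂ} {p α R κ : ℝ}

lemma vf_bdd (hR : 1 < R) (hF : DifferentiableOn ℂ F (ball 0 R)) (hp : 0 < p) (hα : 0 < α) :
    ∃ M, 0 < M ∧ ∀ z, vf F p α z < M := by
  obtain ⟨C, hC⟩ := (isCompact_closedBall (0:ℂ) 1).exists_bound_of_continuousOn (vf_cont hR hF hp hα).continuousOn
  refine ⟨max C 0 + 1, by positivity, fun z => ?_⟩
  by_cases hz : z ∈ ball (0:ℂ) 1
  · have := (le_abs_self _).trans (hC z (ball_subset_closedBall hz))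
    have := le_max_left C 0
    linarith
  · rw [vf_zero_off hα hz]; positivity

lemma vf_integrable (hR : 1 < R) (hF : DifferentiableOn ℂ F (ball 0 R)) (hp : 0 < p) (hα : 1 < α) :
    Integrable (vf F p α) hm := by
  have a0 : 0 < α := by linarith
  unfold hm
  rw [integrable_withDensity_iff_integrable_smul' hm_dens_meas (by simp)]
  have Fc : ContinuousOn F (closedBall 0 1) := hF.continuousOn.mono (closedBall_subset_ball hR)
  obtain ⟨C, hC⟩ := (isCompact_closedBall (0:ℂ) 1).exists_bound_of_continuousOn Fc
  refine Integrable.mono' (g := fun z => (C^p/Real.pi) * (1 - ‖z‖^2)^((α-1)-1)) ((weight_integrable (by linarith)).const_mul _) ?_ ?_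
  · have := (vf_cont hR hF hp a0).measurable
    have h2 := hm_dens_meas
    exact (h2.ennreal_toReal.smul this).aestronglyMeasurable
  · filter_upwards [ae_restrict_mem measurableSet_ball] with z hz
    have w0 := one_sub_sq_pos hz
    rw [ENNReal.toReal_ofReal (by positivity), norm_smul, Real.norm_of_nonneg (by positivity), Real.norm_of_nonneg (vf_nonneg z)]
    unfold vf
    rw [max_eq_right w0.le]
    have e : (1 - ‖z‖^2)^(α-1-1) = (1 - ‖z‖^2)^α / (1 - ‖z‖^2)^2 := by
      have : α - 1 - 1 = α - (2:ℕ) := by push_cast; ring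
      rw [this, Real.rpow_sub_natCast w0.ne']
    rw [e]
    have h1 : ‖F z‖^p ≤ C^p := by
      have := hC z (ball_subset_closedBall hz)
      gcongr
    have pp := Real.pi_pos
    calc _ = (1 - ‖z‖^2)^α / (1 - ‖z‖^2)^2 / Real.pi * ‖F z‖^p := by field_simp
      _ ≤ (1 - ‖z‖^2)^α / (1 - ‖z‖^2)^2 / Real.pi * C^p := by gcongr
      _ = _ := by ring

theorem comp_main (hR : 1 < R) (hF : DifferentiableOn ℂ F (ball 0 R)) (hp : 0 < p) (hα : 1 < α) (hκ : 1 ≤ κ) :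
    ENNReal.ofReal (α*κ-1) * ∫⁻ z, ENNReal.ofReal (vf F p α z ^ κ) ∂hm ≤ ENNReal.ofReal (((α-1) * ∫ z, vf F p α z ∂hm)^κ) := by
  have a0 : 0 < α := by linarith
  have k0 : 0 < κ := by linarith
  have h2 : 0 < α * κ - 1 := by nlinarith
  obtain ⟨M, M0, hM⟩ := vf_bdd hR hF hp a0
  have vi := vf_integrable hR hF hp hα
  set v := vf F p α with hv
  have vm : Measurable v := (vf_cont hR hF hp a0).measurable
  have vn : 0 ≤ᵐ[hm] v := Filter.Eventually.of_forall (fun z => vf_nonneg z)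
  rw [lintegral_rpow_eq_lintegral_meas_lt_mul hm vn vm.aemeasurable k0]
  have hI := vi.integral_eq_integral_meas_lt vn
  let μ : ℝ → ℝ := fun t => hm.real {z | t < v z}
  have fin : ∀ t, 0 < t → hm {z | t < v z} < ⊤ := fun t ht => vf_lev_fin hR hF hp a0 ht
  have anti : ∀ a b, 0 < a → a ≤ b → μ b ≤ μ a := fun a b ha hab =>
    measureReal_mono (fun z (hz : b < v z) => lt_of_le_of_lt hab hz) (fin a ha).ne
  have μi : IntegrableOn μ (Set.Ioi 0) := by
    have h1 : AntitoneOn μ (Set.Ioi 0) := fun a ha b _ hab => anti a b ha hab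
    refine ⟨(aemeasurable_restrict_of_antitoneOn measurableSet_Ioi h1).aestronglyMeasurable, ?_⟩
    rw [hasFiniteIntegral_iff_ofReal (Filter.Eventually.of_forall fun t => measureReal_nonneg)]
    have h3 : ∫⁻ t in Set.Ioi 0, ENNReal.ofReal (μ t) = ∫⁻ z, ENNReal.ofReal (v z) ∂hm := by
      rw [lintegral_eq_lintegral_meas_lt hm vn vm.aemeasurable]
      apply setLIntegral_congr_fun measurableSet_Ioi
      intro t ht
      exact ENNReal.ofReal_toReal (fin t ht).ne
    rw [h3]
    exact (hasFiniteIntegral_iff_ofReal vn).1 vi.2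
  have hconv : ∫⁻ t in Set.Ioi 0, hm {z | t < v z} * ENNReal.ofReal (t^(κ-1)) = ∫⁻ t in Set.Ioi 0, ENNReal.ofReal (t^(κ-1) * μ t) := by
    apply setLIntegral_congr_fun measurableSet_Ioi
    intro t ht
    have ht : 0 < t := ht
    simp only
    rw [ENNReal.ofReal_mul (by positivity), mul_comm]
    congr 1
    exact (ENNReal.ofReal_toReal (fin t ht).ne).symm
  rw [hconv]
  have vI0 : 0 ≤ ∫ z, v z ∂hm := integral_nonneg fun z => vf_nonneg z
  rcases vI0.eq_or_lt with hz | hpos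
  · have h1 : v =ᵐ[hm] 0 := (integral_eq_zero_iff_of_nonneg_ae vn vi).1 hz.symm
    have h3 : ∀ t ∈ Set.Ioi (0:ℝ), ENNReal.ofReal (t^(κ-1) * μ t) = 0 := by
      intro t ht
      have : hm {z | t < v z} = 0 := by
        refine measure_mono_null ?_ h1
        intro z hz
        simp only [Set.mem_setOf_eq] at hz
        have ht : 0 < t := ht
        intro hc
        simp only [Set.mem_setOf_eq, Pi.zero_apply] at hc
        linarith
      have h4 : μ t = 0 := by simp [μ, Measure.real, this]
      simp [h4]
    rw [setLIntegral_congr_fun measurableSet_Ioi h3]; simp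
  · have C := compar (μ := μ) (T := (α-1) * ∫ z, v z ∂hm) (κ := κ) (M := M) (mul_pos (by linarith) hpos) hα hκ M0
      (fun t => measureReal_nonneg) (fun t ht => by
        have : {z | t < v z} = ∅ := by
          ext z; simp only [Set.mem_setOf_eq, Set.mem_empty_iff_false, iff_false, not_lt]
          exact (hM z).le.trans ht
        simp [μ, this]) (fun s t hs hst ht => discr a0 anti (fun a b ha hab => step hR hF hp a0 ha hab) hs hst ht) μi (by
        rw [hI, mul_div_cancel_left₀]; linarith)
    rw [← ofReal_integral_eq_lintegral_ofReal C.1]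
    · rw [← ENNReal.ofReal_mul k0.le, ← ENNReal.ofReal_mul h2.le]
      apply ENNReal.ofReal_le_ofReal
      have := C.2
      rw [le_div_iff₀ h2] at this
      linarith
    · filter_upwards [ae_restrict_mem measurableSet_Ioi] with t ht
      have ht : 0 < t := ht
      have : 0 ≤ μ t := measureReal_nonneg
      simp only [Pi.zero_apply]; positivity
end

lemma berg_lint (α : ℝ) (h : ℂ → ENNReal) : ∫⁻ z, h z ∂(bergmanMeasure α) =
    ∫⁻ z in ball (0:ℂ) 1, ENNReal.ofReal ((α - 1) / Real.pi * (1 - ‖z‖ ^ 2) ^ (α - 2)) * h z := by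
  unfold bergmanMeasure
  rw [lintegral_withDensity_eq_lintegral_mul_non_measurable _ (by fun_prop) (by simp)]
  rfl

lemma hm_lint (h : ℂ → ENNReal) : ∫⁻ z, h z ∂hm =
    ∫⁻ z in ball (0:ℂ) 1, ENNReal.ofReal (1 / (Real.pi * (1 - ‖z‖ ^ 2) ^ 2)) * h z := by
  unfold hm
  rw [lintegral_withDensity_eq_lintegral_mul_non_measurable _ hm_dens_meas (by simp)]
  rfl

lemma berg_hm {F : ℂ → ℂ} {p α : ℝ} (hα : 1 < α) :
    ∫⁻ z, ENNReal.ofReal (‖F z‖^p) ∂(bergmanMeasure α) = ENNReal.ofReal (α-1) * ∫⁻ z, ENNReal.ofReal (vf F p α z) ∂hm := by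
  rw [berg_lint, hm_lint, ← lintegral_const_mul' _ _ ENNReal.ofReal_ne_top]
  apply setLIntegral_congr_fun measurableSet_ball
  intro z hz
  have w0 := one_sub_sq_pos hz
  have pp := Real.pi_pos
  have a1 : 0 ≤ α - 1 := by linarith
  simp only
  rw [← ENNReal.ofReal_mul (by positivity), ← ENNReal.ofReal_mul (by positivity), ← ENNReal.ofReal_mul (by positivity)]
  congr 1
  unfold vf
  rw [max_eq_right w0.le]
  have e : (1 - ‖z‖^2)^(α-2) = (1 - ‖z‖^2)^α / (1 - ‖z‖^2)^2 := by
    have : α - 2 = α - (2:ℕ) := by push_cast; ring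
    rw [this, Real.rpow_sub_natCast w0.ne']
  rw [e]
  field_simp

theorem berg_comp {F : ℂ → ℂ} {p α R κ : ℝ} (hR : 1 < R) (hF : DifferentiableOn ℂ F (ball 0 R)) (hp : 0 < p) (hα : 1 < α) (hκ : 1 ≤ κ) :
    ∫⁻ z, ENNReal.ofReal (‖F z‖^(p*κ)) ∂(bergmanMeasure (α*κ)) ≤ (∫⁻ z, ENNReal.ofReal (‖F z‖^p) ∂(bergmanMeasure α))^κ := by
  have h2 : 1 < α * κ := by nlinarith
  have a1 : 0 ≤ α - 1 := by linarith
  have C := comp_main hR hF hp hα hκ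
  have e : ∀ z, vf F p α z ^ κ = vf F (p*κ) (α*κ) z := by
    intro z
    unfold vf
    rw [Real.mul_rpow (by positivity) (by positivity), ← Real.rpow_mul (by positivity), ← Real.rpow_mul (by positivity)]
  simp only [e] at C
  rw [berg_hm h2, berg_hm hα]
  refine C.trans (le_of_eq ?_)
  have vI0 : 0 ≤ ∫ z, vf F p α z ∂hm := integral_nonneg fun z => vf_nonneg z
  rw [← ENNReal.ofReal_rpow_of_nonneg (by positivity) (by linarith), ENNReal.ofReal_mul a1,
    ofReal_integral_eq_lintegral_ofReal (vf_integrable hR hF hp hα) (Filter.Eventually.of_forall fun z => vf_nonneg z)]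

noncomputable def Dm (a b : ℂ) : ℂ →L[ℝ] ℂ :=
  (ContinuousLinearMap.mul ℝ ℂ a) + (ContinuousLinearMap.mul ℝ ℂ b).comp (Complex.conjCLE : ℂ →L[ℝ] ℂ)

lemma Dm_apply (a b v : ℂ) : Dm a b v = a * v + b * cj v := by
  simp [Dm]

def HasD (f : ℂ → ℂ) (a b z : ℂ) : Prop := HasFDerivAt f (Dm a b) z

lemma HasD.mul {f g : ℂ → ℂ} {a b a' b' z : ℂ} (hf : HasD f a b z) (hg : HasD g a' b' z) :
    HasD (fun z => f z * g z) (a * g z + f z * a') (b * g z + f z * b') z := by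
  unfold HasD at *
  have := HasFDerivAt.mul hf hg
  refine this.congr_fderiv ?_
  ext v <;> simp only [add_apply, smul_apply, smul_eq_mul, Dm_apply] <;> ring_nf

lemma HasD.conj {f : ℂ → ℂ} {a b z : ℂ} (hf : HasD f a b z) : HasD (fun z => cj (f z)) (cj b) (cj a) z := by
  unfold HasD at *
  have := (Complex.conjCLE : ℂ →L[ℝ] ℂ).hasFDerivAt.comp z hf
  refine this.congr_fderiv ?_
  refine ContinuousLinearMap.ext fun v => ?_
  simp only [ContinuousLinearMap.comp_apply, Dm_apply]
  simp [add_comm]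

lemma HasD.outer {f h : ℂ → ℂ} {a b z h' : ℂ} (hf : HasD f a b z) (hh : HasDerivAt h h' (f z)) :
    HasD (fun z => h (f z)) (h' * a) (h' * b) z := by
  unfold HasD at *
  have := (hh.hasFDerivAt.restrictScalars ℝ).comp z hf
  refine this.congr_fderiv ?_
  refine ContinuousLinearMap.ext fun v => ?_
  simp only [ContinuousLinearMap.comp_apply, Dm_apply]
  simp [Dm_apply]; ring

lemma HasD.holo {h : ℂ → ℂ} {h' z : ℂ} (hh : HasDerivAt h h' z) : HasD h h' 0 z := by
  unfold HasD
  refine (hh.hasFDerivAt.restrictScalars ℝ).congr_fderiv ?_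
  refine ContinuousLinearMap.ext fun v => ?_
  simp [Dm_apply]; ring

lemma HasD.add {f g : ℂ → ℂ} {a b a' b' z : ℂ} (hf : HasD f a b z) (hg : HasD g a' b' z) :
    HasD (fun z => f z + g z) (a + a') (b + b') z := by
  unfold HasD at *
  refine (HasFDerivAt.add hf hg).congr_fderiv ?_
  refine ContinuousLinearMap.ext fun v => ?_
  simp [Dm_apply]; ring

lemma HasD.congr {f : ℂ → ℂ} {a b a' b' z : ℂ} (hf : HasD f a b z) (ha : a = a') (hb : b = b') : HasD f a' b' z := by
  subst ha hb; exact hf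

lemma HasD.cont {f : ℂ → ℂ} {a b z : ℂ} (hf : HasD f a b z) : ContinuousAt f z := HasFDerivAt.continuousAt hf

def HP (L : ℝ) : Set ℂ := {w | w.re < L}

lemma HP_open (L : ℝ) : IsOpen (HP L) := isOpen_lt Complex.continuous_re continuous_const

noncomputable def vint (k : ℂ → ℂ) (x : ℝ) : ℂ := ∫ y in (-Real.pi)..Real.pi, k (x + y * Complex.I)

lemma vline_cont {k : ℂ → ℂ} {L x : ℝ} (hk : ContinuousOn k (HP L)) (hx : x < L) :
    Continuous (fun y : ℝ => k (x + y * Complex.I)) := by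
  apply hk.comp_continuous (by fun_prop)
  intro y; simp [HP, hx]

lemma hasD_x {k : ℂ → ℂ} {a b : ℂ} {x y : ℝ} (h : HasD k a b (x + y * Complex.I)) :
    HasDerivAt (fun x : ℝ => k (x + y * Complex.I)) (a + b) x := by
  have h1 : HasDerivAt (fun x : ℝ => (x:ℂ) + y * Complex.I) 1 x := by
    simpa using (Complex.ofRealCLM.hasDerivAt (x := x)).add_const ((y:ℂ) * Complex.I)
  have h' : HasFDerivAt k (Dm a b) ((fun x : ℝ => (x:ℂ) + y * Complex.I) x) := h
  have := h'.comp_hasDerivAt x h1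
  rw [Dm_apply, map_one, mul_one, mul_one] at this
  exact this

lemma vint_deriv {k a b : ℂ → ℂ} {L x : ℝ} (hx : x < L) (hk : ∀ w ∈ HP L, HasD k (a w) (b w) w)
    (ha : ContinuousOn a (HP L)) (hb : ContinuousOn b (HP L)) :
    HasDerivAt (vint k) (vint (fun w => a w + b w) x) x := by
  have kc : ContinuousOn k (HP L) := fun w hw => (hk w hw).cont.continuousWithinAt
  have abc : ContinuousOn (fun w => a w + b w) (HP L) := ha.add hb
  set δ := (L - x)/2 with hδ
  have δ0 : 0 < δ := by rw [hδ]; linarith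
  have hK : IsCompact ((fun p : ℝ × ℝ => (p.1:ℂ) + p.2 * Complex.I) '' (Set.Icc (x-δ) (x+δ) ×ˢ Set.Icc (-Real.pi) Real.pi)) :=
    (isCompact_Icc.prod isCompact_Icc).image (by fun_prop)
  have hsub : ((fun p : ℝ × ℝ => (p.1:ℂ) + p.2 * Complex.I) '' (Set.Icc (x-δ) (x+δ) ×ˢ Set.Icc (-Real.pi) Real.pi)) ⊆ HP L := by
    rintro _ ⟨p, ⟨hp, -⟩, rfl⟩
    have := hp.2
    simp [HP]; linarith
  obtain ⟨C, hC⟩ := hK.exists_bound_of_continuousOn (abc.mono hsub)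
  have := intervalIntegral.hasDerivAt_integral_of_dominated_loc_of_deriv_le (μ := volume) (a := -Real.pi) (b := Real.pi)
    (F := fun (x y : ℝ) => k (x + y * Complex.I)) (F' := fun (x y : ℝ) => a (x + y * Complex.I) + b (x + y * Complex.I)) (x₀ := x)
    (s := ball x δ) (bound := fun _ => C) (ball_mem_nhds x δ0) ?_ ?_ ?_ ?_ ?_ ?_
  · exact this.2
  · filter_upwards [gt_mem_nhds hx] with x' hx'
    exact (vline_cont kc hx').aestronglyMeasurable
  · exact (vline_cont kc hx).intervalIntegrable _ _
  · exact (vline_cont abc hx).aestronglyMeasurable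
  · refine Filter.Eventually.of_forall fun y hy x' hx' => ?_
    rw [Set.uIoc_of_le (by linarith [Real.pi_pos])] at hy
    rw [Real.ball_eq_Ioo] at hx'
    exact hC _ ⟨(x', y), ⟨⟨hx'.1.le, hx'.2.le⟩, ⟨hy.1.le, hy.2⟩⟩, rfl⟩
  · exact intervalIntegrable_const
  · refine Filter.Eventually.of_forall fun y hy x' hx' => ?_
    rw [Real.ball_eq_Ioo] at hx'
    exact hasD_x (hk _ (by have := hx'.2; simp [HP]; linarith))

lemma vint_cont {k : ℂ → ℂ} {L : ℝ} (hk : ContinuousOn k (HP L)) : ContinuousOn (vint k) (Set.Iio L) := by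
  intro x hx
  have hx : x < L := hx
  obtain ⟨L', h1, h2⟩ := exists_between hx
  have hc : Continuous (fun p : ℝ × ℝ => k ((min p.1 L' : ℝ) + p.2 * Complex.I)) := by
    apply hk.comp_continuous (by fun_prop)
    intro p
    simp [HP, h2]
  have := intervalIntegral.continuous_parametric_intervalIntegral_of_continuous' (μ := volume) (f := fun x y => k ((min x L' : ℝ) + y * Complex.I)) hc (-Real.pi) Real.pi
  apply ContinuousAt.continuousWithinAt
  refine this.continuousAt.congr ?_
  filter_upwards [gt_mem_nhds h1] with x' hx'
  rw [min_eq_left hx'.le]; rfl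

lemma vint_rect {k a b : ℂ → ℂ} {L x₁ x₂ : ℝ} (h12 : x₁ ≤ x₂) (hx : x₂ < L) (hk : ∀ w ∈ HP L, HasD k (a w) (b w) w)
    (hb : ContinuousOn b (HP L)) (per : ∀ x : ℝ, k (x + (-Real.pi:ℝ) * Complex.I) = k (x + Real.pi * Complex.I)) :
    vint k x₂ - vint k x₁ = 2 * ∫ x in x₁..x₂, vint b x := by
  have pp := Real.pi_pos
  have kc : ContinuousOn k (HP L) := fun w hw => (hk w hw).cont.continuousWithinAt
  have hsub : (Set.uIcc x₁ x₂ ×ℂ Set.uIcc (-Real.pi) Real.pi) ⊆ HP L := by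
    intro w hw
    rw [Complex.mem_reProdIm, Set.uIcc_of_le h12] at hw
    exact lt_of_le_of_lt hw.1.2 hx
  have e : ∀ w, Complex.I • (Dm (a w) (b w)) 1 - (Dm (a w) (b w)) Complex.I = 2 * Complex.I * b w := by
    intro w; rw [Dm_apply, Dm_apply]; simp; ring
  have := Complex.integral_boundary_rect_of_hasFDerivAt_real_off_countable k (fun w => Dm (a w) (b w)) ⟨x₁, -Real.pi⟩ ⟨x₂, Real.pi⟩ ∅
    Set.countable_empty (kc.mono hsub) (by
      intro w hw
      apply hk w
      apply hsub
      have := hw.1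
      rw [Complex.mem_reProdIm] at this ⊢
      exact ⟨Set.Ioo_subset_Icc_self this.1, Set.Ioo_subset_Icc_self this.2⟩) (by
      simp only [e]
      apply ContinuousOn.integrableOn_compact
      · exact isCompact_uIcc.reProdIm isCompact_uIcc
      · exact continuousOn_const.mul (hb.mono hsub))
  simp only [e] at this
  simp only [per, sub_self, zero_add] at this
  simp only [intervalIntegral.integral_const_mul] at this
  have h3 : Complex.I * (vint k x₂ - vint k x₁) = Complex.I * (2 * ∫ x in x₁..x₂, vint b x) := by
    rw [mul_sub]
    unfold vint
    rw [← smul_eq_mul, ← smul_eq_mul, this]; ring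
  exact mul_left_cancel₀ Complex.I_ne_zero h3

lemma mono_of_bdd {f f' : ℝ → ℝ} {L : ℝ} (hd : ∀ x < L, HasDerivAt f (f' x) x)
    (hm : ∀ x y, x ≤ y → y < L → f' x ≤ f' y) (hb : ∀ x < L, ∃ C, ∀ y ≤ x, |f y| ≤ C) {x y : ℝ} (hxy : x ≤ y) (hy : y < L) :
    f x ≤ f y := by
  have nn : ∀ x < L, 0 ≤ f' x := by
    intro x0 h0
    by_contra hc
    push Not at hc
    obtain ⟨C, hC⟩ := hb x0 h0
    have C0 : 0 ≤ C := (abs_nonneg _).trans (hC x0 le_rfl)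
    set d := (2 * C + 1) / (-f' x0) with hdd
    have d0 : 0 < d := div_pos (by positivity) (by linarith)
    obtain ⟨ξ, hξ, hs⟩ := exists_hasDerivAt_eq_slope f f' (a := x0 - d) (b := x0) (by linarith)
      (fun z hz => (hd z (by linarith [hz.2])).continuousAt.continuousWithinAt) (fun z hz => hd z (by linarith [hz.2]))
    have h1 := hm ξ x0 hξ.2.le h0
    rw [hs, sub_sub_cancel, div_le_iff₀ d0] at h1
    have h2 := abs_le.1 (hC x0 le_rfl)
    have h3 := abs_le.1 (hC (x0-d) (by linarith))
    have h4 : f' x0 * d = -(2*C+1) := by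
      rw [hdd]; have : f' x0 ≠ 0 := hc.ne
      field_simp
    linarith [h2.1, h2.2, h3.1, h3.2]
  rcases hxy.eq_or_lt with rfl | hlt
  · exact le_rfl
  obtain ⟨ξ, hξ, hs⟩ := exists_hasDerivAt_eq_slope f f' hlt
      (fun z hz => (hd z (by linarith [hz.2])).continuousAt.continuousWithinAt) (fun z hz => hd z (by linarith [hz.2]))
  have := nn ξ (by linarith [hξ.2])
  rw [hs, le_div_iff₀ (by linarith)] at this
  linarith

lemma vint_re {k : ℂ → ℂ} {L x : ℝ} (hk : ContinuousOn k (HP L)) (hx : x < L) :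
    (vint k x).re = ∫ y in (-Real.pi)..Real.pi, (k (x + y * Complex.I)).re := by
  unfold vint
  have := Complex.reCLM.intervalIntegral_comp_comm (μ := volume) (a := -Real.pi) (b := Real.pi) ((vline_cont hk hx).intervalIntegrable _ _)
  simpa using this.symm

section
variable {G H : ℂ → ℂ} {L c ε : ℝ}

noncomputable def Sg (G : ℂ → ℂ) (ε : ℝ) (w : ℂ) : ℂ := G w * cj (G w) + ε

lemma Sg_eq (w : ℂ) : Sg G ε w = ((‖G w‖^2 + ε : ℝ) : ℂ) := by
  unfold Sg; rw [Complex.mul_conj']; push_cast; ring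

lemma Sg_hasD {G' w : ℂ} (hG : HasDerivAt G G' w) : HasD (Sg G ε) (G' * cj (G w)) (G w * cj G') w := by
  have h1 := HasD.holo hG
  have h2 := (h1.mul h1.conj).add (HasD.holo (hasDerivAt_const w (ε:ℂ)))
  refine h2.congr ?_ ?_ <;> simp

lemma Sg_pow_hasD {G' w : ℂ} (hε : 0 < ε) (c : ℂ) (hG : HasDerivAt G G' w) :
    HasD (fun w => Sg G ε w ^ c) (c * Sg G ε w ^ (c-1) * (G' * cj (G w))) (c * Sg G ε w ^ (c-1) * (G w * cj G')) w := by
  have h1 : HasDerivAt (fun s : ℂ => s ^ c) (c * Sg G ε w ^ (c-1)) (Sg G ε w) := by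
    have : Sg G ε w ∈ Complex.slitPlane := by
      rw [Sg_eq]; rw [Complex.ofReal_mem_slitPlane]; positivity
    simpa using (hasDerivAt_id (Sg G ε w)).cpow_const (c := c) this
  exact (Sg_hasD hG).outer h1

theorem mono_eps (hG : DifferentiableOn ℂ G (HP L)) (hH : DifferentiableOn ℂ H (HP L))
    (pG : ∀ w, G (w + 2 * Real.pi * Complex.I) = G w) (pH : ∀ w, H (w + 2 * Real.pi * Complex.I) = H w)
    (hc : 0 ≤ c) (hε : 0 < ε)
    (bG : ∀ x < L, ∃ C, ∀ w : ℂ, w.re ≤ x → ‖G w‖ ≤ C) (bH : ∀ x < L, ∃ C, ∀ w : ℂ, w.re ≤ x → ‖H w‖ ≤ C)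
    {x₁ x₂ : ℝ} (h12 : x₁ ≤ x₂) (h2 : x₂ < L) :
    ∫ y in (-Real.pi)..Real.pi, (‖G (x₁ + y * Complex.I)‖^2 + ε)^c * ‖H (x₁ + y * Complex.I)‖^2 ≤
    ∫ y in (-Real.pi)..Real.pi, (‖G (x₂ + y * Complex.I)‖^2 + ε)^c * ‖H (x₂ + y * Complex.I)‖^2 := by
  have op := HP_open L
  have dG : ∀ w ∈ HP L, HasDerivAt G (deriv G w) w := fun w hw => (hG.differentiableAt (op.mem_nhds hw)).hasDerivAt
  have dH : ∀ w ∈ HP L, HasDerivAt H (deriv H w) w := fun w hw => (hH.differentiableAt (op.mem_nhds hw)).hasDerivAt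
  have hG' : DifferentiableOn ℂ (deriv G) (HP L) := hG.deriv op
  have hH' : DifferentiableOn ℂ (deriv H) (HP L) := hH.deriv op
  have ddG : ∀ w ∈ HP L, HasDerivAt (deriv G) (deriv (deriv G) w) w := fun w hw => (hG'.differentiableAt (op.mem_nhds hw)).hasDerivAt
  have ddH : ∀ w ∈ HP L, HasDerivAt (deriv H) (deriv (deriv H) w) w := fun w hw => (hH'.differentiableAt (op.mem_nhds hw)).hasDerivAt
  let S : ℂ → ℂ := Sg G ε
  let k : ℂ → ℂ := fun w => S w ^ (c:ℂ) * (H w * cj (H w))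
  let Φ : ℂ → ℂ := fun w => (c * (S w ^ ((c:ℂ)-1) * ((deriv G w * cj (G w)) * (H w * cj (H w))))) + S w ^ (c:ℂ) * (deriv H w * cj (H w))
  have hk : ∀ w ∈ HP L, HasD k (Φ w) (cj (Φ w)) w := by
    intro w hw
    have h1 := HasD.holo (dH w hw)
    have h3 := (Sg_pow_hasD hε (c:ℂ) (dG w hw)).mul (h1.mul h1.conj)
    have er : ∀ c : ℝ, cj (S w ^ (c:ℂ)) = S w ^ (c:ℂ) := by
      intro c
      simp only [S, Sg_eq]
      rw [← Complex.ofReal_cpow (by positivity), Complex.conj_ofReal]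
    have er1 : cj (S w ^ ((c:ℂ)-1)) = S w ^ ((c:ℂ)-1) := by
      have := er (c-1); push_cast at this; exact this
    refine h3.congr ?_ ?_
    · simp only [Φ, S, zero_mul, mul_zero, map_zero, add_zero]; ring
    · simp only [Φ, map_add, map_mul, er, er1, Complex.conj_conj, Complex.conj_ofReal]
      simp only [S, zero_mul, mul_zero, zero_add]; ring
  let b2 : ℂ → ℂ := fun w => (((‖G w‖^2 + ε)^(c-2) * (Complex.normSq (c * deriv G w * cj (G w) * H w + S w * deriv H w) + c * ε * Complex.normSq (deriv G w * H w)) : ℝ) : ℂ)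
  have hΦ : ∀ w ∈ HP L, ∃ a, HasD Φ a (b2 w) w := by
    intro w hw
    have h1 := HasD.holo (dH w hw)
    have g1 := HasD.holo (dG w hw)
    have h1' := HasD.holo (ddH w hw)
    have g1' := HasD.holo (ddG w hw)
    have A := ((Sg_pow_hasD hε ((c:ℂ)-1) (dG w hw)).mul ((g1'.mul g1.conj).mul (h1.mul h1.conj)))
    have B := (HasD.holo (hasDerivAt_const w (c:ℂ))).mul A
    have D := B.add ((Sg_pow_hasD hε (c:ℂ) (dG w hw)).mul (h1'.mul h1.conj))
    refine ⟨_, D.congr rfl ?_⟩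
    have s0 : Sg G ε w ≠ 0 := by
      rw [Sg_eq]; exact_mod_cast (by positivity : (‖G w‖^2 + ε) ≠ 0)
    set s := Sg G ε w with hs
    have e1 : s ^ ((c:ℂ)-1) = s ^ ((c:ℂ) - 2) * s := by
      have := Complex.cpow_add ((c:ℂ)-2) 1 s0
      rw [Complex.cpow_one] at this; rw [← this]; congr 1; ring
    have e2 : s ^ (c:ℂ) = s ^ ((c:ℂ) - 2) * s * s := by
      have := Complex.cpow_add ((c:ℂ)-1) 1 s0
      rw [Complex.cpow_one] at this; rw [← e1, ← this]; congr 1; ring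
    have e3 : s ^ ((c:ℂ)-1-1) = s ^ ((c:ℂ) - 2) := by congr 1; ring
    have e4 : (((‖G w‖^2 + ε)^(c-2) : ℝ) : ℂ) = s ^ ((c:ℂ) - 2) := by
      rw [hs, Sg_eq, Complex.ofReal_cpow (by positivity)]; push_cast; ring_nf
    have e5 : cj s = s := by rw [hs, Sg_eq, Complex.conj_ofReal]
    have e6 : s = G w * cj (G w) + ε := rfl
    simp only [b2]
    rw [Complex.ofReal_mul, e4]
    simp only [Complex.ofReal_add, Complex.ofReal_mul, Complex.normSq_eq_conj_mul_self, S]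
    rw [← hs]
    simp only [map_add, map_mul, e5, Complex.conj_conj, Complex.conj_ofReal, map_zero, e3]
    rw [e2, e1]
    generalize s ^ ((c:ℂ) - 2) = σ
    rw [e6]; ring
  choose! a2 ha2 using hΦ
  have Φc : ContinuousOn Φ (HP L) := fun w hw => (ha2 w hw).cont.continuousWithinAt
  have kc : ContinuousOn k (HP L) := fun w hw => (hk w hw).cont.continuousWithinAt
  have cΦc : ContinuousOn (fun w => cj (Φ w)) (HP L) := Complex.continuous_conj.comp_continuousOn Φc
  have Gc := hG.continuousOn
  have Hc := hH.continuousOn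
  have G'c := hG'.continuousOn
  have H'c := hH'.continuousOn
  have cjGc : ContinuousOn (fun w => cj (G w)) (HP L) := Complex.continuous_conj.comp_continuousOn Gc
  have Sc : ContinuousOn S (HP L) := (Gc.mul cjGc).add continuousOn_const
  have b2c : ContinuousOn b2 (HP L) := by
    apply Complex.continuous_ofReal.comp_continuousOn
    apply ContinuousOn.mul
    · apply ContinuousOn.rpow_const
      · exact (Gc.norm.pow 2).add continuousOn_const
      · intro w _; left; positivity
    · apply ContinuousOn.add
      · exact Complex.continuous_normSq.comp_continuousOn ((((continuousOn_const.mul G'c).mul cjGc).mul Hc).add (Sc.mul H'c))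
      · exact continuousOn_const.mul (Complex.continuous_normSq.comp_continuousOn (G'c.mul Hc))
  have pw : ∀ x : ℝ, (x:ℂ) + Real.pi * Complex.I = (x + (-Real.pi:ℝ) * Complex.I) + 2 * Real.pi * Complex.I := by
    intro x; push_cast; ring
  have pG' : ∀ w, deriv G (w + 2 * Real.pi * Complex.I) = deriv G w := by
    intro w
    rw [← deriv_comp_add_const]; congr 1; ext w; exact pG w
  have pH' : ∀ w, deriv H (w + 2 * Real.pi * Complex.I) = deriv H w := by
    intro w
    rw [← deriv_comp_add_const]; congr 1; ext w; exact pH w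
  have per : ∀ x : ℝ, Φ (x + (-Real.pi:ℝ) * Complex.I) = Φ (x + Real.pi * Complex.I) := by
    intro x
    rw [pw x]
    simp only [Φ, S, Sg, pG, pH, pG', pH']
  have pp := Real.pi_pos
  have b2n : ∀ w, 0 ≤ (b2 w).re := by
    intro w
    simp only [b2, Complex.ofReal_re]
    have := Complex.normSq_nonneg (c * deriv G w * cj (G w) * H w + S w * deriv H w)
    have := Complex.normSq_nonneg (deriv G w * H w)
    positivity
  have kre : ∀ w, (k w).re = (‖G w‖^2 + ε)^c * ‖H w‖^2 := by
    intro w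
    simp only [k, S, Sg_eq, Complex.mul_conj']
    rw [← Complex.ofReal_cpow (by positivity)]
    norm_cast
  have fe : ∀ x < L, (vint k x).re = ∫ y in (-Real.pi)..Real.pi, (‖G (x + y * Complex.I)‖^2 + ε)^c * ‖H (x + y * Complex.I)‖^2 := by
    intro x hx
    rw [vint_re kc hx]; simp only [kre]
  rw [← fe x₁ (by linarith), ← fe x₂ h2]
  apply mono_of_bdd (f := fun x => (vint k x).re) (f' := fun x => (vint (fun w => Φ w + cj (Φ w)) x).re) (L := L) _ _ _ h12 h2
  · intro x hx
    have := vint_deriv hx hk Φc cΦc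
    exact Complex.reCLM.hasFDerivAt.comp_hasDerivAt x this
  · intro x y hxy hy
    have e : ∀ x < L, (vint (fun w => Φ w + cj (Φ w)) x).re = 2 * (vint Φ x).re := by
      intro x hx
      have hs : ContinuousOn (fun w => Φ w + cj (Φ w)) (HP L) := Φc.add cΦc
      rw [vint_re hs hx, vint_re Φc hx, ← intervalIntegral.integral_const_mul]
      congr 1; ext y; simp; ring
    simp only [e x (by linarith), e y hy]
    have R := vint_rect hxy hy ha2 b2c per
    have R2 : 0 ≤ (∫ t in x..y, vint b2 t).re := by
      have hint : IntervalIntegrable (vint b2) volume x y := by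
        apply ContinuousOn.intervalIntegrable
        rw [Set.uIcc_of_le hxy]
        exact (vint_cont b2c).mono (fun t ht => lt_of_le_of_lt ht.2 hy)
      have := Complex.reCLM.intervalIntegral_comp_comm hint
      simp only [Complex.reCLM_apply] at this
      rw [← this]
      apply intervalIntegral.integral_nonneg hxy
      intro t ht
      rw [vint_re b2c (lt_of_le_of_lt ht.2 hy)]
      apply intervalIntegral.integral_nonneg (by linarith)
      intro s _; exact b2n _
    have R3 := congrArg Complex.re R
    simp at R3
    linarith
  · intro x hx
    obtain ⟨C1, h1⟩ := bG x hx
    obtain ⟨C2, h3⟩ := bH x hx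
    refine ⟨((C1^2+ε)^c * C2^2) * |Real.pi - (-Real.pi)|, fun y hy => ?_⟩
    rw [fe y (by linarith), ← Real.norm_eq_abs]
    apply intervalIntegral.norm_integral_le_of_norm_le_const
    intro t _
    rw [Real.norm_of_nonneg (by positivity)]
    have a1 := h1 (y + t * Complex.I) (by simpa using hy)
    have a2 := h3 (y + t * Complex.I) (by simpa using hy)
    gcongr

theorem mono_zero (hG : DifferentiableOn ℂ G (HP L)) (hH : DifferentiableOn ℂ H (HP L))
    (pG : ∀ w, G (w + 2 * Real.pi * Complex.I) = G w) (pH : ∀ w, H (w + 2 * Real.pi * Complex.I) = H w)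
    (hc : 0 ≤ c)
    (bG : ∀ x < L, ∃ C, ∀ w : ℂ, w.re ≤ x → ‖G w‖ ≤ C) (bH : ∀ x < L, ∃ C, ∀ w : ℂ, w.re ≤ x → ‖H w‖ ≤ C)
    {x₁ x₂ : ℝ} (h12 : x₁ ≤ x₂) (h2 : x₂ < L) :
    ∫ y in (-Real.pi)..Real.pi, ‖G (x₁ + y * Complex.I)‖^(2*c) * ‖H (x₁ + y * Complex.I)‖^2 ≤
    ∫ y in (-Real.pi)..Real.pi, ‖G (x₂ + y * Complex.I)‖^(2*c) * ‖H (x₂ + y * Complex.I)‖^2 := by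
  have e : ∀ x y : ℝ, ‖G (x + y * Complex.I)‖^(2*c) = (‖G (x + y * Complex.I)‖^2 + |0|)^c := by
    intro x y
    rw [Real.rpow_mul (norm_nonneg _)]; simp
  simp only [e]
  have cont : ∀ x < L, Continuous (fun ε : ℝ => ∫ y in (-Real.pi)..Real.pi, (‖G (x + y * Complex.I)‖^2 + |ε|)^c * ‖H (x + y * Complex.I)‖^2) := by
    intro x hx
    apply intervalIntegral.continuous_parametric_intervalIntegral_of_continuous'
    have g := (vline_cont hG.continuousOn hx).comp continuous_snd (X := ℝ × ℝ)
    have h := (vline_cont hH.continuousOn hx).comp continuous_snd (X := ℝ × ℝ)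
    apply Continuous.mul
    · apply Continuous.rpow_const
      · exact (g.norm.pow 2).add (continuous_abs.comp continuous_fst)
      · intro _; right; exact hc
    · exact h.norm.pow 2
  have l1 := ((cont x₁ (by linarith)).tendsto 0).mono_left (nhdsWithin_le_nhds (s := Set.Ioi 0))
  have l2 := ((cont x₂ h2).tendsto 0).mono_left (nhdsWithin_le_nhds (s := Set.Ioi 0))
  apply le_of_tendsto_of_tendsto l1 l2
  filter_upwards [self_mem_nhdsWithin] with ε hε
  have hε : 0 < ε := hε
  rw [abs_of_pos hε]
  exact mono_eps hG hH pG pH hc hε bG bH h12 h2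
end

lemma HasD.inner {g G : ℂ → ℂ} {a b G' z : ℂ} (hg : HasD g a b (G z)) (hG : HasDerivAt G G' z) :
    HasD (fun z => g (G z)) (a * G') (b * cj G') z := by
  unfold HasD at *
  have := hg.comp z (hG.hasFDerivAt.restrictScalars ℝ)
  refine this.congr_fderiv ?_
  refine ContinuousLinearMap.ext fun v => ?_
  simp only [ContinuousLinearMap.comp_apply, Dm_apply]
  simp; ring

lemma npow_hasD {s : ℝ} {ζ : ℂ} (hζ : ζ ≠ 0) :
    HasD (fun ζ => ((‖ζ‖^s : ℝ) : ℂ)) ((s/2 : ℝ) * (‖ζ‖^(s-2) : ℝ) * cj ζ) ((s/2 : ℝ) * (‖ζ‖^(s-2) : ℝ) * ζ) ζ := by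
  have n0 : 0 < ‖ζ‖ := norm_pos_iff.2 hζ
  have h1 := HasD.holo (hasDerivAt_id ζ)
  have h2 := h1.mul h1.conj
  have e : id ζ * cj (id ζ) = ((‖ζ‖^2 : ℝ) : ℂ) := by simp [Complex.mul_conj']
  have h3 : HasDerivAt (fun t : ℂ => t ^ ((s/2 : ℝ) : ℂ)) (((s/2 : ℝ) : ℂ) * (id ζ * cj (id ζ)) ^ (((s/2 : ℝ) : ℂ)-1)) (id ζ * cj (id ζ)) := by
    have : id ζ * cj (id ζ) ∈ Complex.slitPlane := by
      rw [e, Complex.ofReal_mem_slitPlane]; positivity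
    simpa using (hasDerivAt_id (id ζ * cj (id ζ))).cpow_const (c := ((s/2 : ℝ) : ℂ)) this
  have h4 := h2.outer h3
  have e2 : (id ζ * cj (id ζ)) ^ (((s/2 : ℝ) : ℂ)-1) = (‖ζ‖^(s-2) : ℝ) := by
    rw [e, ← Complex.ofReal_one, ← Complex.ofReal_sub, ← Complex.ofReal_cpow (by positivity)]
    congr 1
    rw [← Real.rpow_natCast, ← Real.rpow_mul n0.le]; congr 1; push_cast; ring
  have h5 : (fun ζ : ℂ => ((‖ζ‖^s : ℝ) : ℂ)) = fun ζ => (id ζ * cj (id ζ)) ^ ((s/2 : ℝ) : ℂ) := by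
    ext ζ
    have e : id ζ * cj (id ζ) = ((‖ζ‖^2 : ℝ) : ℂ) := by simp [Complex.mul_conj']
    rw [e, ← Complex.ofReal_cpow (by positivity)]
    congr 1
    rw [← Real.rpow_natCast, ← Real.rpow_mul (norm_nonneg _)]; congr 1; push_cast; ring
  rw [h5]
  refine h4.congr ?_ ?_ <;> rw [e2] <;> simp

lemma hasD_zero_of_bound {f : ℂ → ℂ} {s : ℝ} (hs : 1 < s) (hf : ∀ ζ, ‖f ζ‖ ≤ ‖ζ‖^s) : HasD f 0 0 0 := by
  unfold HasD
  have f0 : f 0 = 0 := by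
    have := hf 0
    rw [norm_zero, Real.zero_rpow (by linarith)] at this
    exact norm_le_zero_iff.1 this
  have e : Dm 0 0 = 0 := by ext <;> simp [Dm_apply]
  rw [e, hasFDerivAt_iff_isLittleO_nhds_zero]
  simp only [zero_add, f0, sub_zero, zero_apply]
  rw [Asymptotics.isLittleO_iff]
  intro c hc
  have : Filter.Tendsto (fun ζ : ℂ => ‖ζ‖^(s-1)) (nhds 0) (nhds 0) := by
    have h : Continuous (fun ζ : ℂ => ‖ζ‖^(s-1)) := continuous_norm.rpow_const (fun _ => Or.inr (by linarith))
    have := h.tendsto 0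
    rwa [norm_zero, Real.zero_rpow (by linarith)] at this
  filter_upwards [this.eventually (gt_mem_nhds hc)] with ζ hζ
  refine (hf ζ).trans ?_
  rcases eq_or_ne ζ 0 with rfl | h
  · rw [norm_zero, Real.zero_rpow (by linarith)]; simp
  · have n0 : 0 < ‖ζ‖ := norm_pos_iff.2 h
    have : ‖ζ‖^s = ‖ζ‖^(s-1) * ‖ζ‖ := by rw [← Real.rpow_add_one n0.ne']; congr 1; ring
    rw [this]; gcongr

lemma npow_hasD' {s : ℝ} (hs : 1 < s) (ζ : ℂ) :
    HasD (fun ζ => ((‖ζ‖^s : ℝ) : ℂ)) ((s/2 : ℝ) * (‖ζ‖^(s-2) : ℝ) * cj ζ) ((s/2 : ℝ) * (‖ζ‖^(s-2) : ℝ) * ζ) ζ := by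
  rcases eq_or_ne ζ 0 with rfl | h
  · refine (hasD_zero_of_bound hs ?_).congr ?_ ?_
    · intro ζ; rw [Complex.norm_real, Real.norm_of_nonneg (by positivity)]
    · simp
    · simp
  · exact npow_hasD h

lemma g_hasD {q : ℝ} (hq : 2 ≤ q) (ζ : ℂ) :
    ∃ a, HasD (fun ζ => ((‖ζ‖^(q-2) : ℝ) : ℂ) * cj ζ) a ((q/2 * ‖ζ‖^(q-2) : ℝ) : ℂ) ζ := by
  rcases eq_or_ne ζ 0 with rfl | h
  · rcases hq.eq_or_lt with rfl | hlt
    · refine ⟨0, ?_⟩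
      have := (HasD.holo (hasDerivAt_id (0:ℂ))).conj
      simpa using this
    · refine ⟨0, (hasD_zero_of_bound (s := q-1) (by linarith) ?_).congr rfl ?_⟩
      · intro ζ
        rw [norm_mul, Complex.norm_real, Real.norm_of_nonneg (by positivity), RCLike.norm_conj]
        rcases eq_or_ne ζ 0 with rfl | h
        · simp; positivity
        · rw [← Real.rpow_add_one (norm_ne_zero_iff.2 h)]; apply le_of_eq; congr 1; ring
      · rw [norm_zero, Real.zero_rpow (by linarith)]; simp
  · have n0 : 0 < ‖ζ‖ := norm_pos_iff.2 h
    refine ⟨_, ((npow_hasD (s := q-2) h).mul (HasD.holo (hasDerivAt_id ζ)).conj).congr rfl ?_⟩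
    have e : ‖ζ‖^(q-2) = ‖ζ‖^(q-2-2) * ‖ζ‖^2 := by
      rw [← Real.rpow_natCast, ← Real.rpow_add n0]; congr 1; push_cast; ring
    have e2 : ζ * cj ζ = ((‖ζ‖^2 : ℝ) : ℂ) := by simp [Complex.mul_conj']
    simp only [id, map_one, mul_one]
    rw [mul_assoc _ ζ, e2, e]
    push_cast; ring

section
variable {F : ℂ → ℂ} {R q : ℝ}

lemma exp_mem (hR : 0 < R) {w : ℂ} (hw : w ∈ HP (Real.log R)) : Complex.exp w ∈ ball (0:ℂ) R := by
  rw [mem_ball_zero_iff, Complex.norm_exp]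
  have : w.re < Real.log R := hw
  calc Real.exp w.re < Real.exp (Real.log R) := Real.exp_lt_exp.2 this
    _ = R := Real.exp_log hR

lemma E_hasDeriv (hR : 0 < R) (hF : DifferentiableOn ℂ F (ball 0 R)) {w : ℂ} (hw : w ∈ HP (Real.log R)) :
    HasDerivAt (fun w => F (Complex.exp w)) (deriv F (Complex.exp w) * Complex.exp w) w := by
  have h1 := (hF.differentiableAt (isOpen_ball.mem_nhds (exp_mem hR hw))).hasDerivAt
  exact h1.comp w (Complex.hasDerivAt_exp w)

lemma E_diff (hR : 0 < R) (hF : DifferentiableOn ℂ F (ball 0 R)) :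
    DifferentiableOn ℂ (fun w => F (Complex.exp w)) (HP (Real.log R)) :=
  fun _ hw => (E_hasDeriv hR hF hw).differentiableAt.differentiableWithinAt

lemma E_per (F : ℂ → ℂ) (w : ℂ) : F (Complex.exp (w + 2 * Real.pi * Complex.I)) = F (Complex.exp w) := by
  rw [Complex.exp_periodic w]

lemma E_bdd (hR : 0 < R) (hF : DifferentiableOn ℂ F (ball 0 R)) : ∀ x < Real.log R, ∃ C, ∀ w : ℂ, w.re ≤ x → ‖F (Complex.exp w)‖ ≤ C := by
  intro x hx
  have h1 : closedBall (0:ℂ) (Real.exp x) ⊆ ball 0 R := by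
    apply closedBall_subset_ball
    calc Real.exp x < Real.exp (Real.log R) := Real.exp_lt_exp.2 hx
      _ = R := Real.exp_log hR
  obtain ⟨C, hC⟩ := (isCompact_closedBall (0:ℂ) (Real.exp x)).exists_bound_of_continuousOn (hF.continuousOn.mono h1)
  refine ⟨C, fun w hw => hC _ ?_⟩
  rw [mem_closedBall_zero_iff, Complex.norm_exp]
  exact Real.exp_le_exp.2 hw

lemma pt_exp (x y : ℝ) : pt (Real.exp x) y = Complex.exp (x + y * Complex.I) := by
  rw [pt_eq, Complex.exp_add]; simp

lemma circ_mono (hF : DifferentiableOn ℂ F (ball 0 R)) {s : ℝ} (hs : 0 ≤ s) {r₁ r₂ : ℝ} (h0 : 0 < r₁) (h12 : r₁ ≤ r₂) (h2 : r₂ < R) :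
    ∫ y in (-Real.pi)..Real.pi, ‖F (pt r₁ y)‖^s ≤ ∫ y in (-Real.pi)..Real.pi, ‖F (pt r₂ y)‖^s := by
  have r2 : 0 < r₂ := by linarith
  have hR : 0 < R := by linarith
  have := mono_zero (c := s/2) (E_diff hR hF) (H := fun _ : ℂ => (1:ℂ)) (differentiableOn_const _) (E_per F) (fun _ => rfl) (by positivity)
    (E_bdd hR hF) (fun x hx => ⟨1, fun w _ => by simp⟩) (Real.log_le_log h0 h12) (Real.log_lt_log r2 h2)
  simp only [← pt_exp, Real.exp_log h0, Real.exp_log r2] at this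
  have e : 2 * (s/2) = s := by ring
  simpa [e] using this

theorem key_n (hR : 0 < R) (hF : DifferentiableOn ℂ F (ball 0 R)) (hq : 2 ≤ q) :
    ∃ J : ℝ → ℝ, (∀ x < Real.log R, HasDerivAt (fun x : ℝ => ∫ y in (-Real.pi)..Real.pi, ‖F (Complex.exp (x + y * Complex.I))‖^q) (2 * J x) x) ∧
      (∀ x < Real.log R, 0 ≤ J x) ∧ ∀ x y, x ≤ y → y < Real.log R → J x * Real.exp (-(2*x)) ≤ J y * Real.exp (-(2*y)) := by
  set L := Real.log R with hL
  let G : ℂ → ℂ := fun w => F (Complex.exp w)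
  let G' : ℂ → ℂ := fun w => deriv F (Complex.exp w) * Complex.exp w
  have hF' : DifferentiableOn ℂ (deriv F) (ball 0 R) := hF.deriv isOpen_ball
  have dG : ∀ w ∈ HP L, HasDerivAt G (G' w) w := fun w hw => E_hasDeriv hR hF hw
  have dG' : ∀ w ∈ HP L, ∃ G'', HasDerivAt G' G'' w := fun w hw => ⟨_, (E_hasDeriv hR hF' hw).mul (Complex.hasDerivAt_exp w)⟩
  let k : ℂ → ℂ := fun w => ((‖G w‖^q : ℝ) : ℂ)
  let Φ : ℂ → ℂ := fun w => ((q/2 : ℝ) : ℂ) * ((((‖G w‖^(q-2) : ℝ) : ℂ) * cj (G w)) * G' w)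
  let b2 : ℂ → ℂ := fun w => (((q/2)^2 * (‖G w‖^(q-2) * ‖G' w‖^2) : ℝ) : ℂ)
  have hk : ∀ w ∈ HP L, HasD k (Φ w) (cj (Φ w)) w := by
    intro w hw
    refine (HasD.inner (npow_hasD' (by linarith) (G w)) (dG w hw)).congr ?_ ?_
    · simp only [Φ]; ring
    · simp only [Φ, map_mul, Complex.conj_ofReal, Complex.conj_conj]; ring
  have hΦ : ∀ w ∈ HP L, ∃ a, HasD Φ a (b2 w) w := by
    intro w hw
    obtain ⟨a, ha⟩ := g_hasD hq (G w)
    obtain ⟨G'', h2⟩ := dG' w hw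
    refine ⟨_, ((HasD.holo (hasDerivAt_const w ((q/2 : ℝ) : ℂ))).mul ((ha.inner (dG w hw)).mul (HasD.holo h2))).congr rfl ?_⟩
    simp only [b2]
    have e : cj (G' w) * G' w = ((‖G' w‖^2 : ℝ) : ℂ) := by rw [mul_comm]; simp [Complex.mul_conj']
    rw [mul_assoc _ (cj (G' w)), e]
    push_cast; ring
  choose! a2 ha2 using hΦ
  have Φc : ContinuousOn Φ (HP L) := fun w hw => (ha2 w hw).cont.continuousWithinAt
  have kc : ContinuousOn k (HP L) := fun w hw => (hk w hw).cont.continuousWithinAt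
  have cΦc : ContinuousOn (fun w => cj (Φ w)) (HP L) := Complex.continuous_conj.comp_continuousOn Φc
  have Gc : ContinuousOn G (HP L) := fun w hw => (dG w hw).continuousAt.continuousWithinAt
  have G'c : ContinuousOn G' (HP L) := fun w hw => (dG' w hw).choose_spec.continuousAt.continuousWithinAt
  have b2c : ContinuousOn b2 (HP L) := by
    apply Complex.continuous_ofReal.comp_continuousOn
    exact continuousOn_const.mul ((Gc.norm.rpow_const (fun _ _ => Or.inr (by linarith))).mul (G'c.norm.pow 2))
  have pw : ∀ x : ℝ, (x:ℂ) + Real.pi * Complex.I = (x + (-Real.pi:ℝ) * Complex.I) + 2 * Real.pi * Complex.I := by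
    intro x; push_cast; ring
  have per : ∀ x : ℝ, Φ (x + (-Real.pi:ℝ) * Complex.I) = Φ (x + Real.pi * Complex.I) := by
    intro x
    rw [pw x]
    have : ∀ w, Complex.exp (w + 2 * Real.pi * Complex.I) = Complex.exp w := fun w => Complex.exp_periodic w
    simp only [Φ, G, G', this]
  have pp := Real.pi_pos
  let κ : ℝ → ℝ := fun x => (q/2)^2 * ∫ y in (-Real.pi)..Real.pi, ‖F (Complex.exp (x + y * Complex.I))‖^(2*((q-2)/2)) * ‖deriv F (Complex.exp (x + y * Complex.I))‖^2
  have κm : ∀ x y, x ≤ y → y < L → κ x ≤ κ y := by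
    intro x y hxy hy
    have := mono_zero (c := (q-2)/2) (E_diff hR hF) (E_diff hR hF') (E_per F) (E_per (deriv F)) (by linarith) (E_bdd hR hF) (E_bdd hR hF') hxy hy
    simp only [κ]
    gcongr
  have κ0 : ∀ x, 0 ≤ κ x := by
    intro x
    apply mul_nonneg (by positivity)
    apply intervalIntegral.integral_nonneg (by linarith)
    intro y _; positivity
  have vb : ∀ x < L, (vint b2 x).re = Real.exp (2*x) * κ x := by
    intro x hx
    rw [vint_re b2c hx]
    simp only [κ]
    rw [← mul_assoc, ← intervalIntegral.integral_const_mul]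
    congr 1; ext y
    simp only [b2, Complex.ofReal_re, G, G', norm_mul, Complex.norm_exp]
    have e1 : ((x:ℂ) + y * Complex.I).re = x := by simp
    have e2 : 2 * ((q-2)/2) = q - 2 := by ring
    rw [e1, e2, two_mul x, Real.exp_add]; ring
  let J : ℝ → ℝ := fun x => (vint Φ x).re
  have JJ : ∀ x y, x ≤ y → y < L → J y - J x = ∫ t in x..y, 2 * Real.exp (2*t) * κ t := by
    intro x y hxy hy
    have R := vint_rect hxy hy ha2 b2c per
    have hint : IntervalIntegrable (vint b2) volume x y := by
      apply ContinuousOn.intervalIntegrable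
      rw [Set.uIcc_of_le hxy]
      exact (vint_cont b2c).mono (fun t ht => lt_of_le_of_lt ht.2 hy)
    have h1 := Complex.reCLM.intervalIntegral_comp_comm hint
    simp only [Complex.reCLM_apply] at h1
    have R3 := congrArg Complex.re R
    simp only [Complex.sub_re, Complex.mul_re, Complex.re_ofNat, Complex.im_ofNat, zero_mul, sub_zero] at R3
    simp only [J]
    rw [R3, ← h1, ← intervalIntegral.integral_const_mul]
    apply intervalIntegral.integral_congr
    intro t ht
    rw [Set.uIcc_of_le hxy] at ht
    simp only
    rw [vb t (lt_of_le_of_lt ht.2 hy)]; ring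
  have κint : ∀ x y, x ≤ y → y < L → IntervalIntegrable (fun t => 2 * Real.exp (2*t) * κ t) volume x y := by
    intro x y hxy hy
    have : ContinuousOn (fun t => 2 * (vint b2 t).re) (Set.Icc x y) :=
      continuousOn_const.mul (Complex.continuous_re.comp_continuousOn ((vint_cont b2c).mono (fun t ht => lt_of_le_of_lt ht.2 hy)))
    apply ContinuousOn.intervalIntegrable
    rw [Set.uIcc_of_le hxy]
    refine this.congr ?_
    intro t ht
    simp only
    rw [vb t (lt_of_le_of_lt ht.2 hy)]; ring
  have ei : ∀ x y c : ℝ, ∫ t in x..y, 2 * Real.exp (2*t) * c = c * (Real.exp (2*y) - Real.exp (2*x)) := by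
    intro x y c
    have : ∀ t ∈ Set.uIcc x y, HasDerivAt (fun t : ℝ => Real.exp (2*t) * c) (2 * Real.exp (2*t) * c) t := by
      intro t _
      have h1 : HasDerivAt (fun t : ℝ => 2 * t) 2 t := by simpa using (hasDerivAt_id t).const_mul 2
      have := (h1.exp).mul_const c
      rwa [mul_comm (Real.exp _) 2] at this
    rw [intervalIntegral.integral_eq_sub_of_hasDerivAt this ((by fun_prop : Continuous fun t : ℝ => 2 * Real.exp (2*t) * c).intervalIntegrable _ _)]
    ring
  have lo : ∀ x y, x ≤ y → y < L → κ x * (Real.exp (2*y) - Real.exp (2*x)) ≤ J y - J x := by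
    intro x y hxy hy
    rw [JJ x y hxy hy, ← ei]
    apply intervalIntegral.integral_mono_on hxy ((by fun_prop : Continuous fun t : ℝ => 2 * Real.exp (2*t) * κ x).intervalIntegrable _ _) (κint x y hxy hy)
    intro t ht
    have := κm x t ht.1 (lt_of_le_of_lt ht.2 hy)
    gcongr
  have hi : ∀ x y, x ≤ y → y < L → J y - J x ≤ κ y * (Real.exp (2*y) - Real.exp (2*x)) := by
    intro x y hxy hy
    rw [JJ x y hxy hy, ← ei]
    apply intervalIntegral.integral_mono_on hxy (κint x y hxy hy) ((by fun_prop : Continuous fun t : ℝ => 2 * Real.exp (2*t) * κ y).intervalIntegrable _ _)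
    intro t ht
    have := κm t y ht.2 hy
    gcongr
  have J0 : Filter.Tendsto J Filter.atBot (nhds 0) := by
    obtain ⟨C1, h1⟩ := E_bdd hR hF (L-1) (by linarith)
    obtain ⟨C2, h2⟩ := E_bdd hR hF' (L-1) (by linarith)
    have C10 : 0 ≤ C1 := (norm_nonneg _).trans (h1 ((L-1 : ℝ) : ℂ) (by simp))
    have C20 : 0 ≤ C2 := (norm_nonneg _).trans (h2 ((L-1 : ℝ) : ℂ) (by simp))
    have bd : ∀ x ≤ L - 1, ‖J x‖ ≤ (q/2 * (C1^(q-2) * C1 * C2) * |Real.pi - -Real.pi|) * Real.exp x := by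
      intro x hx
      refine (Complex.abs_re_le_norm _).trans ?_
      have : ‖vint Φ x‖ ≤ (q/2 * (C1^(q-2) * C1 * C2) * Real.exp x) * |Real.pi - -Real.pi| := by
        apply intervalIntegral.norm_integral_le_of_norm_le_const
        intro y _
        have a1 := h1 (x + y * Complex.I) (by simpa using hx)
        have a2 := h2 (x + y * Complex.I) (by simpa using hx)
        simp only [Φ, G, G', norm_mul, Complex.norm_real, RCLike.norm_conj, Complex.norm_exp]
        have e1 : ((x:ℂ) + y * Complex.I).re = x := by simp
        rw [e1, Real.norm_of_nonneg (by linarith), Real.norm_of_nonneg (by positivity)]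
        have q0 : 0 ≤ q - 2 := by linarith
        have q2 : 0 ≤ q / 2 := by linarith
        calc _ ≤ q/2 * (C1^(q-2) * C1 * (C2 * Real.exp x)) := by gcongr
          _ = _ := by ring
      linarith
    apply squeeze_zero_norm' (a := fun x => (q/2 * (C1^(q-2) * C1 * C2) * |Real.pi - -Real.pi|) * Real.exp x)
    · filter_upwards [Filter.eventually_le_atBot (L-1)] with x hx using bd x hx
    · have := Real.tendsto_exp_atBot.const_mul (q/2 * (C1^(q-2) * C1 * C2) * |Real.pi - -Real.pi|)
      rwa [mul_zero] at this
  have Jn : ∀ x < L, 0 ≤ J x := by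
    intro x hx
    apply le_of_tendsto J0
    filter_upwards [Filter.eventually_le_atBot x] with t ht
    have := lo t x ht hx
    have h2 : 0 ≤ κ t * (Real.exp (2*x) - Real.exp (2*t)) := mul_nonneg (κ0 t) (sub_nonneg.2 (Real.exp_le_exp.2 (by linarith)))
    linarith
  have Ju : ∀ x < L, J x ≤ κ x * Real.exp (2*x) := by
    intro x hx
    have : Filter.Tendsto (fun t => J t + κ x * Real.exp (2*x)) Filter.atBot (nhds (0 + κ x * Real.exp (2*x))) := J0.add_const _
    rw [zero_add] at this
    apply ge_of_tendsto this
    filter_upwards [Filter.eventually_le_atBot x] with t ht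
    have h1 := hi t x ht hx
    have h2 : 0 ≤ κ x * Real.exp (2*t) := mul_nonneg (κ0 x) (Real.exp_pos _).le
    linarith
  refine ⟨J, ?_, Jn, ?_⟩
  · intro x hx
    have h1 := Complex.reCLM.hasFDerivAt.comp_hasDerivAt x (vint_deriv hx hk Φc cΦc)
    have e : Complex.reCLM (vint (fun w => Φ w + cj (Φ w)) x) = 2 * J x := by
      have hs : ContinuousOn (fun w => Φ w + cj (Φ w)) (HP L) := Φc.add cΦc
      simp only [J, Complex.reCLM_apply]
      rw [vint_re hs hx, vint_re Φc hx, ← intervalIntegral.integral_const_mul]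
      congr 1; ext y; simp; ring
    rw [e] at h1
    refine h1.congr_of_eventuallyEq ?_
    filter_upwards [gt_mem_nhds hx] with t ht
    simp only [Function.comp_apply, Complex.reCLM_apply]
    rw [vint_re kc ht]
    rfl
  · intro x y hxy hy
    have hx : x < L := by linarith
    have h1 := lo x y hxy hy
    have h2 := Ju x hx
    have ex := Real.exp_pos (2*x)
    have ey := Real.exp_pos (2*y)
    rw [Real.exp_neg, Real.exp_neg, ← div_eq_mul_inv, ← div_eq_mul_inv, div_le_div_iff₀ ex ey]
    have h3 : 0 ≤ Real.exp (2*y) - Real.exp (2*x) := sub_nonneg.2 (Real.exp_le_exp.2 (by linarith))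
    have h4 := mul_le_mul_of_nonneg_right h2 h3
    have h5 := mul_le_mul_of_nonneg_right h1 ex.le
    linarith
end

noncomputable def mF (F : ℂ → ℂ) (q s : ℝ) : ℝ := ∫ y in (-Real.pi)..Real.pi, ‖F (pt (Real.sqrt s) y)‖^q

lemma pt_mem {r : ℝ} (h0 : 0 ≤ r) {R : ℝ} (h1 : r < R) (y : ℝ) : pt r y ∈ ball (0:ℂ) R := by
  rw [mem_ball_zero_iff, norm_pt h0]; exact h1

lemma phi_inv {γ r : ℝ} (hγ : 0 < γ) (hr : r ∈ Set.Ioo (0:ℝ) 1) :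
    Real.sqrt (1 - ((1 - r^2)^γ)^(1/γ)) = r := by
  have h0 := hr.1
  have h1 := hr.2
  have : 0 < 1 - r^2 := by nlinarith
  rw [← Real.rpow_mul this.le, mul_one_div_cancel hγ.ne', Real.rpow_one]
  have e : 1 - (1 - r^2) = r^2 := by ring
  rw [e, Real.sqrt_sq h0.le]

lemma phi_image {γ : ℝ} (hγ : 0 < γ) : (fun r : ℝ => (1 - r^2)^γ) '' Set.Ioo (0:ℝ) 1 = Set.Ioo (0:ℝ) 1 := by
  ext u
  constructor
  · rintro ⟨r, ⟨h0, h1⟩, rfl⟩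
    have : 0 < 1 - r^2 := by nlinarith
    exact ⟨Real.rpow_pos_of_pos this _, Real.rpow_lt_one this.le (by nlinarith) hγ⟩
  · rintro ⟨h0, h1⟩
    have a0 : 0 < u^(1/γ) := Real.rpow_pos_of_pos h0 _
    have a1 : u^(1/γ) < 1 := Real.rpow_lt_one h0.le h1 (by positivity)
    refine ⟨Real.sqrt (1 - u^(1/γ)), ⟨Real.sqrt_pos.2 (by linarith), ?_⟩, ?_⟩
    · rw [Real.sqrt_lt' one_pos]; linarith
    · simp only
      rw [Real.sq_sqrt (by linarith)]
      have e : 1 - (1 - u^(1/γ)) = u^(1/γ) := by ring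
      rw [e, ← Real.rpow_mul h0.le, one_div_mul_cancel hγ.ne', Real.rpow_one]

lemma circ_cont {F : ℂ → ℂ} {R q r : ℝ} (hF : ContinuousOn F (ball 0 R)) (hq : 0 ≤ q) (h0 : 0 ≤ r) (h1 : r < R) :
    Continuous (fun y : ℝ => ‖F (pt r y)‖^q) := by
  have h2 : Continuous (fun y : ℝ => pt r y) := pt_cont.comp (by fun_prop : Continuous fun y : ℝ => (r, y))
  have h3 : Continuous (fun y : ℝ => F (pt r y)) := hF.comp_continuous h2 (fun y => pt_mem h0 h1 y)
  exact h3.norm.rpow_const (fun _ => Or.inr hq)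

lemma circ_lint {F : ℂ → ℂ} {R q r : ℝ} (hF : ContinuousOn F (ball 0 R)) (hq : 0 ≤ q) (h0 : 0 ≤ r) (h1 : r < R) :
    ∫⁻ θ in Set.Ioo (-Real.pi) Real.pi, ENNReal.ofReal (‖F (pt r θ)‖^q) = ENNReal.ofReal (∫ y in (-Real.pi)..Real.pi, ‖F (pt r y)‖^q) := by
  have pp := Real.pi_pos
  have hc := circ_cont hF hq h0 h1
  rw [intervalIntegral.integral_of_le (by linarith), integral_Ioc_eq_integral_Ioo,
    ofReal_integral_eq_lintegral_ofReal]
  · exact (hc.integrableOn_Icc (a := -Real.pi) (b := Real.pi)).mono_set Set.Ioo_subset_Icc_self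
  · exact Filter.Eventually.of_forall fun y => by positivity

lemma berg_u {F : ℂ → ℂ} {q γ : ℝ} (hF : ContinuousOn F (ball 0 1)) (hγ : 1 < γ) (hq : 0 ≤ q) :
    ∫⁻ z, ENNReal.ofReal (‖F z‖^q) ∂(bergmanMeasure γ) =
      ENNReal.ofReal (1/(2*Real.pi)) * ∫⁻ u in Set.Ioo (0:ℝ) 1, ENNReal.ofReal (mF F q (1 - u^(1/(γ-1)))) := by
  classical
  have pp := Real.pi_pos
  have g1 : 0 < γ - 1 := by linarith
  let G : ℂ → ℂ := (ball (0:ℂ) 1).piecewise F (fun _ => 0)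
  have hG : Measurable G := hF.measurable_piecewise continuousOn_const measurableSet_ball
  have hGF : ∀ z ∈ ball (0:ℂ) 1, G z = F z := fun z hz => Set.piecewise_eq_of_mem _ _ _ hz
  let h : ℝ → ENNReal := fun r => ENNReal.ofReal ((γ - 1) / Real.pi * (1 - r ^ 2) ^ (γ - 2))
  have hh : Measurable h := by fun_prop
  rw [berg_lint]
  have s1 : ∫⁻ z in ball (0:ℂ) 1, ENNReal.ofReal ((γ - 1) / Real.pi * (1 - ‖z‖ ^ 2) ^ (γ - 2)) * ENNReal.ofReal (‖F z‖^q)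
      = ∫⁻ z in ball (0:ℂ) 1, h ‖z‖ * ENNReal.ofReal (‖G z‖^q) := by
    apply setLIntegral_congr_fun measurableSet_ball
    intro z hz
    simp only [h]
    rw [hGF z hz]
  rw [s1, polar_l (by fun_prop) hh]
  have D : ∀ x ∈ Set.Ioo (0:ℝ) 1, HasDerivWithinAt (fun r : ℝ => (1 - r^2)^(γ-1)) (-(2*(γ-1)) * (x * (1 - x^2)^(γ-1-1))) (Set.Ioo 0 1) x := by
    intro x hx
    have := ((radial_deriv g1 hx).const_mul (-(2*(γ-1)))).hasDerivWithinAt (s := Set.Ioo 0 1)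
    have e : (fun x : ℝ => -(2*(γ-1)) * (-(1 - x^2)^(γ-1) / (2*(γ-1)))) = fun r : ℝ => (1 - r^2)^(γ-1) := by
      ext r; field_simp
    rwa [e] at this
  have inj : Set.InjOn (fun r : ℝ => (1 - r^2)^(γ-1)) (Set.Ioo 0 1) := by
    intro a ha b hb hab
    simp only at hab
    rw [← phi_inv g1 ha, ← phi_inv g1 hb, hab]
  have S := lintegral_image_eq_lintegral_abs_deriv_mul measurableSet_Ioo D inj (fun u => ENNReal.ofReal (mF F q (1 - u^(1/(γ-1)))))
  rw [phi_image g1] at S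
  rw [S, ← lintegral_const_mul' _ _ ENNReal.ofReal_ne_top]
  apply setLIntegral_congr_fun measurableSet_Ioo
  intro r hr
  have h0 := hr.1
  have h1 := hr.2
  have w0 : 0 < 1 - r^2 := by nlinarith
  simp only [mF]
  rw [phi_inv g1 hr, ← circ_lint hF hq h0.le h1, ← mul_assoc]
  have i1 : ∀ θ, G (pt r θ) = F (pt r θ) := fun θ => hGF _ (pt_mem h0.le h1 θ)
  simp only [i1]
  congr 1
  simp only [h]
  rw [← ENNReal.ofReal_mul h0.le, ← ENNReal.ofReal_mul (by positivity)]
  congr 1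
  have e : γ - 1 - 1 = γ - 2 := by ring
  have w1 : 0 < (1 - r^2)^(γ-2) := Real.rpow_pos_of_pos w0 _
  rw [e, neg_mul, abs_neg, abs_of_pos (by positivity)]
  field_simp

lemma mF_mono {F : ℂ → ℂ} {R q s t : ℝ} (hF : DifferentiableOn ℂ F (ball 0 R)) (hq : 0 ≤ q) (h0 : 0 < s) (h1 : s ≤ t) (h2 : Real.sqrt t < R) :
    mF F q s ≤ mF F q t := 
  circ_mono hF hq (Real.sqrt_pos.2 h0) (Real.sqrt_le_sqrt h1) h2

lemma mF_dil (F : ℂ → ℂ) (q : ℝ) {ρ : ℝ} (hρ : 0 ≤ ρ) (s : ℝ) : mF (fun z => F (ρ * z)) q s = mF F q (ρ^2 * s) := by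
  unfold mF
  rw [Real.sqrt_mul (by positivity), Real.sqrt_sq hρ]
  congr 1; ext y
  have : pt (ρ * Real.sqrt s) y = ρ * pt (Real.sqrt s) y := by rw [pt_eq, pt_eq]; push_cast; ring
  rw [this]

lemma u_mem {b u : ℝ} (hb : 0 < b) (hu : u ∈ Set.Ioo (0:ℝ) 1) : 1 - u^b ∈ Set.Ioo (0:ℝ) 1 := by
  have a0 : 0 < u^b := Real.rpow_pos_of_pos hu.1 _
  have a1 : u^b < 1 := Real.rpow_lt_one hu.1.le hu.2 hb
  exact ⟨by linarith, by linarith⟩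

lemma dil_maps {ρ r R : ℝ} (hρ : 0 ≤ ρ) (h : ρ * r ≤ R) (hρ' : 0 < ρ) : ∀ z ∈ ball (0:ℂ) r, (ρ:ℂ) * z ∈ ball (0:ℂ) R := by
  intro z hz
  rw [mem_ball_zero_iff] at hz ⊢
  rw [norm_mul, Complex.norm_real, Real.norm_of_nonneg hρ]
  nlinarith

lemma dil_diff {F : ℂ → ℂ} {ρ r R : ℝ} (hρ : 0 < ρ) (h : ρ * r ≤ R) (hF : DifferentiableOn ℂ F (ball 0 R)) :
    DifferentiableOn ℂ (fun z => F (ρ * z)) (ball 0 r) :=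
  hF.comp (by fun_prop) (dil_maps hρ.le h hρ)

lemma berg_dil {F : ℂ → ℂ} {p α ρ : ℝ} (hF : DifferentiableOn ℂ F (ball 0 1)) (hα : 1 < α) (hp : 0 ≤ p) (hρ : 0 < ρ) (h1 : ρ ≤ 1) :
    ∫⁻ z, ENNReal.ofReal (‖F (ρ * z)‖^p) ∂(bergmanMeasure α) ≤ ∫⁻ z, ENNReal.ofReal (‖F z‖^p) ∂(bergmanMeasure α) := by
  rw [berg_u hF.continuousOn hα hp, berg_u (F := fun z => F (ρ * z)) (dil_diff hρ (by linarith) hF).continuousOn hα hp]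
  refine mul_le_mul_right ?_ _
  apply setLIntegral_mono' measurableSet_Ioo
  intro u hu
  have hs := u_mem (b := 1/(α-1)) (by have : 0 < α - 1 := by linarith
                                      positivity) hu
  apply ENNReal.ofReal_le_ofReal
  rw [mF_dil _ _ hρ.le]
  have := hs.1
  apply mF_mono hF hp (by positivity)
  · have : ρ^2 ≤ 1 := by nlinarith
    nlinarith
  · rw [Real.sqrt_lt' one_pos]; linarith [hs.2]

lemma mF_deriv {F : ℂ → ℂ} {R q : ℝ} (hR : 1 < R) (hF : DifferentiableOn ℂ F (ball 0 R)) (hq : 2 ≤ q) :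
    ∃ N : ℝ → ℝ, (∀ s ∈ Set.Ioo (0:ℝ) 1, HasDerivAt (mF F q) (N s) s) ∧ (∀ s ∈ Set.Ioo (0:ℝ) 1, 0 ≤ N s) ∧ MonotoneOn N (Set.Ioo 0 1) := by
  obtain ⟨J, h1, h2, h3⟩ := key_n (by linarith) hF hq
  have hL : 0 < Real.log R := Real.log_pos hR
  have hlt : ∀ s ∈ Set.Ioo (0:ℝ) 1, 1/2 * Real.log s < Real.log R := by
    intro s hs
    have := Real.log_neg hs.1 hs.2
    linarith
  have he : ∀ s ∈ Set.Ioo (0:ℝ) 1, Real.exp (-(2*(1/2*Real.log s))) = 1/s := by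
    intro s hs
    have : -(2*(1/2*Real.log s)) = - Real.log s := by ring
    rw [this, Real.exp_neg, Real.exp_log hs.1, one_div]
  refine ⟨fun s => J (1/2 * Real.log s) * (1/s), ?_, ?_, ?_⟩
  · intro s hs
    have d1 : HasDerivAt (fun s : ℝ => 1/2 * Real.log s) (1/2 * s⁻¹) s := (Real.hasDerivAt_log hs.1.ne').const_mul _
    have d2 := (h1 _ (hlt s hs)).comp s d1
    have e : 2 * J (1/2 * Real.log s) * (1/2 * s⁻¹) = J (1/2 * Real.log s) * (1/s) := by rw [one_div s]; ring
    rw [e] at d2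
    refine d2.congr_of_eventuallyEq ?_
    filter_upwards [Ioo_mem_nhds hs.1 hs.2] with t ht
    simp only [Function.comp_apply, ← pt_exp, mF]
    have : Real.exp (1/2 * Real.log t) = Real.sqrt t := by
      rw [Real.sqrt_eq_rpow, Real.rpow_def_of_pos ht.1, mul_comm]
    rw [this]
  · intro s hs
    exact mul_nonneg (h2 _ (hlt s hs)) (by have := hs.1; positivity)
  · intro s hs t ht hst
    have := h3 (1/2 * Real.log s) (1/2 * Real.log t) (by have := Real.log_le_log hs.1 hst; linarith) (hlt t ht)
    rwa [he s hs, he t ht] at this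

lemma mF_cont {F : ℂ → ℂ} {R q : ℝ} (hR : 1 < R) (hF : ContinuousOn F (ball 0 R)) (hq : 0 ≤ q) :
    Continuous (fun s => mF F q (min s 1)) := by
  unfold mF
  apply intervalIntegral.continuous_parametric_intervalIntegral_of_continuous _ continuous_const
  have h2 : Continuous (fun x : ℝ × ℝ => pt (Real.sqrt (min x.1 1)) x.2) :=
    pt_cont.comp (by fun_prop : Continuous fun x : ℝ × ℝ => (Real.sqrt (min x.1 1), x.2))
  have h3 : Continuous (fun x : ℝ × ℝ => F (pt (Real.sqrt (min x.1 1)) x.2)) := by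
    refine hF.comp_continuous h2 (fun x => pt_mem (Real.sqrt_nonneg _) ?_ _)
    have : Real.sqrt (min x.1 1) ≤ 1 := by
      rw [Real.sqrt_le_iff]; exact ⟨one_pos.le, by simp⟩
    linarith
  exact h3.norm.rpow_const (fun _ => Or.inr hq)

/-- tangent inequality -/
lemma tang {m N : ℝ → ℝ} (hd : ∀ s ∈ Set.Ioo (0:ℝ) 1, HasDerivAt m (N s) s) (hN : MonotoneOn N (Set.Ioo 0 1))
    {x y s : ℝ} (hx : x ∈ Set.Ioo (0:ℝ) 1) (hy : y ∈ Set.Ioo (0:ℝ) 1) (hs : s ∈ Set.Ioo (0:ℝ) 1)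
    (h : (s ≤ x ∧ x ≤ y) ∨ (y ≤ x ∧ x ≤ s)) : N s * (y - x) ≤ m y - m x := by
  have key : ∀ a ∈ Set.Ioo (0:ℝ) 1, ∀ b ∈ Set.Ioo (0:ℝ) 1, a < b → ∃ ξ ∈ Set.Ioo a b, N ξ = (m b - m a)/(b - a) := by
    intro a ha b hb hab
    apply exists_hasDerivAt_eq_slope m N hab
    · intro t ht
      exact (hd t ⟨by linarith [ha.1, ht.1], by linarith [hb.2, ht.2]⟩).continuousAt.continuousWithinAt
    · intro t ht
      exact hd t ⟨by linarith [ha.1, ht.1], by linarith [hb.2, ht.2]⟩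
  rcases h with ⟨h1, h2⟩ | ⟨h1, h2⟩
  · rcases h2.eq_or_lt with rfl | h2
    · simp
    obtain ⟨ξ, hξ, e⟩ := key x hx y hy h2
    have := hN hs (show ξ ∈ Set.Ioo (0:ℝ) 1 from ⟨by linarith [hx.1, hξ.1], by linarith [hy.2, hξ.2]⟩) (by linarith [hξ.1])
    rw [e, le_div_iff₀ (by linarith)] at this
    exact this
  · rcases h1.eq_or_lt with rfl | h1
    · simp
    obtain ⟨ξ, hξ, e⟩ := key y hy x hx h1
    have := hN (show ξ ∈ Set.Ioo (0:ℝ) 1 from ⟨by linarith [hy.1, hξ.1], by linarith [hx.2, hξ.2]⟩) hs (by linarith [hξ.2])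
    rw [e, div_le_iff₀ (by linarith)] at this
    linarith

/-- the single sign change -/
lemma sgn {c κ : ℝ} (hc : 1 ≤ c) (hκ : 1 < κ) : 
    (∀ v ∈ Set.Ioo (0:ℝ) 1, (1 - v^c)/κ ≤ 1 - v) ∨
    ∃ v0 ∈ Set.Ioo (0:ℝ) 1, (∀ v ∈ Set.Ioo (0:ℝ) 1, v ≤ v0 → (1 - v^c)/κ ≤ 1 - v) ∧
      ∀ v ∈ Set.Ioo (0:ℝ) 1, v0 ≤ v → 1 - v ≤ (1 - v^c)/κ := by
  have k0 : 0 < κ := by linarith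
  let g : ℝ → ℝ := fun v => (1 - v) * κ - (1 - v^c)
  have gpos : ∀ v, 0 ≤ g v → (1 - v^c)/κ ≤ 1 - v := by
    intro v hv; simp only [g] at hv; rw [div_le_iff₀ k0]; linarith
  have gneg : ∀ v, g v ≤ 0 → 1 - v ≤ (1 - v^c)/κ := by
    intro v hv; simp only [g] at hv; rw [le_div_iff₀ k0]; linarith
  have gc : ConvexOn ℝ (Set.Ici 0) g := by
    refine ⟨convex_Ici 0, ?_⟩
    intro x hx y hy a b ha hb hab
    have := (convexOn_rpow hc).2 hx hy ha hb hab
    simp only [smul_eq_mul, g] at this ⊢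
    have e : b = 1 - a := by linarith
    subst e
    nlinarith
  have g1 : g 1 = 0 := by simp [g]
  have g0 : 0 < g 0 := by simp only [g]; rw [Real.zero_rpow (by linarith)]; linarith
  have gcont : Continuous g := by
    have : Continuous (fun v : ℝ => v^c) := Real.continuous_rpow_const (by linarith)
    fun_prop
  by_cases H : ∀ v ∈ Set.Ioo (0:ℝ) 1, 0 ≤ g v
  · exact Or.inl fun v hv => gpos v (H v hv)
  right
  push Not at H
  obtain ⟨v1, hv1, hg⟩ := H
  obtain ⟨v0, hv0, e0⟩ := intermediate_value_Icc' hv1.1.le gcont.continuousOn (show (0:ℝ) ∈ Set.Icc (g v1) (g 0) from ⟨hg.le, g0.le⟩)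
  have p0 : 0 < v0 := by
    rcases hv0.1.eq_or_lt with h | h
    · rw [← h] at e0; linarith
    · exact h
  have p1 : v0 < 1 := lt_of_le_of_lt hv0.2 hv1.2
  have p2 : v0 < v1 := by
    rcases hv0.2.eq_or_lt with h | h
    · rw [h] at e0; linarith
    · exact h
  have cv : ∀ a b d, 0 ≤ a → a < b → b < d → g b * (d - a) ≤ g a * (d - b) + g d * (b - a) := by
    intro a b d ha hab hbd
    have n1 : 0 ≤ (d-b)/(d-a) := div_nonneg (by linarith) (by linarith)
    have n2 : 0 ≤ (b-a)/(d-a) := div_nonneg (by linarith) (by linarith)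
    have n3 : (d-b)/(d-a) + (b-a)/(d-a) = 1 := by
      rw [← add_div, div_eq_one_iff_eq (by linarith)]; ring
    have := gc.2 (show a ∈ Set.Ici 0 from ha) (show d ∈ Set.Ici 0 from (by simp; linarith)) n1 n2 n3
    have hd : d - a ≠ 0 := by linarith
    have e : ((d-b)/(d-a)) • a + ((b-a)/(d-a)) • d = b := by
      simp only [smul_eq_mul]; field_simp; ring
    rw [e] at this
    simp only [smul_eq_mul] at this
    have h2 := mul_le_mul_of_nonneg_right this (show 0 ≤ d - a by linarith)
    have e2 : ((d - b) / (d - a) * g a + (b - a) / (d - a) * g d) * (d - a) = g a * (d - b) + g d * (b - a) := by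
      field_simp
    linarith
  refine ⟨v0, ⟨p0, p1⟩, fun v hv hle => gpos v ?_, fun v hv hle => gneg v ?_⟩
  · rcases hle.eq_or_lt with rfl | hlt
    · exact e0.ge
    have := cv v v0 1 hv.1.le hlt p1
    rw [e0, g1] at this
    by_contra hneg
    push Not at hneg
    nlinarith
  · rcases hle.eq_or_lt with rfl | hlt
    · exact e0.le
    have := cv v0 v 1 p0.le hlt hv.2
    rw [e0, g1] at this
    by_contra hneg
    push Not at hneg
    nlinarith

theorem part4 {F : ℂ → ℂ} {R q α κ : ℝ} (hR : 1 < R) (hF : DifferentiableOn ℂ F (ball 0 R)) (hq : 2 ≤ q) (hα : 1 < α) (hκ : 1 < κ) :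
    ∫⁻ z, ENNReal.ofReal (‖F ((Real.sqrt (1/κ) : ℝ) * z)‖^q) ∂(bergmanMeasure α) ≤ ∫⁻ z, ENNReal.ofReal (‖F z‖^q) ∂(bergmanMeasure (α*κ)) := by
  have k0 : 0 < κ := by linarith
  have q0 : 0 ≤ q := by linarith
  have ki : 1/κ < 1 := by rw [div_lt_one k0]; exact hκ
  have ρ0 : 0 < Real.sqrt (1/κ) := Real.sqrt_pos.2 (by positivity)
  have ρ1 : Real.sqrt (1/κ) ≤ 1 := by rw [Real.sqrt_le_iff]; exact ⟨one_pos.le, by linarith⟩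
  have hβ : 1 < α * κ := by nlinarith
  have hF1 : DifferentiableOn ℂ F (ball 0 1) := hF.mono (ball_subset_ball hR.le)
  rw [berg_u hF1.continuousOn hβ q0, berg_u (F := fun z => F ((Real.sqrt (1/κ) : ℝ) * z)) (dil_diff ρ0 (by linarith) hF1).continuousOn hα q0]
  refine mul_le_mul_right ?_ _
  have a1 : 0 < α - 1 := by linarith
  have b1 : 0 < α * κ - 1 := by linarith
  set a := 1/(α-1) with ha
  set b := 1/(α*κ-1) with hb
  have a0 : 0 < a := by positivity
  have b0 : 0 < b := by positivity
  have hab : b ≤ a := by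
    rw [ha, hb]
    apply one_div_le_one_div_of_le a1; nlinarith
  have hc : 1 ≤ a/b := by rw [le_div_iff₀ b0]; linarith
  obtain ⟨N, d1, d2, d3⟩ := mF_deriv hR hF hq
  have mc := mF_cont hR hF.continuousOn q0
  have ca : Continuous (fun u : ℝ => u^a) := Real.continuous_rpow_const a0.le
  have cb : Continuous (fun u : ℝ => u^b) := Real.continuous_rpow_const b0.le
  let x : ℝ → ℝ := fun u => (1 - u^a)/κ
  let y : ℝ → ℝ := fun u => 1 - u^b
  have xc : Continuous x := by simp only [x]; fun_prop
  have yc : Continuous y := by simp only [y]; fun_prop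
  have m1c : Continuous (fun u => mF F q (min (x u) 1)) := mc.comp xc
  have m2c : Continuous (fun u => mF F q (min (y u) 1)) := mc.comp yc
  have xs : ∀ v, 1 - v ∈ Set.Ioo (0:ℝ) 1 → (1 - v)/κ ∈ Set.Ioo (0:ℝ) 1 := by
    intro v h
    refine ⟨div_pos h.1 k0, ?_⟩
    rw [div_lt_one k0]; linarith [h.2]
  have xm : ∀ u ∈ Set.Ioo (0:ℝ) 1, x u ∈ Set.Ioo (0:ℝ) 1 := fun u hu => xs _ (u_mem a0 hu)
  have ym : ∀ u ∈ Set.Ioo (0:ℝ) 1, y u ∈ Set.Ioo (0:ℝ) 1 := fun u hu => u_mem b0 hu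
  have vm : ∀ u ∈ Set.Ioo (0:ℝ) 1, u^b ∈ Set.Ioo (0:ℝ) 1 := fun u hu => ⟨by linarith [(ym u hu).2], by linarith [(ym u hu).1]⟩
  have vc : ∀ u ∈ Set.Ioo (0:ℝ) 1, (u^b)^(a/b) = u^a := by
    intro u hu
    rw [← Real.rpow_mul hu.1.le, mul_div_cancel₀ _ b0.ne']
  have key : ∃ K, ∀ u ∈ Set.Ioo (0:ℝ) 1, K * (y u - x u) ≤ mF F q (y u) - mF F q (x u) := by
    rcases sgn hc hκ with H | ⟨v0, hv0, H1, H2⟩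
    · refine ⟨0, fun u hu => ?_⟩
      have h := H _ (vm u hu)
      rw [vc u hu] at h
      have hle : x u ≤ y u := h
      have := tang d1 d3 (xm u hu) (ym u hu) (xm u hu) (Or.inl ⟨le_rfl, hle⟩)
      have h2 : 0 ≤ N (x u) * (y u - x u) := mul_nonneg (d2 _ (xm u hu)) (by linarith)
      linarith
    · have hs0 : (1 - v0^(a/b))/κ ∈ Set.Ioo (0:ℝ) 1 := xs _ (u_mem (by positivity) hv0)
      refine ⟨N ((1 - v0^(a/b))/κ), fun u hu => tang d1 d3 (xm u hu) (ym u hu) hs0 ?_⟩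
      rcases le_total (u^b) v0 with h | h
      · left
        have h1 := H1 _ (vm u hu) h
        rw [vc u hu] at h1
        refine ⟨?_, h1⟩
        have := Real.rpow_le_rpow (vm u hu).1.le h (show 0 ≤ a/b by positivity)
        rw [vc u hu] at this
        simp only [x]
        gcongr
      · right
        have h1 := H2 _ (vm u hu) h
        rw [vc u hu] at h1
        refine ⟨h1, ?_⟩
        have := Real.rpow_le_rpow hv0.1.le h (show 0 ≤ a/b by positivity)
        rw [vc u hu] at this
        simp only [x]
        gcongr
  have e1 : ∫⁻ u in Set.Ioo (0:ℝ) 1, ENNReal.ofReal (mF (fun z => F ((Real.sqrt (1/κ) : ℝ) * z)) q (1 - u^a)) =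
      ∫⁻ u in Set.Ioo (0:ℝ) 1, ENNReal.ofReal (mF F q (min (x u) 1)) := by
    apply setLIntegral_congr_fun measurableSet_Ioo
    intro u hu
    simp only
    rw [mF_dil _ _ ρ0.le, Real.sq_sqrt (by positivity), min_eq_left (xm u hu).2.le]
    simp only [x]
    congr 2; ring
  have e2 : ∫⁻ u in Set.Ioo (0:ℝ) 1, ENNReal.ofReal (mF F q (1 - u^b)) =
      ∫⁻ u in Set.Ioo (0:ℝ) 1, ENNReal.ofReal (mF F q (min (y u) 1)) := by
    apply setLIntegral_congr_fun measurableSet_Ioo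
    intro u hu
    simp only
    rw [min_eq_left (ym u hu).2.le]
  have m0 : ∀ s, 0 ≤ mF F q s := by
    intro s
    have pp := Real.pi_pos
    exact intervalIntegral.integral_nonneg (by linarith) (fun y _ => by positivity)
  have II : ∀ {h : ℝ → ℝ}, Continuous h → IntegrableOn h (Set.Ioo 0 1) := fun hh =>
    (hh.integrableOn_Icc (a := 0) (b := 1)).mono_set Set.Ioo_subset_Icc_self
  rw [e1, e2, ← ofReal_integral_eq_lintegral_ofReal (II m1c) (Filter.Eventually.of_forall fun u => m0 _),
    ← ofReal_integral_eq_lintegral_ofReal (II m2c) (Filter.Eventually.of_forall fun u => m0 _)]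
  apply ENNReal.ofReal_le_ofReal
  obtain ⟨K, hK⟩ := key
  have z : ∫ u in Set.Ioo (0:ℝ) 1, K * (y u - x u) = 0 := by
    rw [← integral_Ioc_eq_integral_Ioo, ← intervalIntegral.integral_of_le zero_le_one, intervalIntegral.integral_const_mul]
    have i1 : ∀ {h : ℝ → ℝ}, Continuous h → IntervalIntegrable h volume 0 1 := fun hh => hh.intervalIntegrable _ _
    simp only [x, y]
    rw [intervalIntegral.integral_sub (i1 (by fun_prop)) (i1 (by fun_prop)), intervalIntegral.integral_div,
      intervalIntegral.integral_sub (i1 (by fun_prop)) (i1 (by fun_prop)), intervalIntegral.integral_sub (i1 (by fun_prop)) (i1 (by fun_prop)),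
      integral_rpow (Or.inl (by linarith)), integral_rpow (Or.inl (by linarith))]
    simp only [intervalIntegral.integral_const, Real.one_rpow, Real.zero_rpow (show a + 1 ≠ 0 by linarith), Real.zero_rpow (show b + 1 ≠ 0 by linarith)]
    have ea : a + 1 = α / (α-1) := by rw [ha]; field_simp; ring
    have eb : b + 1 = α*κ / (α*κ-1) := by rw [hb]; field_simp; ring
    rw [ea, eb]
    have α0 : α ≠ 0 := by linarith
    simp
    right
    field_simp
    ring
  have mono : ∫ u in Set.Ioo (0:ℝ) 1, K * (y u - x u) ≤ ∫ u in Set.Ioo (0:ℝ) 1, (mF F q (min (y u) 1) - mF F q (min (x u) 1)) := by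
    apply setIntegral_mono_on (II (by fun_prop)) (II (m2c.sub m1c)) measurableSet_Ioo
    intro u hu
    simp only [Pi.sub_apply]
    rw [min_eq_left (xm u hu).2.le, min_eq_left (ym u hu).2.le]
    exact hK u hu
  rw [z, integral_sub (II m2c) (II m1c)] at mono
  linarith

lemma berg_aem {G : ℂ → ℂ} {q : ℝ} (α : ℝ) (hG : ContinuousOn G (ball 0 1)) (hq : 0 ≤ q) :
    AEMeasurable (fun z => ‖G z‖^q) (bergmanMeasure α) := by
  have h : ContinuousOn (fun z => ‖G z‖^q) (ball (0:ℂ) 1) := hG.norm.rpow_const (fun _ _ => Or.inr hq)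
  exact (h.aemeasurable measurableSet_ball).mono_ac (withDensity_absolutelyContinuous _ _)

lemma berg_ae (α : ℝ) : ∀ᵐ z ∂(bergmanMeasure α), z ∈ ball (0:ℂ) 1 :=
  (withDensity_absolutelyContinuous _ _).ae_le (ae_restrict_mem measurableSet_ball)

theorem hypercontractivity_q_ge_two
    (p q α : ℝ) (hp : 0 < p) (hpq : p < q) (hq2 : 2 ≤ q) (hα : 1 < α)
    (f : ℂ → ℂ) (hf : DifferentiableOn ℂ f (ball (0 : ℂ) 1))
    (hfp : Integrable (fun z => ‖f z‖ ^ p) (bergmanMeasure α)) :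
    (∫ z, ‖f ((Real.sqrt (p / q) : ℂ) * z)‖ ^ q ∂(bergmanMeasure α)) ^ (1 / q) ≤
      (∫ z, ‖f z‖ ^ p ∂(bergmanMeasure α)) ^ (1 / p) := by
  have q0 : 0 < q := by linarith
  have hκ : 1 < q/p := by rw [lt_div_iff₀ hp]; linarith
  have er : Real.sqrt (1/(q/p)) = Real.sqrt (p/q) := by rw [one_div_div]
  have r0 : 0 < Real.sqrt (p/q) := Real.sqrt_pos.2 (by positivity)
  have r1 : Real.sqrt (p/q) ≤ 1 := by
    rw [Real.sqrt_le_iff]; exact ⟨one_pos.le, by rw [one_pow, div_le_one q0]; linarith⟩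
  set r := Real.sqrt (p/q) with hr
  set E := ∫⁻ z, ENNReal.ofReal (‖f z‖^p) ∂(bergmanMeasure α) with hE
  have step : ∀ ρ : ℝ, 0 < ρ → ρ < 1 → ∫⁻ z, ENNReal.ofReal (‖f (ρ * (r * z))‖^q) ∂(bergmanMeasure α) ≤ E^(q/p) := by
    intro ρ h0 h1
    have hR : 1 < 1/ρ := by rw [lt_div_iff₀ h0]; linarith
    have hF : DifferentiableOn ℂ (fun z => f (ρ * z)) (ball 0 (1/ρ)) := dil_diff h0 (by rw [mul_one_div_cancel h0.ne']) hf
    have s1 := part4 hR hF hq2 hα hκ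
    have s2 := berg_comp hR hF hp hα hκ.le
    have s3 := berg_dil hf hα hp.le h0 h1.le
    rw [mul_div_cancel₀ _ hp.ne'] at s2
    rw [er] at s1
    exact s1.trans (s2.trans (ENNReal.rpow_le_rpow s3 (by positivity)))
  have hfr : ContinuousOn (fun z : ℂ => f (r * z)) (ball 0 1) := (dil_diff r0 (by linarith) hf).continuousOn
  let ρ : ℕ → ℝ := fun n => 1 - 1/((n:ℝ)+2)
  have ρ0 : ∀ n, 0 < ρ n := by
    intro n
    have : 1/((n:ℝ)+2) < 1 := by rw [div_lt_one (by positivity)]; have : (0:ℝ) ≤ n := by positivity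
                                 linarith
    simp only [ρ]; linarith
  have ρ1 : ∀ n, ρ n < 1 := by
    intro n
    have : 0 < 1/((n:ℝ)+2) := by positivity
    simp only [ρ]; linarith
  have ρt : Filter.Tendsto ρ Filter.atTop (nhds 1) := by
    have h1 : Filter.Tendsto (fun n : ℕ => (n:ℝ) + 2) Filter.atTop Filter.atTop :=
      Filter.tendsto_atTop_add_const_right _ _ tendsto_natCast_atTop_atTop
    have h2 := h1.inv_tendsto_atTop.const_sub 1
    rw [sub_zero] at h2
    refine h2.congr fun n => ?_
    simp [ρ]
  have F : ∫⁻ z, ENNReal.ofReal (‖f (r * z)‖^q) ∂(bergmanMeasure α) ≤ E^(q/p) := by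
    have c1 : ∫⁻ z, ENNReal.ofReal (‖f (r * z)‖^q) ∂(bergmanMeasure α) =
        ∫⁻ z, Filter.liminf (fun n => ENNReal.ofReal (‖f (ρ n * (r * z))‖^q)) Filter.atTop ∂(bergmanMeasure α) := by
      apply lintegral_congr_ae
      filter_upwards [berg_ae α] with z hz
      refine (Filter.Tendsto.liminf_eq ?_).symm
      have hm : (r:ℂ) * z ∈ ball (0:ℂ) 1 := dil_maps r0.le (by linarith) r0 z hz
      have hc : ContinuousAt f (r * z) := hf.continuousOn.continuousAt (isOpen_ball.mem_nhds hm)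
      have t1 : Filter.Tendsto (fun n => (ρ n : ℂ) * (r * z)) Filter.atTop (nhds (r * z)) := by
        have := ((Complex.continuous_ofReal.tendsto 1).comp ρt).mul_const ((r:ℂ) * z)
        simpa using this
      exact ENNReal.tendsto_ofReal (((hc.tendsto.comp t1).norm).rpow_const (Or.inr q0.le))
    rw [c1]
    refine (lintegral_liminf_le' fun n => ?_).trans ?_
    · have : ContinuousOn (fun z : ℂ => f (ρ n * (r * z))) (ball 0 1) := by
        refine hf.continuousOn.comp (by fun_prop) ?_
        intro z hz
        exact dil_maps (ρ0 n).le (by linarith [ρ1 n]) (ρ0 n) _ (dil_maps (R := 1) r0.le (by linarith) r0 z hz)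
      exact (berg_aem α this q0.le).ennreal_ofReal
    · refine (Filter.liminf_le_liminf (Filter.Eventually.of_forall fun n => step (ρ n) (ρ0 n) (ρ1 n))).trans ?_
      simp
  have I0 : 0 ≤ ∫ z, ‖f z‖^p ∂(bergmanMeasure α) := integral_nonneg fun z => by positivity
  have hEI : E = ENNReal.ofReal (∫ z, ‖f z‖^p ∂(bergmanMeasure α)) := by
    rw [hE, ofReal_integral_eq_lintegral_ofReal hfp (Filter.Eventually.of_forall fun z => by positivity)]
  rw [hEI, ENNReal.ofReal_rpow_of_nonneg I0 (by positivity)] at F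
  have M : ∫ z, ‖f (r * z)‖^q ∂(bergmanMeasure α) ≤ (∫ z, ‖f z‖^p ∂(bergmanMeasure α))^(q/p) := by
    rw [integral_eq_lintegral_of_nonneg_ae (Filter.Eventually.of_forall fun z => by positivity) (berg_aem α hfr q0.le).aestronglyMeasurable]
    exact ENNReal.toReal_le_of_le_ofReal (by positivity) F
  calc _ ≤ ((∫ z, ‖f z‖^p ∂(bergmanMeasure α))^(q/p))^(1/q) := 
        Real.rpow_le_rpow (integral_nonneg fun z => by positivity) M (by positivity)
    _ = _ := by
      rw [← Real.rpow_mul I0]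
      congr 1
      field_simp
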